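/- Let E be a reduced minimal cone of dimension d+1 in ℝⁿ centered at the origin, and set K = E ∩ ∂B(0,1). Then K is reduced (H^d(K ∩ B(x,r)) > 0 for every x ∈ K and r ∈ (0,1)), and there is a constant C ≥ 0, depending only on n and d, such that K is a weak almost-minimal set of dimension d with gauge function h(r) = C r. -/

import Mathlib

/-!
The proof compares the cone `E` with competitors built from deformations of its spherical slice
`K = E ∩ ∂B(0,1)`. Let `κ(A)` (`kap`) be the `H^{d+1}` measure of the truncated cone over `A`.

A Lipschitz deformation `g` of the sphere which moves points by at most `2δ` is extended radially
(`radExt`): it is homogeneous in the unit ball and is interpolated with the identity over a layer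
of width `δ` outside it. This is a competitor for `E`, and minimality gives (`quasi_min`)
`κ(W) ≤ κ(g(W)) + O(δ) · ∑ (3 + Lip)^d H^d(pieces)`. With `g = f` and `δ = r` this is the desired
inequality, once two facts about `K` are available:

* `H^d(K ∩ B̄(x,r)) ≤ C₀ r^d` with `C₀` depending only on `n` and `d` (`upper_reg`), which turns the
  error into `C (1 + M^d) r · r^d`;
* `K` is rectifiable (`slice_rectifiable`). The crude comparison of `κ` with `H^d` loses a constant
  factor, which is not affordable in the term `κ(f(W))`. For rectifiable sets, however, `κ` is a
  constant multiple of `H^d` up to factors arbitrarily close to `1` (`cone_formula`), because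
  almost all of such a set consists of nearly flat pieces (`flat_decomp`).

Both facts follow from one estimate (`core`), obtained by taking for `g` a localised
Federer–Fleming projection onto the `d`-skeleton of a fine cubical grid in `ℝⁿ` in random affine
position (`federer_fleming`). Averaging over the position controls the measure near the dual
skeleton, where the Lipschitz constant blows up. If the boundary layer of a ball carries little
mass, the mass in the ball is bounded by that of the skeleton; and if, up to little mass, `K` is
purely unrectifiable there, then by the Besicovitch–Federer projection theorem
(`besicovitch_federer`, `ae_kill`) the projection is null and the ball has no mass. The
projection theorem is proved with conical densities: for almost every projection, almost every point
lies in an infinite fibre, or has an image of infinite density, or has zero conical density, and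
each alternative leads to a null image.

When `n ≤ d` the only reduced set is the empty set.
-/

open MeasureTheory Metric Set Filter Bornology
open scoped ENNReal NNReal Topology InnerProductSpace

noncomputable section

/-- `ℝⁿ` as a Euclidean space. -/
abbrev Euc (n : ℕ) : Type := EuclideanSpace ℝ (Fin n)

/-- `E` is reduced: `H^d(E ∩ B(x,r)) > 0` for every `x ∈ E` and `r > 0`. -/
def IsReducedSet (n d : ℕ) (E : Set (Euc n)) : Prop :=
  ∀ x ∈ E, ∀ r : ℝ, 0 < r → 0 < μH[(d:ℝ)] (E ∩ ball x r)

/-- A (globally) minimal set of dimension `d` in `ℝⁿ` : a closed set with locally finite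
`H^d`-measure such that `H^d(F ∖ φ(F)) ≤ H^d(φ(F) ∖ F)` for every Lipschitz map
`φ : ℝⁿ → ℝⁿ` which differs from the identity only on a bounded set. -/
def IsMinimalSet (n d : ℕ) (F : Set (Euc n)) : Prop :=
  IsClosed F ∧
  (∀ R : ℝ, 0 < R → μH[(d:ℝ)] (F ∩ ball 0 R) < ⊤) ∧
  ∀ φ : Euc n → Euc n, (∃ K : ℝ≥0, LipschitzWith K φ) →
    IsBounded {x | φ x ≠ x} →
    μH[(d:ℝ)] (F \ φ '' F) ≤ μH[(d:ℝ)] (φ '' F \ F)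

/-- A cone centered at the origin. -/
def IsConeAt0 {n : ℕ} (F : Set (Euc n)) : Prop :=
  ∀ x ∈ F, ∀ l : ℝ, 0 < l → l • x ∈ F

/-- `K ⊆ ∂B(0,1)` is a weak almost-minimal set of dimension `d` with gauge function
`h`: for every `x ∈ ∂B(0,1)`, `r ∈ (0,1)`, every Lipschitz `f : ∂B(0,1) → ∂B(0,1)`
which moves only points of `B(x,r)` and moves them inside `B̄(x,r)`, and every `M ≥ 0`
such that `K ∩ B(x,r)` has a finite partition into pieces on which `f` is
`M`-Lipschitz, one has
`H^d(K ∩ B̄(x,r)) ≤ H^d(f(K) ∩ B̄(x,r)) + (1 + M^d) h(r) r^d`. -/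
def IsWeakAlmostMinimal (n d : ℕ) (K : Set (Euc n)) (h : ℝ → ℝ≥0∞) : Prop :=
  ∀ x ∈ sphere (0 : Euc n) 1, ∀ r : ℝ, 0 < r → r < 1 →
    ∀ f : Euc n → Euc n, MapsTo f (sphere (0 : Euc n) 1) (sphere (0 : Euc n) 1) →
      (∃ Kf : ℝ≥0, LipschitzOnWith Kf f (sphere (0 : Euc n) 1)) →
      {y ∈ sphere (0 : Euc n) 1 | f y ≠ y} ⊆ ball x r →
      f '' {y ∈ sphere (0 : Euc n) 1 | f y ≠ y} ⊆ closedBall x r →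
      ∀ M : ℝ≥0,
        (∃ (N : ℕ) (S : Fin N → Set (Euc n)),
          K ∩ ball x r = ⋃ i, S i ∧
          (Set.univ : Set (Fin N)).PairwiseDisjoint S ∧
          ∀ i, LipschitzOnWith M f (S i)) →
        μH[(d:ℝ)] (K ∩ closedBall x r) ≤
          μH[(d:ℝ)] ((f '' K) ∩ closedBall x r) +
            (1 + (M : ℝ≥0∞) ^ d) * h r * ENNReal.ofReal (r ^ d)

/-! ### Covering and density lemmas in ℝ^d -/

section

/-- A Vitali (`5r`-covering) estimate: if the part of `F` projecting into each enlarged ball around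
`p a` has measure at most `c` times the volume of the original ball, and the original balls lie
in `V`, then `μ F ≤ c · vol V`. -/
lemma vitali_bound {X : Type*} [MeasurableSpace X] {d : ℕ} (μ : Measure X)
    (p : X → Fin d → ℝ) (F : Set X) (r : X → ℝ) (R : ℝ) (V : Set (Fin d → ℝ)) (c : ℝ≥0∞)
    (hr : ∀ a ∈ F, 0 < r a ∧ r a ≤ R) (hV : ∀ a ∈ F, closedBall (p a) (r a) ⊆ V)
    (hc : ∀ a ∈ F, μ (F ∩ p ⁻¹' closedBall (p a) (5 * r a)) ≤ c * ENNReal.ofReal ((2 * r a) ^ d)) :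
    μ F ≤ c * volume V := by
  obtain ⟨u, huF, hdis, hcov⟩ := Vitali.exists_disjoint_subfamily_covering_enlargement_closedBall
    F p r R (fun a ha => (hr a ha).2) 5 (by norm_num)
  have hcount : u.Countable := by
    have : (u.PairwiseDisjoint fun a => ball (p a) (r a)) :=
      hdis.mono (fun a => ball_subset_closedBall)
    exact this.countable_of_isOpen (fun _ _ => isOpen_ball)
      (fun a ha => nonempty_ball.2 (hr a (huF ha)).1)
  have hFsub : F ⊆ ⋃ b ∈ u, (F ∩ p ⁻¹' closedBall (p b) (5 * r b)) := by
    intro a ha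
    obtain ⟨b, hb, hab⟩ := hcov a ha
    exact mem_biUnion hb ⟨ha, hab (mem_closedBall_self (hr a ha).1.le)⟩
  calc μ F ≤ μ (⋃ b ∈ u, (F ∩ p ⁻¹' closedBall (p b) (5 * r b))) := measure_mono hFsub
    _ ≤ ∑' b : u, μ (F ∩ p ⁻¹' closedBall (p b) (5 * r b)) := measure_biUnion_le _ hcount _
    _ ≤ ∑' b : u, c * volume (closedBall (p b) (r b)) := by
        refine ENNReal.tsum_le_tsum fun b => ?_
        rw [Real.volume_pi_closedBall _ (hr b (huF b.2)).1.le, Fintype.card_fin]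
        exact hc b (huF b.2)
    _ = c * volume (⋃ b ∈ u, closedBall (p b) (r b)) := by
        rw [ENNReal.tsum_mul_left, measure_biUnion hcount hdis
          (fun _ _ => isClosed_closedBall.measurableSet)]
    _ ≤ c * volume V := by
        gcongr
        exact iUnion₂_subset fun b hb => hV b (huF hb)

/-- A small positive number is within a factor `2` of some `2⁻ᵏ` with `k ≥ k₀`. -/
lemma exists_dyadic {x : ℝ} (hx : 0 < x) (k₀ : ℕ) (h : 2 * x ≤ 2⁻¹ ^ k₀) :
    ∃ k ≥ k₀, x ≤ (2⁻¹ : ℝ) ^ k ∧ (2⁻¹ : ℝ) ^ k ≤ 2 * x := by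
  obtain ⟨k, hk1, hk2⟩ := exists_nat_pow_near_of_lt_one hx
    (y := 2⁻¹) (le_trans (by linarith) (h.trans (pow_le_one₀ (by norm_num) (by norm_num))))
    (by norm_num) (by norm_num)
  refine ⟨k, ?_, hk2, ?_⟩
  · by_contra hlt
    push Not at hlt
    have : (2⁻¹ : ℝ) ^ k₀ ≤ 2⁻¹ ^ (k+1) := pow_le_pow_of_le_one (by norm_num) (by norm_num) hlt
    linarith
  · rw [pow_succ] at hk1; linarith

/-- Let `t` be a Lebesgue density point of `T` and `G` disjoint from `T`. Measures carried by `G`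
whose `d`-dimensional densities at the points of `T` are bounded by `M` have small density at `t`,
uniformly. Near `t` the set `G` is covered by balls inside a set `V` of small volume, each of
which is comparable to a ball centred on `T`; then `vitali_bound` applies. -/
lemma density_aux {d : ℕ} (G T : Set (Fin d → ℝ)) (hG : MeasurableSet G) (hGT : Disjoint G T)
    (M : ℝ≥0) (k₀ : ℕ) (t : Fin d → ℝ) (htT : t ∈ T)
    (ht : Tendsto (fun r => volume (T ∩ closedBall t r) / volume (closedBall t r)) (𝓝[>] 0) (𝓝 1))
    (ε : ℝ≥0) (hε : 0 < ε) :
    ∀ᶠ s in 𝓝[>] (0:ℝ), ∀ σ : Measure (Fin d → ℝ), σ Gᶜ = 0 →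
      (∀ u ∈ T, ∀ k ≥ k₀, σ (closedBall u (2⁻¹ ^ k)) ≤ M * ENNReal.ofReal ((2⁻¹ ^ k) ^ d)) →
      σ (closedBall t s) ≤ ε * ENNReal.ofReal (s ^ d) := by
  -- choose the density threshold
  set M' : ℝ≥0 := M + 1
  obtain ⟨ε', hε', hε'2⟩ : ∃ ε' : ℝ≥0, 0 < ε' ∧ M' * 16 ^ d * (3 * ε' * 4 ^ d) ≤ ε :=
    ⟨ε / (M' * 16 ^ d * (3 * 4 ^ d)), by positivity, by
      have : M' ≠ 0 := by positivity
      apply le_of_eq; field_simp⟩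
  have hlt : (1 : ℝ≥0∞) - ε' < 1 := ENNReal.sub_lt_self (by simp) (by simp) (by simpa using hε'.ne')
  have ht2 : ∀ᶠ s in 𝓝[>] (0:ℝ), 1 - (ε':ℝ≥0∞) <
      volume (T ∩ closedBall t (2 * s)) / volume (closedBall t (2 * s)) := by
    have h2 : Tendsto (fun s : ℝ => 2 * s) (𝓝[>] 0) (𝓝[>] 0) := by
      refine tendsto_nhdsWithin_of_tendsto_nhds_of_eventually_within _ ?_ ?_
      · have : Tendsto (fun s : ℝ => 2 * s) (𝓝 0) (𝓝 (2 * 0)) := (continuous_const_mul 2).tendsto 0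
        rw [mul_zero] at this
        exact this.mono_left nhdsWithin_le_nhds
      · filter_upwards [self_mem_nhdsWithin] with s hs
        simpa using hs
    exact (ht.comp h2).eventually (lt_mem_nhds hlt)
  have hsmall : ∀ᶠ s in 𝓝[>] (0:ℝ), s < 2⁻¹ ^ k₀ / 16 := by
    apply mem_nhdsWithin_of_mem_nhds
    exact Iio_mem_nhds (by positivity)
  filter_upwards [ht2, hsmall, self_mem_nhdsWithin] with s hs1 hs2 hs0 σ hσG hσ
  have hs0 : 0 < s := hs0
  have hvol : volume (closedBall t (2 * s)) = ENNReal.ofReal ((4 * s) ^ d) := by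
    rw [Real.volume_pi_closedBall _ (by positivity), Fintype.card_fin]; ring_nf
  have hvol0 : volume (closedBall t (2 * s)) ≠ 0 := by
    rw [hvol]; simp; positivity
  have hvolt : volume (closedBall t (2 * s)) ≠ ⊤ := by rw [hvol]; simp
  -- any measurable set missing T has small measure in the ball
  have hmiss : ∀ A : Set (Fin d → ℝ), MeasurableSet A → Disjoint A T →
      volume (A ∩ closedBall t (2 * s)) ≤ ε' * volume (closedBall t (2 * s)) := by
    intro A hA hAT
    have h1 : (1 - (ε':ℝ≥0∞)) * volume (closedBall t (2 * s)) ≤ volume (T ∩ closedBall t (2*s)) := by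
      rw [ENNReal.lt_div_iff_mul_lt (Or.inl hvol0) (Or.inl hvolt)] at hs1
      exact hs1.le
    have h2 : volume (T ∩ closedBall t (2*s)) + volume (A ∩ closedBall t (2 * s)) ≤
        volume (closedBall t (2*s)) := by
      rw [← measure_inter_add_sdiff (closedBall t (2*s)) hA, add_comm, inter_comm A]
      gcongr
      intro y hy
      exact ⟨hy.2, fun h => (Set.disjoint_left.1 hAT h) hy.1⟩
    have h3 : volume (closedBall t (2*s)) ≤ (1 - (ε':ℝ≥0∞)) * volume (closedBall t (2 * s)) +
        ε' * volume (closedBall t (2 * s)) := by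
      rw [← add_mul]
      calc volume (closedBall t (2*s)) = 1 * volume (closedBall t (2*s)) := (one_mul _).symm
        _ ≤ _ := by gcongr; exact le_tsub_add
    have h4 : volume (T ∩ closedBall t (2*s)) ≠ ⊤ := measure_ne_top_of_subset inter_subset_right hvolt
    refine (ENNReal.add_le_add_iff_left h4).1 (h2.trans (h3.trans ?_))
    gcongr
  -- an open set of small volume containing `G` near `t`
  obtain ⟨U, hUG, hUo, hUv⟩ := Set.exists_isOpen_le_add (G ∩ closedBall t (2*s)) volume
    (ε := ε' * volume (closedBall t (2 * s))) (by
      simp only [ne_eq, mul_eq_zero, not_or]; exact ⟨by simpa using hε'.ne', hvol0⟩)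
  set V := U ∪ ((closure T)ᶜ ∩ closedBall t (2*s)) with hVdef
  have hVv : volume V ≤ 3 * ε' * volume (closedBall t (2 * s)) := by
    calc volume V ≤ volume U + volume ((closure T)ᶜ ∩ closedBall t (2*s)) := measure_union_le _ _
      _ ≤ (ε' * volume (closedBall t (2 * s)) + ε' * volume (closedBall t (2 * s))) +
          ε' * volume (closedBall t (2 * s)) := by
          gcongr
          · exact hUv.trans (by gcongr; exact hmiss G hG hGT)
          · exact hmiss _ isClosed_closure.measurableSet.compl
              (disjoint_compl_left_iff_subset.2 subset_closure)
      _ = _ := by ring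
  -- around each point of `G` near `t`, a ball inside `V` whose radius is comparable to the distance
  -- to a point of `T`
  have hrad : ∀ u : Fin d → ℝ, ∃ ρ : ℝ, u ∈ G ∩ closedBall t s → 0 < ρ ∧ ρ ≤ s ∧
      closedBall u ρ ⊆ V ∧ ∃ v ∈ T, dist u v < 3 * ρ := by
    intro u
    by_cases hu : u ∈ G ∩ closedBall t s
    swap
    · exact ⟨0, fun h => absurd h hu⟩
    by_cases hcl : u ∈ closure T
    · have hu2 : u ∈ U := hUG ⟨hu.1, closedBall_subset_closedBall (by linarith) hu.2⟩
      obtain ⟨ρ, hρ, hρU⟩ := Metric.isOpen_iff.1 hUo u hu2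
      obtain ⟨v, hv, huv⟩ := Metric.mem_closure_iff.1 hcl (min (ρ/2) s) (by positivity)
      refine ⟨min (ρ/2) s, fun _ => ⟨by positivity, min_le_right _ _, ?_, v, hv, ?_⟩⟩
      · refine (closedBall_subset_ball ?_).trans (hρU.trans subset_union_left)
        exact (min_le_left _ _).trans_lt (by linarith)
      · have : 0 < min (ρ/2) s := by positivity
        linarith
    · have hne : T.Nonempty := ⟨t, htT⟩
      have hpos : 0 < infDist u T := (infDist_pos_iff_notMem_closure hne).1 hcl
      have hle : infDist u T ≤ s := (infDist_le_dist_of_mem htT).trans (mem_closedBall.1 hu.2)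
      refine ⟨infDist u T / 2, fun _ => ⟨by positivity, by linarith, ?_, ?_⟩⟩
      · intro y hy
        right
        constructor
        · intro hyT
          have : infDist u T ≤ dist u y := by
            rw [← infDist_closure]; exact infDist_le_dist_of_mem hyT
          rw [mem_closedBall, dist_comm] at hy
          linarith
        · rw [mem_closedBall] at *
          have := dist_triangle y u t
          have h2 := mem_closedBall.1 hu.2
          linarith
      · exact (infDist_lt_iff hne).1 (by linarith)
  choose ρ hρ using hrad
  have key := vitali_bound σ (fun x => x) (G ∩ closedBall t s) ρ s V (M * 16 ^ d)
    (fun a ha => ⟨(hρ a ha).1, (hρ a ha).2.1⟩) (fun a ha => (hρ a ha).2.2.1) (by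
      intro a ha
      obtain ⟨h0, hs, -, v, hv, hav⟩ := hρ a ha
      obtain ⟨k, hk, hk1, hk2⟩ := exists_dyadic (x := 8 * ρ a) (by positivity) k₀ (by linarith)
      calc σ _ ≤ σ (closedBall v (2⁻¹ ^ k)) := by
            apply measure_mono
            rintro y ⟨-, hy⟩
            simp only [mem_preimage, mem_closedBall] at hy ⊢
            have := dist_triangle y a v
            linarith
        _ ≤ _ := hσ v hv k hk
        _ ≤ M * ENNReal.ofReal ((8 * (2 * ρ a)) ^ d) := by
            gcongr; linarith
        _ ≤ M * (16 ^ d * ENNReal.ofReal ((2 * ρ a) ^ d)) := by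
            gcongr
            rw [mul_pow, ENNReal.ofReal_mul (by positivity), ENNReal.ofReal_pow (by norm_num)]
            gcongr
            norm_num
        _ = _ := by ring)
  have hσ1 : σ (closedBall t s) ≤ σ (G ∩ closedBall t s) := by
    calc σ (closedBall t s) ≤ σ ((G ∩ closedBall t s) ∪ Gᶜ) := by
          apply measure_mono; intro y hy
          by_cases h : y ∈ G
          · exact Or.inl ⟨h, hy⟩
          · exact Or.inr h
      _ ≤ _ := (measure_union_le _ _).trans (by rw [hσG, add_zero])
  calc σ (closedBall t s) ≤ _ := hσ1.trans key
    _ ≤ (M' : ℝ≥0∞) * 16 ^ d * (3 * ε' * volume (closedBall t (2 * s))) := by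
        gcongr
        simp [M']
    _ = ((M' * 16 ^ d * (3 * ε' * 4 ^ d) : ℝ≥0) : ℝ≥0∞) * ENNReal.ofReal (s ^ d) := by
        rw [hvol, mul_pow, ENNReal.ofReal_mul (by positivity), ENNReal.ofReal_pow (by norm_num)]
        push_cast
        rw [show ENNReal.ofReal 4 = 4 by norm_num]
        ring
    _ ≤ ε * ENNReal.ofReal (s ^ d) := by
        gcongr

/-- For a sequence of measures carried by `G`, almost every point `t` lies in `G`, or has infinite
upper density along the sequence, or has zero density uniformly along the sequence. -/
lemma density_trichotomy {d : ℕ} (σ : ℕ → Measure (Fin d → ℝ)) (G : Set (Fin d → ℝ))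
    (hG : MeasurableSet G) (hσ : ∀ l, σ l Gᶜ = 0) :
    ∀ᵐ t : Fin d → ℝ, t ∈ G ∨
      (∀ M : ℕ, ∀ k₀ : ℕ, ∃ k ≥ k₀, ∃ l,
        M * ENNReal.ofReal ((2⁻¹ ^ k) ^ d) < σ l (closedBall t (2⁻¹ ^ k))) ∨
      (∀ m : ℕ, ∃ k₀, ∀ k ≥ k₀, ∀ l,
        σ l (closedBall t (2⁻¹ ^ k)) ≤ ((m:ℝ≥0∞) + 1)⁻¹ * ENNReal.ofReal ((2⁻¹ ^ k) ^ d)) := by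
  set T : ℕ → ℕ → Set (Fin d → ℝ) := fun M k₀ => {t | t ∉ G ∧ ∀ k ≥ k₀, ∀ l,
    σ l (closedBall t (2⁻¹ ^ k)) ≤ M * ENNReal.ofReal ((2⁻¹ ^ k) ^ d)} with hT
  have hd : ∀ᵐ t : Fin d → ℝ, ∀ M k₀, t ∈ T M k₀ → Tendsto (fun r => volume (T M k₀ ∩ closedBall t r)
      / volume (closedBall t r)) (𝓝[>] 0) (𝓝 1) := by
    rw [ae_all_iff]; intro M
    rw [ae_all_iff]; intro k₀
    have := Besicovitch.ae_tendsto_measure_inter_div (volume : Measure (Fin d → ℝ)) (T M k₀)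
    exact ae_imp_of_ae_restrict this
  filter_upwards [hd] with t ht
  by_cases htG : t ∈ G
  · exact Or.inl htG
  right
  by_cases hinf : ∀ M : ℕ, ∀ k₀ : ℕ, ∃ k ≥ k₀, ∃ l,
        M * ENNReal.ofReal ((2⁻¹ ^ k) ^ d) < σ l (closedBall t (2⁻¹ ^ k))
  · exact Or.inl hinf
  right
  push Not at hinf
  obtain ⟨M, k₀, h⟩ := hinf
  have htT : t ∈ T M k₀ := ⟨htG, fun k hk l => h k hk l⟩
  intro m
  have := density_aux G (T M k₀) hG (by
    rw [Set.disjoint_left]; intro a ha hb; exact hb.1 ha) M k₀ t htT (ht M k₀ htT)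
    ((m+1)⁻¹) (by positivity)
  have htend : Tendsto (fun k : ℕ => (2⁻¹ : ℝ) ^ k) atTop (𝓝[>] 0) := by
    refine tendsto_nhdsWithin_of_tendsto_nhds_of_eventually_within _
      (tendsto_pow_atTop_nhds_zero_of_lt_one (by norm_num) (by norm_num)) ?_
    exact Eventually.of_forall fun k => by simp
  obtain ⟨k₁, hk₁⟩ := eventually_atTop.1 (htend.eventually this)
  refine ⟨k₁, fun k hk l => ?_⟩
  have := hk₁ k hk (σ l) (hσ l) (fun u hu k' hk' => hu.2 k' hk' l)
  refine this.trans ?_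
  gcongr
  rw [ENNReal.coe_inv (by positivity)]
  push_cast
  rfl

end

/-! ### Purely unrectifiable sets and linear projections -/

section

/-- Pure `d`-unrectifiability: every subset of `S` that is bi-Lipschitz equivalent to a subset of
`ℝ^d` is `H^d`-null. -/
def PU (d : ℕ) {X : Type*} [MetricSpace X] [MeasurableSpace X] [BorelSpace X] (S : Set X) : Prop :=
  ∀ F ⊆ S, (∃ p : X → Fin d → ℝ, (∃ K : ℝ≥0, LipschitzOnWith K p F) ∧
    ∃ c : ℝ≥0, ∀ x ∈ F, ∀ y ∈ F, dist x y ≤ c * dist (p x) (p y)) → μH[(d:ℝ)] F = 0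

variable {d : ℕ} {ι : Type*} [Fintype ι]

/-- The linear map `ℝ^ι → ℝ^d` with matrix `B`. -/
def pB (B : Fin d → ι → ℝ) (x : ι → ℝ) : Fin d → ℝ := fun j => ∑ i, B j i * x i

lemma pB_cont : Continuous (fun z : (Fin d → ι → ℝ) × (ι → ℝ) => pB z.1 z.2) := by
  unfold pB; fun_prop

lemma pB_cont_left (x : ι → ℝ) : Continuous (fun B : Fin d → ι → ℝ => pB B x) := by
  unfold pB; fun_prop

lemma pB_cont_right (B : Fin d → ι → ℝ) : Continuous (pB B) := by
  unfold pB; fun_prop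

lemma pB_sub (B : Fin d → ι → ℝ) (x y : ι → ℝ) : pB B (x - y) = pB B x - pB B y := by
  ext j; simp [pB, mul_sub, Finset.sum_sub_distrib]

lemma pB_lip (B : Fin d → ι → ℝ) : ∃ K : ℝ≥0, LipschitzWith K (pB B) := by
  let L : (ι → ℝ) →ₗ[ℝ] (Fin d → ℝ) :=
    { toFun := pB B
      map_add' := fun x y => by ext j; simp [pB, mul_add, Finset.sum_add_distrib]
      map_smul' := fun c x => by ext j; simp [pB, Finset.mul_sum, mul_left_comm] }
  exact ⟨_, (LinearMap.toContinuousLinearMap L).lipschitz⟩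

lemma vol_pi_eq : (volume : Measure (Fin d → ℝ)) = μH[(d:ℝ)] := by
  have := hausdorffMeasure_pi_real (ι := Fin d)
  rw [Fintype.card_fin] at this
  exact this.symm

lemma vol_image_le {X : Type*} [MetricSpace X] [MeasurableSpace X] [BorelSpace X]
    {K : ℝ≥0} {p : X → Fin d → ℝ} {A : Set X} (hp : LipschitzOnWith K p A) :
    volume (p '' A) ≤ (K : ℝ≥0∞) ^ d * μH[(d:ℝ)] A := by
  rw [vol_pi_eq]
  have := hp.hausdorffMeasure_image_le (d := (d:ℝ)) (by positivity)
  simpa using this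

/-- For a compact `S` of finite `H^d` measure, almost every fibre in `S` of a Lipschitz map to `ℝ^d`
is finite. -/
lemma vol_infinite_fibres {X : Type*} [MetricSpace X] [MeasurableSpace X] [BorelSpace X]
    {K : ℝ≥0} {p : X → Fin d → ℝ} (hp : LipschitzWith K p) (S : Set X) (hS : IsCompact S)
    (hfin : μH[(d:ℝ)] S < ⊤) : volume {y | (S ∩ p ⁻¹' {y}).Infinite} = 0 := by
  -- finite Borel partitions of mesh 2^{-q}
  have hpart : ∀ q : ℕ, ∃ (N : ℕ) (P : Fin N → Set X), (∀ i, MeasurableSet (P i)) ∧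
      Pairwise (fun i j => Disjoint (P i) (P j)) ∧ S ⊆ ⋃ i, P i ∧
      ∀ i, ∀ x ∈ P i, ∀ y ∈ P i, dist x y < 2⁻¹ ^ q := by
    intro q
    obtain ⟨t, -, htf, hcov⟩ := hS.finite_cover_balls (e := (2⁻¹ : ℝ) ^ q / 2) (by positivity)
    obtain ⟨N, f, hf⟩ := htf.fin_param
    refine ⟨N, disjointed (fun i : Fin N => ball (f i) ((2⁻¹ : ℝ) ^ q / 2)), ?_, ?_, ?_, ?_⟩
    · intro i
      exact disjointedRec (p := fun s => MeasurableSet s) (fun _ _ ht => ht.diff measurableSet_ball)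
        measurableSet_ball
    · exact disjoint_disjointed _
    · rw [iUnion_disjointed]
      intro x hx
      obtain ⟨y, hy, hxy⟩ := mem_iUnion₂.1 (hcov hx)
      rw [← hf.2] at hy
      obtain ⟨i, rfl⟩ := hy
      exact mem_iUnion.2 ⟨i, hxy⟩
    · intro i x hx y hy
      have h1 := disjointed_subset _ i hx
      have h2 := disjointed_subset _ i hy
      simp only [mem_ball] at h1 h2
      have := dist_triangle_right x y (f i)
      linarith
  choose N P hPm hPd hPc hPs using hpart
  set f : ℕ → (Fin d → ℝ) → ℝ≥0∞ := fun q y =>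
    ∑ i, (toMeasurable volume (p '' (S ∩ P q i))).indicator 1 y with hf
  have hfm : ∀ q, Measurable (f q) := fun q =>
    Finset.measurable_sum _ fun i _ => measurable_one.indicator (measurableSet_toMeasurable _ _)
  have hlint : ∀ q, ∫⁻ y, f q y ≤ (K : ℝ≥0∞) ^ d * μH[(d:ℝ)] S := by
    intro q
    simp only [hf]
    rw [lintegral_finsetSum _ (fun i _ => measurable_one.indicator (measurableSet_toMeasurable _ _))]
    calc _ = ∑ i, volume (p '' (S ∩ P q i)) := by
          refine Finset.sum_congr rfl fun i _ => ?_
          rw [lintegral_indicator_one (measurableSet_toMeasurable _ _), measure_toMeasurable]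
      _ ≤ ∑ i, (K : ℝ≥0∞) ^ d * μH[(d:ℝ)] (S ∩ P q i) :=
          Finset.sum_le_sum fun i _ => vol_image_le hp.lipschitzOnWith
      _ = (K : ℝ≥0∞) ^ d * ∑ i, μH[(d:ℝ)] (S ∩ P q i) := by rw [Finset.mul_sum]
      _ ≤ _ := by
          gcongr
          rw [← tsum_fintype (L := .unconditional _), ← measure_iUnion]
          · exact measure_mono (iUnion_subset fun i => inter_subset_left)
          · exact fun i j hij => (hPd q hij).mono inter_subset_right inter_subset_right
          · exact fun i => hS.isClosed.measurableSet.inter (hPm q i)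
  have hfat : ∫⁻ y, liminf (fun q => f q y) atTop ≤ (K : ℝ≥0∞) ^ d * μH[(d:ℝ)] S :=
    (lintegral_liminf_le hfm).trans (by
      refine (liminf_le_liminf (Eventually.of_forall hlint)).trans ?_
      simp)
  have hae := ae_lt_top (μ := volume) (.liminf hfm) (hfat.trans_lt
    (ENNReal.mul_lt_top (by simp) hfin)).ne
  refine measure_mono_null ?_ hae
  intro y hy
  simp only [mem_compl_iff, mem_ofPred_eq, not_lt, top_le_iff]
  refine ENNReal.eq_top_of_forall_nnreal_le fun r => ?_
  obtain ⟨m, hm⟩ := exists_nat_ge r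
  refine le_trans (b := (m:ℝ≥0∞)) (by exact_mod_cast hm) ?_
  refine le_liminf_of_le (by isBoundedDefault) ?_
  obtain ⟨A, hA, hAc⟩ := Set.Infinite.exists_subset_card_eq hy m
  -- finitely many points of a fibre are separated at every sufficiently fine scale
  have hsep : ∀ᶠ q : ℕ in atTop, ∀ x ∈ A, ∀ x' ∈ A, x ≠ x' → (2⁻¹:ℝ) ^ q ≤ dist x x' := by
    rw [eventually_all_finset]; intro x hx
    rw [eventually_all_finset]; intro x' hx'
    by_cases hne : x = x'
    · exact Eventually.of_forall fun q h => absurd hne h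
    · have := (tendsto_pow_atTop_nhds_zero_of_lt_one (r := (2⁻¹:ℝ)) (by norm_num) (by norm_num)).eventually
        (ge_mem_nhds (dist_pos.2 hne))
      exact this.mono fun q hq _ => hq
  filter_upwards [hsep] with q hq
  have hsel : ∀ x ∈ A, ∃ i, x ∈ P q i := fun x hx => mem_iUnion.1 (hPc q (hA hx).1)
  have hne : Nonempty (X → Fin (N q)) ∨ A = ∅ := by
    by_cases h : Nonempty (Fin (N q))
    · exact Or.inl ⟨fun _ => h.some⟩
    · right
      refine Finset.eq_empty_of_forall_notMem fun x hx => h ⟨(hsel x hx).choose⟩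
  rcases hne with hne | hne
  swap
  · rw [← hAc, hne]; simp
  have hsel' : ∀ x, ∃ i, x ∈ A → x ∈ P q i := fun x => by
    by_cases hx : x ∈ A
    · obtain ⟨i, hi⟩ := hsel x hx
      exact ⟨i, fun _ => hi⟩
    · exact ⟨hne.some x, fun h => absurd h hx⟩
  choose g hg using hsel'
  have hinj : Set.InjOn g A := by
    intro x hx x' hx' hxx
    by_contra hne
    have h1 := hg x hx
    rw [hxx] at h1
    exact absurd (hPs q _ x h1 x' (hg x' hx')) (not_lt.2 (hq x hx x' hx' hne))
  calc (m : ℝ≥0∞) = ∑ i ∈ A.image g, (1:ℝ≥0∞) := by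
        rw [Finset.sum_const, Finset.card_image_of_injOn hinj, hAc]; simp
    _ ≤ ∑ i ∈ A.image g, (toMeasurable volume (p '' (S ∩ P q i))).indicator 1 y := by
        refine Finset.sum_le_sum fun i hi => ?_
        obtain ⟨x, hx, rfl⟩ := Finset.mem_image.1 hi
        rw [indicator_of_mem]
        · simp
        · exact subset_toMeasurable _ _ ⟨x, ⟨(hA hx).1, hg x hx⟩, (hA hx).2⟩
    _ ≤ _ := Finset.sum_le_sum_of_subset (Finset.subset_univ _)

/-- The push-forward of a finite measure to `ℝ^d` has finite upper `d`-density, along dyadic radii,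
at almost every point. -/
lemma vol_infinite_density {X : Type*} [MeasurableSpace X] (μ : Measure X) [IsFiniteMeasure μ]
    (p : X → Fin d → ℝ) (hp : Measurable p) :
    volume {y | ∀ M k₀ : ℕ, ∃ k ≥ k₀, M * ENNReal.ofReal ((2⁻¹ ^ k) ^ d) <
      μ (p ⁻¹' closedBall y (2⁻¹ ^ k))} = 0 := by
  have h1 := Besicovitch.ae_tendsto_rnDeriv (μ.map p) (volume : Measure (Fin d → ℝ))
  have h2 := Measure.rnDeriv_lt_top (μ.map p) (volume : Measure (Fin d → ℝ))
  have : ∀ᵐ y : Fin d → ℝ, ¬ (∀ M k₀ : ℕ, ∃ k ≥ k₀, M * ENNReal.ofReal ((2⁻¹ ^ k) ^ d) <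
      μ (p ⁻¹' closedBall y (2⁻¹ ^ k))) := by
    filter_upwards [h1, h2] with y hy1 hy2 hy3
    obtain ⟨c, hc1, hc2⟩ := exists_between hy2
    have htend : Tendsto (fun k : ℕ => (2⁻¹ : ℝ) ^ k) atTop (𝓝[>] 0) := by
      refine tendsto_nhdsWithin_of_tendsto_nhds_of_eventually_within _
        (tendsto_pow_atTop_nhds_zero_of_lt_one (by norm_num) (by norm_num)) ?_
      exact Eventually.of_forall fun k => by simp
    obtain ⟨k₀, hk₀⟩ := eventually_atTop.1 ((hy1.comp htend).eventually (gt_mem_nhds hc1))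
    obtain ⟨M, hM⟩ := ENNReal.exists_nat_gt hc2.ne
    obtain ⟨k, hk, hk2⟩ := hy3 (M * 2 ^ d) k₀
    have h3 := hk₀ k hk
    simp only [Function.comp_apply] at h3
    rw [Measure.map_apply hp measurableSet_closedBall,
      Real.volume_pi_closedBall _ (by positivity), Fintype.card_fin] at h3
    rw [ENNReal.div_lt_iff (Or.inl (by simp only [ne_eq, ENNReal.ofReal_eq_zero, not_le]; positivity)) (Or.inl ENNReal.ofReal_ne_top)] at h3
    refine absurd (hk2.trans h3) (not_lt.2 ?_)
    rw [mul_pow, ENNReal.ofReal_mul (by positivity), ENNReal.ofReal_pow (by norm_num),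
      ← mul_assoc]
    push_cast
    rw [show ENNReal.ofReal 2 = 2 by norm_num]
    gcongr
  simpa [ae_iff] using this

end

/-! ### Points of zero conical density -/

section

variable {d : ℕ} {ι : Type*} [Fintype ι]

/-- The points `x ≠ a` of `S` at distance less than `2⁻ˡ` from `a`, in the cone of aperture `2⁻ᵏ`
around the kernel of `pB B`, and in the sector where the `i`-th coordinate of `x - a` is dominant
(distances are sup distances). -/
def coneSet (S : Set (ι → ℝ)) (B : Fin d → ι → ℝ) (a : ι → ℝ) (i : ι) (l k : ℕ) : Set (ι → ℝ) :=
  {x | x ∈ S ∧ dist x a < 2⁻¹ ^ l ∧ x ≠ a ∧ |x i - a i| = dist x a ∧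
    dist (pB B x) (pB B a) ≤ 2⁻¹ ^ k * dist x a}

lemma exists_coord_eq_dist {x a : ι → ℝ} (h : x ≠ a) : ∃ i, |x i - a i| = dist x a := by
  have : Nonempty ι := by
    by_contra hι
    rw [not_nonempty_iff] at hι
    exact h (Subsingleton.elim _ _)
  obtain ⟨i, hi⟩ := Finite.exists_max (fun i => dist (x i) (a i))
  refine ⟨i, le_antisymm (by rw [← Real.dist_eq]; exact dist_le_pi_dist x a i) ?_⟩
  rw [← Real.dist_eq]
  exact (dist_pi_le_iff dist_nonneg).2 hi

/-- A purely unrectifiable set of small diameter with small conical densities is small. The points of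
`F` whose cone contains no other point of `F` form a set on which `pB B` is bi-Lipschitz, hence a
null set. For any other point `a`, take a nearly farthest point `b` of `F` in its cone: the points
of `F` projecting near `pB B a` lie in the cones at `a` and `b`, and `vitali_bound` applies. -/
lemma measure_zero_piece (hd : 0 < d) (S : Set (ι → ℝ)) (hPU : PU d S) (B : Fin d → ι → ℝ)
    (R : ℝ) (hR : ∀ x ∈ S, dist (pB B x) 0 ≤ R) (F : Set (ι → ℝ)) (hF : F ⊆ S) (q k₀ : ℕ)
    (lam : ℝ≥0∞)
    (hdiam : ∀ x ∈ F, ∀ y ∈ F, dist x y < 2⁻¹ ^ (q + 2))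
    (hlam : ∀ a ∈ F, ∀ i, ∀ k ≥ k₀, ∀ l ≥ q, μH[(d:ℝ)] (coneSet S B a i l k) ≤
      lam * ENNReal.ofReal ((2⁻¹ ^ k) ^ d) * ENNReal.ofReal ((2⁻¹ ^ l) ^ d)) :
    μH[(d:ℝ)] F ≤ lam * (2 * Fintype.card ι * 120 ^ d) *
      volume (closedBall (0 : Fin d → ℝ) (R + 1)) := by
  classical
  have hsing := Measure.nullSingletonClass_hausdorff (ι → ℝ) (d := (d:ℝ)) (by exact_mod_cast hd)
  set s : ℝ := 2⁻¹ ^ (k₀ + 2) with hs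
  have hs0 : 0 < s := by positivity
  have hs1 : s ≤ 1 := pow_le_one₀ (by norm_num) (by norm_num)
  have hs4 : (2⁻¹ : ℝ) ^ k₀ = 4 * s := by rw [hs, pow_add]; ring
  have hq0 : (0:ℝ) < 2⁻¹ ^ q := by positivity
  have hq4 : (2⁻¹ : ℝ) ^ q = 4 * 2⁻¹ ^ (q+2) := by rw [pow_add]; ring
  have hq1 : (2⁻¹ : ℝ) ^ q ≤ 1 := pow_le_one₀ (by norm_num) (by norm_num)
  set N : Set (ι → ℝ) := {a | a ∈ F ∧ ∀ b ∈ F, dist (pB B b) (pB B a) ≤ s * dist b a → b = a}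
  have hN : μH[(d:ℝ)] N = 0 := by
    refine hPU N (fun a ha => hF ha.1) ⟨pB B, ?_, ⟨Real.toNNReal s⁻¹, ?_⟩⟩
    · obtain ⟨K, hK⟩ := pB_lip B
      exact ⟨K, hK.lipschitzOnWith⟩
    · intro x hx y hy
      by_cases hxy : x = y
      · simp [hxy]
      have : ¬ dist (pB B x) (pB B y) ≤ s * dist x y := fun h => hxy (hy.2 x hx.1 h)
      push Not at this
      rw [Real.coe_toNNReal _ (by positivity)]
      rw [inv_mul_eq_div, le_div_iff₀ hs0]
      linarith
  -- nearly farthest cone neighbour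
  have hfar : ∀ a, ∃ b, a ∈ F \ N → b ∈ F ∧ 0 < dist b a ∧ dist (pB B b) (pB B a) ≤ s * dist b a ∧
      ∀ x ∈ F, dist (pB B x) (pB B a) ≤ s * dist x a → dist x a ≤ 4/3 * dist b a := by
    intro a
    by_cases ha : a ∈ F \ N
    swap
    · exact ⟨a, fun h => absurd h ha⟩
    set D : Set ℝ := (fun b => dist b a) '' {b | b ∈ F ∧ dist (pB B b) (pB B a) ≤ s * dist b a}
    have hD : BddAbove D := by
      refine ⟨2⁻¹ ^ (q+2), ?_⟩
      rintro _ ⟨b, hb, rfl⟩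
      exact (hdiam b hb.1 a ha.1).le
    obtain ⟨b₀, hb₀, hb₀a, hne⟩ : ∃ b ∈ F, dist (pB B b) (pB B a) ≤ s * dist b a ∧ b ≠ a := by
      by_contra hcon
      push Not at hcon
      exact ha.2 ⟨ha.1, hcon⟩
    have hpos : 0 < sSup D := lt_of_lt_of_le (dist_pos.2 hne) (le_csSup hD ⟨b₀, ⟨hb₀, hb₀a⟩, rfl⟩)
    obtain ⟨_, ⟨b, hb, rfl⟩, hlt⟩ := exists_lt_of_lt_csSup
      (s := D) ⟨dist b₀ a, ⟨b₀, ⟨hb₀, hb₀a⟩, rfl⟩⟩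
      (show 3/4 * sSup D < sSup D by linarith)
    refine ⟨b, fun _ => ⟨hb.1, by simp only at hlt; linarith, hb.2, fun x hx hxa => ?_⟩⟩
    have := le_csSup hD ⟨x, ⟨hx, hxa⟩, rfl⟩
    simp only at this hlt
    linarith
  choose b hb using hfar
  have hmain : μH[(d:ℝ)] (F \ N) ≤ lam * (2 * Fintype.card ι * 120 ^ d) *
      volume (closedBall (0 : Fin d → ℝ) (R + 1)) := by
    refine vitali_bound μH[(d:ℝ)] (pB B) (F \ N) (fun a => s * dist (b a) a / 15) 1 _ _ ?_ ?_ ?_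
    · intro a ha
      obtain ⟨hbF, hD, hcone, hmax⟩ := hb a ha
      have := hdiam _ hbF a ha.1
      refine ⟨by positivity, ?_⟩
      have : s * dist (b a) a ≤ 1 * 1 := by gcongr; linarith
      linarith
    · intro a ha
      obtain ⟨hbF, hD, hcone, hmax⟩ := hb a ha
      have := hdiam _ hbF a ha.1
      have : s * dist (b a) a ≤ 1 * 1 := by gcongr; linarith
      refine closedBall_subset_closedBall' ?_
      have := hR a (hF ha.1)
      linarith
    · intro a ha
      obtain ⟨hbF, hD, hcone, hmax⟩ := hb a ha
      have hdD := hdiam _ hbF a ha.1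
      set D := dist (b a) a with hDdef
      obtain ⟨l, hl, hl1, hl2⟩ := exists_dyadic (x := 2 * D) (by positivity) q (by linarith)
      have hsub : (F \ N) ∩ pB B ⁻¹' closedBall (pB B a) (5 * (s * D / 15)) ⊆
          {a} ∪ ((⋃ i, coneSet S B a i l (k₀ + 2)) ∪ ⋃ i, coneSet S B (b a) i l k₀) := by
        rintro x ⟨⟨hxF, -⟩, hx⟩
        rw [mem_preimage, mem_closedBall] at hx
        by_cases hxa : x = a
        · exact Or.inl hxa
        right
        by_cases hcx : dist (pB B x) (pB B a) ≤ s * dist x a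
        · left
          have h1 := hmax x hxF hcx
          obtain ⟨i, hi⟩ := exists_coord_eq_dist hxa
          exact mem_iUnion.2 ⟨i, hF hxF, by linarith, hxa, hi, hcx⟩
        · right
          push Not at hcx
          have h1 : dist x a < D / 3 := by
            have : s * dist x a < s * (D / 3) := by linarith
            exact lt_of_mul_lt_mul_left this hs0.le
          have h2 := dist_triangle (b a) x a
          have h3 := dist_triangle x a (b a)
          rw [dist_comm (b a) x] at h2
          rw [dist_comm a (b a)] at h3
          have hxb : x ≠ b a := by
            rw [← dist_pos]; linarith
          obtain ⟨i, hi⟩ := exists_coord_eq_dist hxb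
          refine mem_iUnion.2 ⟨i, hF hxF, by linarith, hxb, hi, ?_⟩
          rw [hs4]
          have h4 := dist_triangle (pB B x) (pB B a) (pB B (b a))
          rw [dist_comm (pB B a)] at h4
          have h5 : s * (2 * D / 3) ≤ s * dist x (b a) := by gcongr; linarith
          nlinarith
      have hb1 : ∀ i, μH[(d:ℝ)] (coneSet S B a i l (k₀ + 2)) ≤
          lam * ENNReal.ofReal ((4 * s) ^ d) * ENNReal.ofReal ((4 * D) ^ d) := by
        intro i
        refine (hlam a ha.1 i (k₀+2) (by omega) l hl).trans ?_
        gcongr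
        · linarith
        · linarith
      have hb2 : ∀ i, μH[(d:ℝ)] (coneSet S B (b a) i l k₀) ≤
          lam * ENNReal.ofReal ((4 * s) ^ d) * ENNReal.ofReal ((4 * D) ^ d) := by
        intro i
        refine (hlam (b a) hbF i k₀ le_rfl l hl).trans ?_
        gcongr
        · linarith
        · linarith
      calc μH[(d:ℝ)] _ ≤ _ := measure_mono hsub
        _ ≤ μH[(d:ℝ)] {a} + (∑ i : ι, lam * ENNReal.ofReal ((4 * s) ^ d) * ENNReal.ofReal ((4 * D) ^ d)
            + ∑ i : ι, lam * ENNReal.ofReal ((4 * s) ^ d) * ENNReal.ofReal ((4 * D) ^ d)) := by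
            refine (measure_union_le _ _).trans ?_
            gcongr
            refine (measure_union_le _ _).trans ?_
            gcongr
            · exact (measure_iUnion_fintype_le _ _).trans (Finset.sum_le_sum fun i _ => hb1 i)
            · exact (measure_iUnion_fintype_le _ _).trans (Finset.sum_le_sum fun i _ => hb2 i)
        _ = lam * (2 * Fintype.card ι) * (ENNReal.ofReal ((4 * s) ^ d) * ENNReal.ofReal ((4 * D) ^ d)) := by
            rw [measure_singleton, zero_add, Finset.sum_const, Finset.card_univ, nsmul_eq_mul]
            ring
        _ = lam * (2 * Fintype.card ι) * ENNReal.ofReal ((120 * (2 * (s * D / 15))) ^ d) := by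
            rw [← ENNReal.ofReal_mul (by positivity), ← mul_pow]
            congr 3; ring
        _ = _ := by
            rw [mul_pow, ENNReal.ofReal_mul (by positivity), ENNReal.ofReal_pow (by norm_num)]
            rw [show ENNReal.ofReal 120 = 120 by norm_num]
            ring
  calc μH[(d:ℝ)] F ≤ μH[(d:ℝ)] (N ∪ (F \ N)) := measure_mono (by
        intro x hx
        by_cases h : x ∈ N
        · exact Or.inl h
        · exact Or.inr ⟨hx, h⟩)
    _ ≤ μH[(d:ℝ)] N + μH[(d:ℝ)] (F \ N) := measure_union_le _ _
    _ ≤ _ := by rw [hN, zero_add]; exact hmain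

lemma coneSet_anti_l (S : Set (ι → ℝ)) (B : Fin d → ι → ℝ) (a : ι → ℝ) (i : ι) {l l' k : ℕ}
    (h : l ≤ l') : coneSet S B a i l' k ⊆ coneSet S B a i l k := by
  rintro x ⟨h1, h2, h3⟩
  exact ⟨h1, h2.trans_le (pow_le_pow_of_le_one (by norm_num) (by norm_num) h), h3⟩

/-- The conical measures of `S` at `a`, in the sector `i`, are `o(2^{-kd}) 2^{-ld}` as `k → ∞`,
uniformly in the scales `l ≥ q` for some `q`. -/
def ZeroDens (S : Set (ι → ℝ)) (B : Fin d → ι → ℝ) (a : ι → ℝ) (i : ι) : Prop :=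
  ∃ q : ℕ, ∀ m : ℕ, ∃ k₀ : ℕ, ∀ k ≥ k₀, ∀ l ≥ q, μH[(d:ℝ)] (coneSet S B a i l k) ≤
      ((m:ℝ≥0∞) + 1)⁻¹ * ENNReal.ofReal ((2⁻¹ ^ k) ^ d) * ENNReal.ofReal ((2⁻¹ ^ l) ^ d)

/-- In a purely unrectifiable compact set, the points with zero conical density in every coordinate
sector form a null set. -/
lemma measure_zeroDens (hd : 0 < d) (S : Set (ι → ℝ)) (hS : IsCompact S) (hPU : PU d S)
    (B : Fin d → ι → ℝ) : μH[(d:ℝ)] {a | a ∈ S ∧ ∀ i, ZeroDens S B a i} = 0 := by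
  classical
  obtain ⟨R, hR⟩ : ∃ R : ℝ, ∀ x ∈ S, dist (pB B x) 0 ≤ R := by
    obtain ⟨R, hR⟩ := (hS.image (pB_cont_right B)).isBounded.subset_closedBall 0
    exact ⟨R, fun x hx => hR ⟨x, hx, rfl⟩⟩
  set F : ℕ → ℕ → ℕ → Set (ι → ℝ) := fun q m k₀ => {a | a ∈ S ∧ ∀ i, ∀ k ≥ k₀, ∀ l ≥ q,
    μH[(d:ℝ)] (coneSet S B a i l k) ≤
      ((m:ℝ≥0∞) + 1)⁻¹ * ENNReal.ofReal ((2⁻¹ ^ k) ^ d) * ENNReal.ofReal ((2⁻¹ ^ l) ^ d)} with hF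
  have hmono : ∀ q m, Monotone (F q m) := fun q m k k' hkk a ha =>
    ⟨ha.1, fun i k'' hk l hl => ha.2 i k'' (hkk.trans hk) l hl⟩
  have hsub : {a | a ∈ S ∧ ∀ i, ZeroDens S B a i} ⊆ ⋃ q, ⋂ m, ⋃ k₀, F q m k₀ := by
    rintro a ⟨haS, ha⟩
    choose q hq using ha
    choose k₀ hk₀ using hq
    refine mem_iUnion.2 ⟨Finset.univ.sup q, mem_iInter.2 fun m => mem_iUnion.2
      ⟨Finset.univ.sup fun i => k₀ i m, haS, fun i k hk l hl => hk₀ i m k ?_ l ?_⟩⟩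
    · exact (Finset.le_sup (f := fun i => k₀ i m) (Finset.mem_univ i)).trans hk
    · exact (Finset.le_sup (f := q) (Finset.mem_univ i)).trans hl
  refine measure_mono_null hsub (measure_iUnion_null fun q => ?_)
  -- cover S by finitely many small balls
  obtain ⟨t, -, htf, hcov⟩ := hS.finite_cover_balls (e := (2⁻¹ : ℝ) ^ (q+2) / 2) (by positivity)
  have hpiece : ∀ c ∈ t, μH[(d:ℝ)] ((⋂ m, ⋃ k₀, F q m k₀) ∩ ball c ((2⁻¹ : ℝ) ^ (q+2) / 2)) = 0 := by
    intro c hc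
    set Q : ℝ≥0∞ := (2 * Fintype.card ι * 120 ^ d) * volume (closedBall (0 : Fin d → ℝ) (R + 1))
    have hQ : Q ≠ ⊤ := ENNReal.mul_ne_top (ENNReal.mul_ne_top (ENNReal.mul_ne_top (by simp) (by simp)) (by simp)) (isCompact_closedBall _ _).measure_lt_top.ne
    have hle : ∀ m : ℕ, μH[(d:ℝ)] ((⋂ m, ⋃ k₀, F q m k₀) ∩ ball c ((2⁻¹ : ℝ) ^ (q+2) / 2)) ≤
        ((m:ℝ≥0∞) + 1)⁻¹ * Q := by
      intro m
      calc _ ≤ μH[(d:ℝ)] (⋃ k₀, (F q m k₀ ∩ ball c ((2⁻¹ : ℝ) ^ (q+2) / 2))) := by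
            rw [← iUnion_inter]
            exact measure_mono (inter_subset_inter_left _ (iInter_subset _ m))
        _ = ⨆ k₀, μH[(d:ℝ)] (F q m k₀ ∩ ball c ((2⁻¹ : ℝ) ^ (q+2) / 2)) :=
            Monotone.measure_iUnion fun k k' h => inter_subset_inter_left _ (hmono q m h)
        _ ≤ _ := by
            refine iSup_le fun k₀ => ?_
            rw [← mul_assoc]
            refine measure_zero_piece hd S hPU B R hR _ (fun x hx => hx.1.1) q k₀ _ ?_ ?_
            · rintro x ⟨-, hx⟩ y ⟨-, hy⟩
              rw [mem_ball] at hx hy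
              have := dist_triangle_right x y c
              linarith
            · exact fun a ha i k hk l hl => ha.1.2 i k hk l hl
    have htend : Tendsto (fun m : ℕ => ((m:ℝ≥0∞) + 1)⁻¹ * Q) atTop (𝓝 (0 * Q)) := by
      refine ENNReal.Tendsto.mul_const ?_ (Or.inr hQ)
      have := (tendsto_add_atTop_iff_nat 1).2 ENNReal.tendsto_inv_nat_nhds_zero
      simpa using this
    rw [zero_mul] at htend
    exact le_antisymm (ge_of_tendsto' htend hle) bot_le
  refine measure_mono_null ?_ ((measure_biUnion_null_iff htf.countable).2 hpiece)
  intro x hx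
  have hxS : x ∈ S := by
    obtain ⟨k₀, hk₀⟩ := mem_iUnion.1 (mem_iInter.1 hx 0)
    exact hk₀.1
  obtain ⟨c, hc, hxc⟩ := mem_iUnion₂.1 (hcov hxS)
  exact mem_iUnion₂.2 ⟨c, hc, hx, hxc⟩

end

/-! ### The Besicovitch–Federer projection theorem -/

section

variable {d : ℕ} {ι : Type*} [Fintype ι]

lemma isClosed_exists_compact {X Y : Type*} [TopologicalSpace X] [TopologicalSpace Y]
    {S : Set X} (hS : IsCompact S) {P : Set (Y × X)} (hP : IsClosed P) :
    IsClosed {y | ∃ x ∈ S, (y, x) ∈ P} := by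
  have := isCompact_iff_compactSpace.1 hS
  have h : IsClosed ((fun z : Y × S => (z.1, (z.2 : X))) ⁻¹' P) := hP.preimage (by fun_prop)
  have := isClosedMap_fst_of_compactSpace (X := Y) (Y := S) _ h
  convert this using 1
  ext y
  simp

/-- The pairs `(a, B)` such that the fibre of `pB B` through `a` meets `S` at another point, at
distance less than `2^{-q}` from `a`. -/
def hitSet (S : Set (ι → ℝ)) (d q : ℕ) : Set ((ι → ℝ) × (Fin d → ι → ℝ)) :=
  {z | ∃ x ∈ S, x ≠ z.1 ∧ dist x z.1 < 2⁻¹ ^ q ∧ pB z.2 x = pB z.2 z.1}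

lemma measurableSet_hitSet (S : Set (ι → ℝ)) (hS : IsCompact S) (q : ℕ) :
    MeasurableSet (hitSet S d q) := by
  have : hitSet S d q = ⋃ m : ℕ, {z | ∃ x ∈ S, (z, x) ∈
      {w : ((ι → ℝ) × (Fin d → ι → ℝ)) × (ι → ℝ) | 1 / ((m:ℝ) + 1) ≤ dist w.2 w.1.1 ∧
        dist w.2 w.1.1 ≤ 2⁻¹ ^ q - 1 / ((m:ℝ) + 1) ∧ pB w.1.2 w.2 = pB w.1.2 w.1.1}} := by
    ext z
    simp only [hitSet, mem_ofPred_eq, mem_iUnion]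
    constructor
    · rintro ⟨x, hx, hne, hlt, heq⟩
      have h1 : 0 < dist x z.1 := dist_pos.2 hne
      have h2 : 0 < 2⁻¹ ^ q - dist x z.1 := by linarith
      obtain ⟨m, hm⟩ := exists_nat_one_div_lt (lt_min h1 h2)
      rw [lt_min_iff] at hm
      exact ⟨m, x, hx, hm.1.le, by linarith, heq⟩
    · rintro ⟨m, x, hx, h1, h2, h3⟩
      have : 0 < 1 / ((m:ℝ) + 1) := by positivity
      exact ⟨x, hx, dist_pos.1 (by linarith), by linarith, h3⟩
  rw [this]
  refine MeasurableSet.iUnion fun m => (isClosed_exists_compact hS ?_).measurableSet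
  have hdc : Continuous (fun w : ((ι → ℝ) × (Fin d → ι → ℝ)) × (ι → ℝ) => dist w.2 w.1.1) := by
    fun_prop
  refine (isClosed_le continuous_const hdc).inter
    ((isClosed_le hdc continuous_const).inter (isClosed_eq ?_ ?_))
  · exact pB_cont.comp (by fun_prop : Continuous
      fun w : ((ι → ℝ) × (Fin d → ι → ℝ)) × (ι → ℝ) => (w.1.2, w.2))
  · exact pB_cont.comp (by fun_prop : Continuous
      fun w : ((ι → ℝ) × (Fin d → ι → ℝ)) × (ι → ℝ) => (w.1.2, w.1.1))

/-- The push-forward of `H^d` on `S` under `pB B` has infinite upper density at `y`. -/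
def InfDens (S : Set (ι → ℝ)) (B : Fin d → ι → ℝ) (y : Fin d → ℝ) : Prop :=
  ∀ M k₀ : ℕ, ∃ k ≥ k₀, M * ENNReal.ofReal ((2⁻¹ ^ k) ^ d) <
      μH[(d:ℝ)].restrict S (pB B ⁻¹' closedBall y (2⁻¹ ^ k))

lemma pB_meas : Measurable (fun z : (Fin d → ι → ℝ) × (ι → ℝ) => pB z.1 z.2) :=
  pB_cont.measurable

lemma measurable_cone (S : Set (ι → ℝ)) (hS : IsCompact S) (hfin : μH[(d:ℝ)] S < ⊤) (i : ι)
    (l k : ℕ) : Measurable (fun z : (ι → ℝ) × (Fin d → ι → ℝ) => μH[(d:ℝ)] (coneSet S z.2 z.1 i l k)) := by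
  have : IsFiniteMeasure (μH[(d:ℝ)].restrict S) := ⟨by simpa using hfin⟩
  have hm : MeasurableSet {w : ((ι → ℝ) × (Fin d → ι → ℝ)) × (ι → ℝ) |
      w.2 ∈ coneSet S w.1.2 w.1.1 i l k} := by
    have e1 : Measurable (fun w : ((ι → ℝ) × (Fin d → ι → ℝ)) × (ι → ℝ) => pB w.1.2 w.2) :=
      pB_meas.comp (by fun_prop : Measurable
        fun w : ((ι → ℝ) × (Fin d → ι → ℝ)) × (ι → ℝ) => (w.1.2, w.2))
    have e2 : Measurable (fun w : ((ι → ℝ) × (Fin d → ι → ℝ)) × (ι → ℝ) => pB w.1.2 w.1.1) :=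
      pB_meas.comp (by fun_prop : Measurable
        fun w : ((ι → ℝ) × (Fin d → ι → ℝ)) × (ι → ℝ) => (w.1.2, w.1.1))
    have e3 : Measurable (fun w : ((ι → ℝ) × (Fin d → ι → ℝ)) × (ι → ℝ) => dist w.2 w.1.1) := by
      fun_prop
    have e4 : Measurable (fun w : ((ι → ℝ) × (Fin d → ι → ℝ)) × (ι → ℝ) => |w.2 i - w.1.1 i|) := by
      have : Continuous (fun w : ((ι → ℝ) × (Fin d → ι → ℝ)) × (ι → ℝ) => |w.2 i - w.1.1 i|) := by
        fun_prop
      exact this.measurable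
    refine (measurable_snd hS.isClosed.measurableSet).inter ((measurableSet_lt e3 measurable_const).inter
      (MeasurableSet.inter ?_ ((measurableSet_eq_fun e4 e3).inter
        (measurableSet_le (e1.dist e2) (measurable_const.mul e3)))))
    exact (measurableSet_eq_fun measurable_snd (measurable_fst.comp measurable_fst)).compl
  have := measurable_measure_prodMk_left (ν := μH[(d:ℝ)].restrict S) hm
  convert this using 2 with z
  rw [Measure.restrict_eq_self]
  · rfl
  · exact fun x hx => hx.1

lemma measurable_infd (S : Set (ι → ℝ)) (hfin : μH[(d:ℝ)] S < ⊤) (k : ℕ) :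
    Measurable (fun z : (ι → ℝ) × (Fin d → ι → ℝ) =>
      μH[(d:ℝ)].restrict S (pB z.2 ⁻¹' closedBall (pB z.2 z.1) (2⁻¹ ^ k))) := by
  have : IsFiniteMeasure (μH[(d:ℝ)].restrict S) := ⟨by simpa using hfin⟩
  have hm : MeasurableSet {w : ((ι → ℝ) × (Fin d → ι → ℝ)) × (ι → ℝ) |
      dist (pB w.1.2 w.2) (pB w.1.2 w.1.1) ≤ 2⁻¹ ^ k} := by
    have e1 : Measurable (fun w : ((ι → ℝ) × (Fin d → ι → ℝ)) × (ι → ℝ) => pB w.1.2 w.2) :=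
      pB_meas.comp (by fun_prop : Measurable
        fun w : ((ι → ℝ) × (Fin d → ι → ℝ)) × (ι → ℝ) => (w.1.2, w.2))
    have e2 : Measurable (fun w : ((ι → ℝ) × (Fin d → ι → ℝ)) × (ι → ℝ) => pB w.1.2 w.1.1) :=
      pB_meas.comp (by fun_prop : Measurable
        fun w : ((ι → ℝ) × (Fin d → ι → ℝ)) × (ι → ℝ) => (w.1.2, w.1.1))
    exact measurableSet_le (e1.dist e2) measurable_const
  exact measurable_measure_prodMk_left hm

/-- The pairs `(a, B)` satisfying one of three alternatives: the fibre of `pB B` through `a` meets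
`S` arbitrarily close to `a`; the push-forward of `H^d` on `S` has infinite upper density at the
image of `a`; or `S` has zero conical density at `a` in the sector `i`. -/
def goodSet (S : Set (ι → ℝ)) (d : ℕ) (i : ι) : Set ((ι → ℝ) × (Fin d → ι → ℝ)) :=
  {z | (∀ q, z ∈ hitSet S d q) ∨ InfDens S z.2 (pB z.2 z.1) ∨ ZeroDens S z.2 z.1 i}

lemma measurableSet_goodSet (S : Set (ι → ℝ)) (hS : IsCompact S) (hfin : μH[(d:ℝ)] S < ⊤) (i : ι) :
    MeasurableSet (goodSet S d i) := by
  have h1 : MeasurableSet {z : (ι → ℝ) × (Fin d → ι → ℝ) | ∀ q, z ∈ hitSet S d q} := by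
    have : {z : (ι → ℝ) × (Fin d → ι → ℝ) | ∀ q, z ∈ hitSet S d q} = ⋂ q, hitSet S d q := by
      ext; simp
    rw [this]
    exact MeasurableSet.iInter fun q => measurableSet_hitSet S hS q
  have h2 : MeasurableSet {z : (ι → ℝ) × (Fin d → ι → ℝ) | InfDens S z.2 (pB z.2 z.1)} := by
    simp only [InfDens, Set.ofPred_forall, Set.ofPred_exists, Set.ofPred_and]
    refine .iInter fun M => .iInter fun k₀ => .iUnion fun k => MeasurableSet.inter (.const _) ?_
    exact measurableSet_lt measurable_const (measurable_infd S hfin k)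
  have h3 : MeasurableSet {z : (ι → ℝ) × (Fin d → ι → ℝ) | ZeroDens S z.2 z.1 i} := by
    simp only [ZeroDens, Set.ofPred_forall, Set.ofPred_exists]
    refine .iUnion fun q => .iInter fun m => .iUnion fun k₀ => .iInter fun k => .iInter fun _ =>
      .iInter fun l => .iInter fun _ => ?_
    exact measurableSet_le (measurable_cone S hS hfin i l k) measurable_const
  exact h1.union (h2.union h3)

/-- The matrix whose `i`-th column is `t`, the others being zero. -/
def colMap (d : ℕ) (i : ι) : (Fin d → ℝ) →ₗ[ℝ] (Fin d → ι → ℝ) := by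
  classical
  exact { toFun := fun t j => Pi.single i (t j)
          map_add' := fun s t => by ext j k; simp [Pi.single_add]
          map_smul' := fun c t => by
            ext j k
            by_cases h : k = i
            · subst h; simp
            · simp [h] }

lemma pB_colMap (i : ι) (B : Fin d → ι → ℝ) (t : Fin d → ℝ) (x : ι → ℝ) :
    pB (B + colMap d i t) x = pB B x + x i • t := by
  classical
  ext j
  simp only [pB, colMap, LinearMap.coe_mk, AddHom.coe_mk, Pi.add_apply, add_mul,
    Finset.sum_add_distrib, Pi.single_apply, ite_mul, zero_mul, Finset.sum_ite_eq',
    Finset.mem_univ, if_true, Pi.smul_apply, smul_eq_mul]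
  ring

/-- Only the `i`-th column of the matrix is varied. In the sector where `x i ≠ a i`, the images of `x`
and `a` under the matrix with `i`-th column perturbed by `t` differ by `(x i - a i)(t - th x)` for
some `th x`, so fibres and cones become points and balls in the variable `t`; then
`density_trichotomy` applies to the normalised push-forwards under `th`. -/
lemma ae_good (S : Set (ι → ℝ)) (hS : IsCompact S) (hfin : μH[(d:ℝ)] S < ⊤) (i : ι) (a : ι → ℝ) :
    ∀ᵐ B : Fin d → ι → ℝ, (a, B) ∈ goodSet S d i := by
  have : IsFiniteMeasure (μH[(d:ℝ)].restrict S) := ⟨by simpa using hfin⟩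
  refine ae_mem_of_ae_add_linearMap_mem (𝕜 := ℝ) (colMap d i) (volume : Measure (Fin d → ℝ)) volume
    (s := {B | (a, B) ∈ goodSet S d i})
    (measurable_prodMk_left (measurableSet_goodSet S hS hfin i)) fun B => ?_
  set th : (ι → ℝ) → (Fin d → ℝ) := fun x => -((x i - a i)⁻¹ • (pB B x - pB B a)) with hth
  have hthm : Measurable th := by
    have := (pB_cont_right B).measurable
    fun_prop
  set Y : ℕ → Set (ι → ℝ) := fun l => {x | x ∈ S ∧ dist x a < 2⁻¹ ^ l ∧ x ≠ a ∧ |x i - a i| = dist x a}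
    with hY
  have hYm : ∀ l, MeasurableSet (Y l) := by
    intro l
    have e1 : Measurable fun x : ι → ℝ => |x i - a i| :=
      (by fun_prop : Continuous fun x : ι → ℝ => |x i - a i|).measurable
    have e2 : Measurable fun x : ι → ℝ => dist x a := by fun_prop
    have e3 : MeasurableSet {x : ι → ℝ | dist x a < 2⁻¹ ^ l} := measurableSet_lt e2 measurable_const
    have e4 : MeasurableSet {x : ι → ℝ | |x i - a i| = dist x a} := measurableSet_eq_fun e1 e2
    exact hS.isClosed.measurableSet.inter (e3.inter ((measurableSet_singleton a).compl.inter e4))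
  have hkey : ∀ x, x ≠ a → |x i - a i| = dist x a → ∀ t,
      pB (B + colMap d i t) x - pB (B + colMap d i t) a = (x i - a i) • (t - th x) := by
    intro x hxa hx t
    have hne : x i - a i ≠ 0 := by
      rw [← abs_pos, hx]; exact dist_pos.2 hxa
    rw [pB_colMap, pB_colMap, hth]
    simp only [sub_neg_eq_add, smul_add, smul_smul, mul_inv_cancel₀ hne, one_smul, sub_smul]
    abel
  have hpre : ∀ t l k, th ⁻¹' closedBall t (2⁻¹ ^ k) ∩ Y l = coneSet S (B + colMap d i t) a i l k := by
    intro t l k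
    ext x
    have hgen : x ≠ a → |x i - a i| = dist x a → (dist (th x) t ≤ 2⁻¹ ^ k ↔
        dist (pB (B + colMap d i t) x) (pB (B + colMap d i t) a) ≤ 2⁻¹ ^ k * dist x a) := by
      intro h1 h2
      have h3 := dist_pos.2 h1
      rw [dist_eq_norm (pB _ x), hkey x h1 h2, norm_smul, Real.norm_eq_abs, h2, ← dist_eq_norm,
        dist_comm t, mul_comm]
      exact (mul_le_mul_iff_left₀ h3).symm
    simp only [mem_inter_iff, mem_preimage, mem_closedBall, hY, mem_ofPred_eq, coneSet]
    constructor
    · rintro ⟨h1, h2, h3, h4, h5⟩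
      exact ⟨h2, h3, h4, h5, (hgen h4 h5).1 h1⟩
    · rintro ⟨h2, h3, h4, h5, h1⟩
      exact ⟨(hgen h4 h5).2 h1, h2, h3, h4, h5⟩
  set c : ℕ → ℝ≥0∞ := fun l => ENNReal.ofReal ((2⁻¹ ^ l) ^ d) with hc
  have hc0 : ∀ l, c l ≠ 0 := fun l => by
    simp only [hc, ne_eq, ENNReal.ofReal_eq_zero, not_le]; positivity
  have hct : ∀ l, c l ≠ ⊤ := fun l => ENNReal.ofReal_ne_top
  set G : ℕ → Set (Fin d → ℝ) := fun q => {t | (a, B + colMap d i t) ∈ hitSet S d q}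
  have hcolm : Measurable (colMap d i) := (LinearMap.continuous_of_finiteDimensional _).measurable
  have hGm : ∀ q, MeasurableSet (G q) := fun q =>
    (measurable_const.prodMk (measurable_const.add hcolm)) (measurableSet_hitSet S hS q)
  set σ : ℕ → ℕ → Measure (Fin d → ℝ) := fun q l =>
    (c (q + l))⁻¹ • (μH[(d:ℝ)].restrict (Y (q + l))).map th with hσ
  have hσap : ∀ q l t k, σ q l (closedBall t (2⁻¹ ^ k)) =
      μH[(d:ℝ)] (coneSet S (B + colMap d i t) a i (q + l) k) / c (q + l) := by
    intro q l t k
    simp only [hσ, Measure.smul_apply, smul_eq_mul]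
    rw [Measure.map_apply hthm measurableSet_closedBall,
      Measure.restrict_apply (hthm measurableSet_closedBall), hpre, div_eq_mul_inv, mul_comm]
  have hσG : ∀ q l, σ q l (G q)ᶜ = 0 := by
    intro q l
    simp only [hσ, Measure.smul_apply, smul_eq_mul]
    rw [Measure.map_apply hthm (hGm q).compl, Measure.restrict_apply (hthm (hGm q).compl)]
    convert mul_zero _
    convert measure_empty (μ := μH[(d:ℝ)])
    rw [← disjoint_iff_inter_eq_empty, Set.disjoint_left]
    rintro x hx ⟨hxS, hxd, hxa, hxi⟩
    refine hx ⟨x, hxS, hxa, hxd.trans_le (pow_le_pow_of_le_one (by norm_num) (by norm_num) (by omega)), ?_⟩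
    have := hkey x hxa hxi (th x)
    rw [sub_self, smul_zero, sub_eq_zero] at this
    exact this
  have htri := ae_all_iff.2 fun q => density_trichotomy (σ q) (G q) (hGm q) (hσG q)
  filter_upwards [htri] with t ht
  by_cases hhit : ∀ q, (a, B + colMap d i t) ∈ hitSet S d q
  · exact Or.inl hhit
  push Not at hhit
  obtain ⟨q, hq⟩ := hhit
  right
  rcases ht q with h | h | h
  · exact absurd h hq
  · left
    intro M k₀
    obtain ⟨k, hk, l, hlt⟩ := h M k₀
    refine ⟨k + (q + l), by omega, ?_⟩
    rw [hσap, ENNReal.lt_div_iff_mul_lt (Or.inl (hc0 _)) (Or.inl (hct _))] at hlt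
    refine lt_of_le_of_lt (le_of_eq ?_) (hlt.trans_le ?_)
    · simp only [hc]
      rw [mul_assoc, ← ENNReal.ofReal_mul (by positivity), ← mul_pow, ← pow_add]
    · rw [← Measure.restrict_eq_self (μH[(d:ℝ)]) (s := coneSet _ _ _ _ _ _) (t := S) (fun x hx => hx.1)]
      refine measure_mono fun x hx => ?_
      obtain ⟨h1, h2, h3, h4, h5⟩ := hx
      rw [mem_preimage, mem_closedBall, pow_add]
      exact h5.trans (by gcongr)
  · right
    refine ⟨q, fun m => ?_⟩
    obtain ⟨k₀, hk₀⟩ := h m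
    refine ⟨k₀, fun k hk l hl => ?_⟩
    obtain ⟨l', rfl⟩ := Nat.exists_eq_add_of_le hl
    have := hk₀ k hk l'
    rw [hσap, ENNReal.div_le_iff (hc0 _) (hct _)] at this
    exact this

/-- The Besicovitch–Federer projection theorem: almost every linear image in `ℝ^d` of a purely
unrectifiable compact set of finite `H^d` measure is null. By Fubini and `ae_good`, for almost every
`B` almost every point satisfies the alternatives of `goodSet` in every sector; the three resulting
sets have null images by `vol_infinite_fibres`, `vol_infinite_density` and `measure_zeroDens`. -/
theorem besicovitch_federer (hd : 0 < d) (S : Set (ι → ℝ)) (hS : IsCompact S)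
    (hfin : μH[(d:ℝ)] S < ⊤) (hPU : PU d S) :
    ∀ᵐ B : Fin d → ι → ℝ, volume (pB B '' S) = 0 := by
  have : IsFiniteMeasure (μH[(d:ℝ)].restrict S) := ⟨by simpa using hfin⟩
  have h1 : ∀ i : ι, ∀ᵐ B : Fin d → ι → ℝ, ∀ᵐ a ∂(μH[(d:ℝ)].restrict S), (a, B) ∈ goodSet S d i := by
    intro i
    refine (Measure.ae_ae_comm (p := fun a B => (a, B) ∈ goodSet S d i)
      (measurableSet_goodSet S hS hfin i)).1 ?_
    exact Eventually.of_forall fun a => ae_good S hS hfin i a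
  rw [← ae_all_iff] at h1
  filter_upwards [h1] with B hB
  rw [← ae_all_iff] at hB
  obtain ⟨K, hK⟩ := pB_lip B
  set N : Set (ι → ℝ) := {a | a ∈ S ∧ ¬ ∀ i, (a, B) ∈ goodSet S d i}
  have hN : μH[(d:ℝ)] N = 0 := by
    have := (ae_restrict_iff' hS.isClosed.measurableSet).1 hB
    rw [ae_iff] at this
    refine measure_mono_null (fun a ha => ?_) this
    simp only [mem_ofPred_eq]
    intro h
    exact ha.2 (h ha.1)
  have hZ := measure_zeroDens hd S hS hPU B
  have hsub : pB B '' S ⊆ pB B '' (N ∪ {a | a ∈ S ∧ ∀ i, ZeroDens S B a i}) ∪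
      ({y | (S ∩ pB B ⁻¹' {y}).Infinite} ∪ {y | InfDens S B y}) := by
    rintro _ ⟨a, ha, rfl⟩
    by_cases hN' : a ∈ N
    · exact Or.inl ⟨a, Or.inl hN', rfl⟩
    have hg : ∀ i, (a, B) ∈ goodSet S d i := by
      by_contra h; exact hN' ⟨ha, h⟩
    by_cases hinf : InfDens S B (pB B a)
    · exact Or.inr (Or.inr hinf)
    by_cases hhit : ∀ q, (a, B) ∈ hitSet S d q
    · right; left
      intro hfin'
      -- a finite fibre would have a nearest other point
      have hfin2 : ((S ∩ pB B ⁻¹' {pB B a}) \ {a}).Finite := hfin'.subset diff_subset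
      have hcl : IsClosed ((S ∩ pB B ⁻¹' {pB B a}) \ {a}) := hfin2.isClosed
      have hna : a ∉ (S ∩ pB B ⁻¹' {pB B a}) \ {a} := fun h => h.2 rfl
      obtain ⟨ε, hε, hball⟩ := Metric.isOpen_iff.1 hcl.isOpen_compl a hna
      obtain ⟨q, hq⟩ := exists_pow_lt_of_lt_one hε (by norm_num : (2⁻¹:ℝ) < 1)
      obtain ⟨x, hx, hxa, hxd, hxp⟩ := hhit q
      exact hball (show x ∈ ball a ε from hxd.trans hq) ⟨⟨hx, hxp⟩, hxa⟩
    · left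
      refine ⟨a, Or.inr ⟨ha, fun i => ?_⟩, rfl⟩
      rcases hg i with h | h | h
      · exact absurd h hhit
      · exact absurd h hinf
      · exact h
  refine measure_mono_null hsub (measure_union_null ?_ (measure_union_null ?_ ?_))
  · have := vol_image_le (hK.lipschitzOnWith (s := N ∪ {a | a ∈ S ∧ ∀ i, ZeroDens S B a i}))
    rw [measure_union_null hN hZ, mul_zero] at this
    exact le_antisymm this bot_le
  · exact vol_infinite_fibres hK S hS hfin
  · exact vol_infinite_density (μH[(d:ℝ)].restrict S) (pB B) (pB_cont_right B).measurable

end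

/-! ### Hausdorff measures of cylinders and cones -/

section

variable {d : ℕ}

section covers
variable {X : Type*} [MetricSpace X] [MeasurableSpace X] [BorelSpace X]

/-- An upper bound for `H^p` from efficient covers of small mesh. -/
lemma hm_le_of_cover (p : ℕ) (s : Set X) (c : ℝ≥0∞)
    (h : ∀ ε : ℝ, 0 < ε → ∃ (κ : Type) (_ : Countable κ) (t : κ → Set X), s ⊆ ⋃ i, t i ∧
      (∀ i, ediam (t i) ≤ ENNReal.ofReal ε) ∧ ∑' i, ediam (t i) ^ p ≤ c + ENNReal.ofReal ε) :
    μH[(p:ℝ)] s ≤ c := by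
  have hpos : ∀ m : ℕ, (0:ℝ) < 1 / ((m:ℝ) + 1) := fun m => Nat.one_div_pos_of_nat
  have hlim : Tendsto (fun m : ℕ => ENNReal.ofReal (1 / ((m:ℝ) + 1))) atTop (𝓝 0) := by
    rw [← ENNReal.ofReal_zero]
    exact (ENNReal.continuous_ofReal.tendsto 0).comp tendsto_one_div_add_atTop_nhds_zero_nat
  choose κ hκ t hst hd hsum using fun m : ℕ => h _ (hpos m)
  have h1 := Measure.hausdorffMeasure_le_liminf_tsum (β := ℕ) (p:ℝ) s (l := atTop)
    (fun m : ℕ => ENNReal.ofReal (1 / ((m:ℝ) + 1))) hlim t (Eventually.of_forall hd)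
    (Eventually.of_forall hst)
  refine h1.trans ?_
  have h2 : Tendsto (fun m : ℕ => c + ENNReal.ofReal (1 / ((m:ℝ) + 1))) atTop (𝓝 (c + 0)) :=
    tendsto_const_nhds.add hlim
  rw [add_zero] at h2
  rw [← h2.liminf_eq]
  refine liminf_le_liminf (Eventually.of_forall fun m => ?_)
  simpa using hsum m

/-- A set of finite `H^p` measure has nearly optimal covers of small mesh by nonempty subsets, with
positive numbers `e i` bounding the diameters. -/
lemma cover_of_hm_lt (p : ℕ) (s : Set X) (hs : μH[(p:ℝ)] s < ⊤) {ε : ℝ} (hε : 0 < ε) :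
    ∃ (κ : Type) (_ : Countable κ) (t : κ → Set X) (e : κ → ℝ), s ⊆ ⋃ i, t i ∧
      (∀ i, (t i).Nonempty) ∧ (∀ i, t i ⊆ s) ∧ (∀ i, 0 < e i ∧ e i ≤ ε) ∧
      (∀ i, ediam (t i) ≤ ENNReal.ofReal (e i)) ∧
      ∑' i, ENNReal.ofReal (e i ^ p) ≤ μH[(p:ℝ)] s + ENNReal.ofReal ε := by
  have hε2 : 0 < ε / 2 := by linarith
  have h1 : ⨅ (t : ℕ → Set X) (_ : s ⊆ ⋃ n, t n) (_ : ∀ n, ediam (t n) ≤ ENNReal.ofReal (ε / 2)),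
      ∑' n, ⨆ _ : (t n).Nonempty, ediam (t n) ^ (p:ℝ) < μH[(p:ℝ)] s + ENNReal.ofReal (ε / 2) := by
    refine lt_of_le_of_lt ?_ (ENNReal.lt_add_right hs.ne (ENNReal.ofReal_pos.2 hε2).ne')
    rw [Measure.hausdorffMeasure_apply]
    exact le_iSup₂_of_le (ENNReal.ofReal (ε/2)) (ENNReal.ofReal_pos.2 hε2) le_rfl
  simp only [iInf_lt_iff] at h1
  obtain ⟨t, hst, hd, hsum⟩ := h1
  obtain ⟨η, hη0, hηs⟩ := ENNReal.exists_pos_sum_of_countable'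
    (ENNReal.ofReal_pos.2 hε2).ne' ℕ
  have he : ∀ n, ∃ e : ℝ, 0 < e ∧ e ≤ ε ∧ ediam (t n) ≤ ENNReal.ofReal e ∧
      ENNReal.ofReal (e ^ p) ≤ ediam (t n) ^ p + η n := by
    intro n
    have hfin : ediam (t n) ≠ ⊤ := ((hd n).trans_lt ENNReal.ofReal_lt_top).ne
    set D := (ediam (t n)).toReal
    have hD : D ≤ ε / 2 := ENNReal.toReal_le_of_le_ofReal hε2.le (hd n)
    have hDe : ediam (t n) = ENNReal.ofReal D := (ENNReal.ofReal_toReal hfin).symm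
    have hc : Tendsto (fun x : ℝ => ENNReal.ofReal (x ^ p)) (𝓝[>] D)
        (𝓝 (ENNReal.ofReal (D ^ p))) :=
      ((ENNReal.continuous_ofReal.comp (continuous_pow p)).tendsto D).mono_left nhdsWithin_le_nhds
    have hlt : ENNReal.ofReal (D ^ p) < ENNReal.ofReal (D ^ p) + η n :=
      ENNReal.lt_add_right ENNReal.ofReal_ne_top (hη0 n).ne'
    have e1 := hc.eventually (gt_mem_nhds hlt)
    have e2 : ∀ᶠ x in 𝓝[>] D, x < ε :=
      nhdsWithin_le_nhds (gt_mem_nhds (by linarith : D < ε))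
    obtain ⟨e, he1, he2, he3⟩ := (e1.and (e2.and self_mem_nhdsWithin)).exists
    have hD0 : 0 ≤ D := ENNReal.toReal_nonneg
    refine ⟨e, lt_of_le_of_lt hD0 he3, he2.le, ?_, ?_⟩
    · rw [hDe]; exact ENNReal.ofReal_le_ofReal (le_of_lt he3)
    · rw [hDe, ← ENNReal.ofReal_pow hD0]; exact he1.le
  choose e he0 he1 he2 he3 using he
  refine ⟨{n : ℕ // (t n ∩ s).Nonempty}, inferInstance, fun i => t i ∩ s, fun i => e i,
    ?_, fun i => i.2, fun i => inter_subset_right, fun i => ⟨he0 i, he1 i⟩,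
    fun i => (ediam_mono inter_subset_left).trans (he2 i), ?_⟩
  · intro x hx
    obtain ⟨n, hn⟩ := mem_iUnion.1 (hst hx)
    exact mem_iUnion.2 ⟨⟨n, x, hn, hx⟩, hn, hx⟩
  · calc ∑' i : {n : ℕ // (t n ∩ s).Nonempty}, ENNReal.ofReal (e i ^ p)
        ≤ ∑' i : {n : ℕ // (t n ∩ s).Nonempty},
            ((⨆ _ : (t i).Nonempty, ediam (t i) ^ (p:ℝ)) + η i) := by
          refine ENNReal.tsum_le_tsum fun i => ?_
          have hne : (t i).Nonempty := i.2.mono inter_subset_left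
          simp only [hne, iSup_pos, ENNReal.rpow_natCast]
          exact he3 i
      _ ≤ ∑' n : ℕ, ((⨆ _ : (t n).Nonempty, ediam (t n) ^ (p:ℝ)) + η n) :=
          ENNReal.tsum_comp_le_tsum_of_injective Subtype.val_injective
            (fun n : ℕ => ((⨆ _ : (t n).Nonempty, ediam (t n) ^ (p:ℝ)) + η n))
      _ = (∑' n : ℕ, (⨆ _ : (t n).Nonempty, ediam (t n) ^ (p:ℝ))) + ∑' n, η n :=
          ENNReal.tsum_add
      _ ≤ (μH[(p:ℝ)] s + ENNReal.ofReal (ε/2)) + ENNReal.ofReal (ε/2) :=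
          add_le_add hsum.le hηs.le
      _ = _ := by rw [add_assoc, ← ENNReal.ofReal_add hε2.le hε2.le, add_halves]

/-- The measure of a cylinder-like set. -/
lemma cyl_upper {Z : Type*} [MetricSpace Z] [MeasurableSpace Z] [BorelSpace Z]
    (A : Set X) {a l c L : ℝ} (hl : 0 < l) (hc : 0 < c) (hL : 0 < L) (Φ : ℝ → X → Z)
    (hΦ : ∀ ρ ∈ Icc a (a + l), ∀ ρ' ∈ Icc a (a + l), ∀ y ∈ A, ∀ y' ∈ A,
      dist (Φ ρ y) (Φ ρ' y') ≤ c * |ρ - ρ'| + L * dist y y') :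
    μH[((d + 1 : ℕ) : ℝ)] (image2 Φ (Icc a (a + l)) A) ≤
      ENNReal.ofReal (2 ^ (d+1) * c * L ^ d * l) * μH[(d:ℝ)] A := by
  by_cases hfin : μH[(d:ℝ)] A = ⊤
  · rw [hfin, ENNReal.mul_top]
    · exact le_top
    · exact (ENNReal.ofReal_pos.2 (by positivity)).ne'
  replace hfin : μH[(d:ℝ)] A < ⊤ := lt_top_iff_ne_top.2 hfin
  set Q := 2 ^ (d+1) * c * L ^ d * l with hQ
  set H := μH[(d:ℝ)] A with hH
  refine hm_le_of_cover _ _ _ fun ε hε => ?_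
  -- choose the mesh so that the error terms are below `ε`
  obtain ⟨θ, hθ0, hθ1, hθ2⟩ : ∃ θ : ℝ, 0 < θ ∧ 2 * L * θ ≤ ε ∧
      ENNReal.ofReal (Q + (2 * L) ^ (d+1) * θ) * (H + ENNReal.ofReal θ) ≤
        ENNReal.ofReal Q * H + ENNReal.ofReal ε := by
    have t1 : Tendsto (fun θ : ℝ => ENNReal.ofReal (Q + (2 * L) ^ (d+1) * θ)) (𝓝[>] 0)
        (𝓝 (ENNReal.ofReal (Q + (2 * L) ^ (d+1) * 0))) :=
      ((ENNReal.continuous_ofReal.comp (by fun_prop :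
        Continuous fun θ : ℝ => Q + (2 * L) ^ (d+1) * θ)).tendsto 0).mono_left nhdsWithin_le_nhds
    have t2 : Tendsto (fun θ : ℝ => H + ENNReal.ofReal θ) (𝓝[>] 0) (𝓝 (H + ENNReal.ofReal 0)) :=
      (tendsto_const_nhds.add (ENNReal.continuous_ofReal.tendsto 0)).mono_left nhdsWithin_le_nhds
    have t3 := ENNReal.Tendsto.mul t1 (Or.inr (by simp [hfin.ne])) t2
      (Or.inr ENNReal.ofReal_ne_top)
    simp only [mul_zero, add_zero, ENNReal.ofReal_zero] at t3
    have hlt : ENNReal.ofReal Q * H < ENNReal.ofReal Q * H + ENNReal.ofReal ε :=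
      ENNReal.lt_add_right (ENNReal.mul_ne_top ENNReal.ofReal_ne_top hfin.ne)
        (ENNReal.ofReal_pos.2 hε).ne'
    have e1 := t3.eventually (gt_mem_nhds hlt)
    have e2 : ∀ᶠ x in 𝓝[>] (0:ℝ), x < ε / (2 * L) :=
      nhdsWithin_le_nhds (gt_mem_nhds (by positivity))
    obtain ⟨θ, h1, h2, h3⟩ := (e1.and (e2.and self_mem_nhdsWithin)).exists
    refine ⟨θ, h3, ?_, h1.le⟩
    rw [lt_div_iff₀ (by positivity)] at h2
    linarith
  obtain ⟨κ, hκ, t, e, hcov, hne, hsub, he, hdiam, hsum⟩ := cover_of_hm_lt d A hfin hθ0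
  set N : κ → ℕ := fun i => ⌈l * c / (L * e i)⌉₊ with hN
  refine ⟨Σ i, Fin (N i), inferInstance, fun ij => image2 Φ
    (Icc a (a+l) ∩ Icc (a + (ij.2 : ℕ) * (L * e ij.1 / c)) (a + ((ij.2 : ℕ) + 1) * (L * e ij.1 / c)))
    (t ij.1), ?_, ?_, ?_⟩
  · rintro _ ⟨ρ, hρ, y, hy, rfl⟩
    obtain ⟨i, hi⟩ := mem_iUnion.1 (hcov hy)
    have hh : 0 < L * e i / c := by have := (he i).1; positivity
    set h := L * e i / c
    -- the last subinterval catches the right end point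
    have hlN : l ≤ N i * h := by
      have : l * c / (L * e i) ≤ N i := Nat.le_ceil _
      have h2 := mul_le_mul_of_nonneg_right this hh.le
      refine le_trans (le_of_eq ?_) h2
      have := (he i).1
      simp only [h]; field_simp
    have hNpos : 0 < N i := by
      rcases Nat.eq_zero_or_pos (N i) with h0 | h0
      · rw [h0] at hlN; simp at hlN; linarith
      · exact h0
    obtain ⟨j, hj1, hj2, hj3⟩ : ∃ j : ℕ, j < N i ∧ a + j * h ≤ ρ ∧ ρ ≤ a + (j+1) * h := by
      have h0 : 0 ≤ (ρ - a) / h := div_nonneg (by linarith [hρ.1]) hh.le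
      by_cases hlt : ⌊(ρ - a)/h⌋₊ < N i
      · refine ⟨_, hlt, ?_, ?_⟩
        · have := Nat.floor_le h0
          rw [le_div_iff₀ hh] at this; linarith
        · have := (Nat.lt_floor_add_one ((ρ - a)/h)).le
          rw [div_le_iff₀ hh] at this; linarith
      · have h1 : (N i : ℝ) ≤ (ρ - a)/h := (Nat.le_floor_iff h0).1 (not_lt.1 hlt)
        rw [le_div_iff₀ hh] at h1
        have hc1 : ((N i - 1 : ℕ) : ℝ) = N i - 1 := by
          rw [Nat.cast_sub hNpos]; simp
        refine ⟨N i - 1, by omega, ?_, ?_⟩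
        · rw [hc1]; nlinarith
        · rw [hc1]; have := hρ.2; nlinarith
    exact mem_iUnion.2 ⟨⟨i, ⟨j, hj1⟩⟩, ρ, ⟨hρ, hj2, hj3⟩, y, hi, rfl⟩
  all_goals
    have hdd : ∀ ij : Σ i, Fin (N i), ediam (image2 Φ (Icc a (a+l) ∩
        Icc (a + (ij.2 : ℕ) * (L * e ij.1 / c)) (a + ((ij.2 : ℕ) + 1) * (L * e ij.1 / c)))
        (t ij.1)) ≤ ENNReal.ofReal (2 * L * e ij.1) := by
      rintro ⟨i, j⟩
      refine ediam_le ?_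
      rintro _ ⟨ρ, hρ, y, hy, rfl⟩ _ ⟨ρ', hρ', y', hy', rfl⟩
      rw [edist_dist]
      refine ENNReal.ofReal_le_ofReal ?_
      refine (hΦ ρ hρ.1 ρ' hρ'.1 y (hsub i hy) y' (hsub i hy')).trans ?_
      have h1 : dist y y' ≤ e i := by
        have := (edist_le_ediam_of_mem hy hy').trans (hdiam i)
        rwa [edist_dist, ENNReal.ofReal_le_ofReal_iff (he i).1.le] at this
      have h2 : |ρ - ρ'| ≤ L * e i / c := by
        have a1 := hρ.2; have a2 := hρ'.2
        simp only [mem_Icc, add_mul, one_mul] at a1 a2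
        rw [abs_le]; constructor <;> linarith
      calc c * |ρ - ρ'| + L * dist y y' ≤ c * (L * e i / c) + L * e i := by gcongr
        _ = _ := by field_simp; ring
  · intro ij
    refine (hdd ij).trans (ENNReal.ofReal_le_ofReal ?_)
    have := (he ij.1).2
    nlinarith
  · calc _ ≤ ∑' ij : Σ i, Fin (N i), ENNReal.ofReal ((2 * L * e ij.1) ^ (d+1)) := by
          refine ENNReal.tsum_le_tsum fun ij => ?_
          rw [ENNReal.ofReal_pow (by have := (he ij.1).1; positivity)]
          gcongr
          exact hdd ij
      _ = ∑' i, ∑' j : Fin (N i), ENNReal.ofReal ((2 * L * e i) ^ (d+1)) :=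
          ENNReal.tsum_sigma (fun i (_ : Fin (N i)) => ENNReal.ofReal ((2 * L * e i) ^ (d+1)))
      _ ≤ ∑' i, ENNReal.ofReal (Q + (2 * L) ^ (d+1) * θ) * ENNReal.ofReal (e i ^ d) := by
          refine ENNReal.tsum_le_tsum fun i => ?_
          have he0 := (he i).1
          rw [tsum_fintype (L := .unconditional _), Finset.sum_const, Finset.card_univ,
            Fintype.card_fin, nsmul_eq_mul, ← ENNReal.ofReal_natCast,
            ← ENNReal.ofReal_mul (by positivity), ← ENNReal.ofReal_mul (by positivity)]
          refine ENNReal.ofReal_le_ofReal ?_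
          have hN1 : (N i : ℝ) ≤ l * c / (L * e i) + 1 :=
            (Nat.ceil_lt_add_one (by positivity)).le
          calc (N i : ℝ) * (2 * L * e i) ^ (d+1)
              ≤ (l * c / (L * e i) + 1) * (2 * L * e i) ^ (d+1) := by gcongr
            _ = (Q + (2 * L) ^ (d+1) * e i) * e i ^ d := by
                rw [hQ]; field_simp; ring
            _ ≤ _ := by gcongr; exact (he i).2
      _ = ENNReal.ofReal (Q + (2 * L) ^ (d+1) * θ) * ∑' i, ENNReal.ofReal (e i ^ d) :=
          ENNReal.tsum_mul_left
      _ ≤ _ := (mul_le_mul_right hsum _).trans hθ2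

end covers

/-- Slicing a cone by spheres: the converse of `cyl_upper`. -/
lemma cone_lower {V : Type*} [NormedAddCommGroup V] [NormedSpace ℝ V] [MeasurableSpace V]
    [BorelSpace V] (A T : Set V) (hA : A ⊆ sphere 0 1)
    (hT : ∀ ρ ∈ Icc (1/2 : ℝ) 1, ∀ u ∈ A, ρ • u ∈ T) :
    μH[(d:ℝ)] A ≤ 2 ^ (d+2) * μH[((d + 1 : ℕ) : ℝ)] T := by
  by_cases hfin : μH[((d + 1 : ℕ) : ℝ)] T = ⊤
  · rw [hfin, ENNReal.mul_top (by positivity)]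
    exact le_top
  replace hfin : μH[((d + 1 : ℕ) : ℝ)] T < ⊤ := lt_top_iff_ne_top.2 hfin
  have hpos : ∀ m : ℕ, (0:ℝ) < 1 / ((m:ℝ) + 1) := fun m => Nat.one_div_pos_of_nat
  have hlim : Tendsto (fun m : ℕ => 1 / ((m:ℝ) + 1)) atTop (𝓝 0) :=
    tendsto_one_div_add_atTop_nhds_zero_nat
  have hlim' : ∀ q : ℝ, Tendsto (fun m : ℕ => ENNReal.ofReal (q * (1 / ((m:ℝ) + 1)))) atTop (𝓝 0) := by
    intro q
    rw [← ENNReal.ofReal_zero]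
    have := hlim.const_mul q
    rw [mul_zero] at this
    exact (ENNReal.continuous_ofReal.tendsto 0).comp this
  choose κ hκ t e hcov hne hsub he hdiam hsum using
    fun m : ℕ => cover_of_hm_lt (d+1) T hfin (hpos m)
  choose z hz using hne
  have hdist : ∀ m i, ∀ x ∈ t m i, ∀ y ∈ t m i, dist x y ≤ e m i := by
    intro m i x hx y hy
    have := (edist_le_ediam_of_mem hx hy).trans (hdiam m i)
    rwa [edist_dist, ENNReal.ofReal_le_ofReal_iff (he m i).1.le] at this
  set f : ℕ → ℝ → ℝ≥0∞ := fun m ρ => ∑' i, (closedBall ‖z m i‖ (e m i)).indicator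
    (fun _ => ENNReal.ofReal ((2 * e m i) ^ d)) ρ with hf
  have hfm : ∀ m, Measurable (f m) := fun m =>
    Measurable.tsum fun i => measurable_const.indicator measurableSet_closedBall
  have key : ∀ ρ ∈ Icc (1/2 : ℝ) 1, μH[(d:ℝ)] A ≤ liminf (fun m => f m ρ) atTop := by
    intro ρ hρ
    have hρ0 : 0 < ρ := by linarith [hρ.1]
    have hdd : ∀ (m : ℕ) (i : κ m), ediam {u ∈ A | ρ • u ∈ t m i} ≤ ENNReal.ofReal (2 * e m i) := by
      intro m i
      refine ediam_le fun u hu v hv => ?_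
      rw [edist_dist]
      refine ENNReal.ofReal_le_ofReal ?_
      have h1 := hdist m i _ hu.2 _ hv.2
      rw [dist_smul₀, Real.norm_of_nonneg hρ0.le] at h1
      nlinarith [hρ.1, dist_nonneg (x := u) (y := v)]
    have h1 := Measure.hausdorffMeasure_le_liminf_tsum (β := ℕ) (d:ℝ) A (l := atTop)
      (ι := fun m => {i : κ m // ρ ∈ closedBall ‖z m i‖ (e m i)})
      (fun m : ℕ => ENNReal.ofReal (2 * (1 / ((m:ℝ) + 1)))) (hlim' 2)
      (fun m i => {u ∈ A | ρ • u ∈ t m i})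
      (Eventually.of_forall fun m i => (hdd m i).trans
        (ENNReal.ofReal_le_ofReal (by linarith [(he m i).2])))
      (Eventually.of_forall fun m u hu => ?_)
    · refine h1.trans (liminf_le_liminf (Eventually.of_forall fun m => ?_))
      have h2 : f m ρ = ∑' i : {i : κ m // ρ ∈ closedBall ‖z m i‖ (e m i)},
          ENNReal.ofReal ((2 * e m i) ^ d) := by
        have h3 := tsum_subtype {i : κ m | ρ ∈ closedBall ‖z m i‖ (e m i)}
          (fun i => ENNReal.ofReal ((2 * e m i) ^ d))
        refine Eq.trans ?_ h3.symm
        exact tsum_congr fun i => by simp only [indicator, mem_ofPred_eq]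
      rw [h2]
      refine ENNReal.tsum_le_tsum fun i => ?_
      rw [ENNReal.rpow_natCast, ENNReal.ofReal_pow (by linarith [(he m i).1])]
      gcongr
      exact hdd m i
    · obtain ⟨i, hi⟩ := mem_iUnion.1 (hcov m (hT ρ hρ u hu))
      have hu1 : ‖ρ • u‖ = ρ := by
        rw [norm_smul, mem_sphere_zero_iff_norm.1 (hA hu), mul_one, Real.norm_of_nonneg hρ0.le]
      refine mem_iUnion.2 ⟨⟨i, ?_⟩, hu, hi⟩
      rw [mem_closedBall, Real.dist_eq]
      calc |ρ - ‖z m i‖| = |‖ρ • u‖ - ‖z m i‖| := by rw [hu1]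
        _ ≤ ‖ρ • u - z m i‖ := abs_norm_sub_norm_le _ _
        _ ≤ e m i := by rw [← dist_eq_norm]; exact hdist m i _ hi _ (hz m i)
  have hlint : ∀ m, ∫⁻ ρ, f m ρ ≤
      2 ^ (d+1) * (μH[((d + 1 : ℕ) : ℝ)] T + ENNReal.ofReal (1 / ((m:ℝ) + 1))) := by
    intro m
    rw [lintegral_tsum fun i => (measurable_const.indicator measurableSet_closedBall).aemeasurable]
    calc _ = ∑' i, 2 ^ (d+1) * ENNReal.ofReal (e m i ^ (d+1)) := by
          refine tsum_congr fun i => ?_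
          have := (he m i).1
          rw [lintegral_indicator_const measurableSet_closedBall, Real.volume_closedBall,
            ← ENNReal.ofReal_mul (by positivity), ← pow_succ, mul_pow,
            ENNReal.ofReal_mul (by positivity), ENNReal.ofReal_pow (by norm_num)]
          simp
      _ ≤ _ := by rw [ENNReal.tsum_mul_left]; gcongr; exact hsum m
  have h3 : μH[(d:ℝ)] A * ENNReal.ofReal (1/2) ≤ 2 ^ (d+1) * μH[((d + 1 : ℕ) : ℝ)] T := by
    calc μH[(d:ℝ)] A * ENNReal.ofReal (1/2) = ∫⁻ _ in Icc (1/2 : ℝ) 1, μH[(d:ℝ)] A := by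
          rw [setLIntegral_const, Real.volume_Icc]; norm_num
      _ ≤ ∫⁻ ρ in Icc (1/2 : ℝ) 1, liminf (fun m => f m ρ) atTop :=
          setLIntegral_mono' measurableSet_Icc key
      _ ≤ ∫⁻ ρ, liminf (fun m => f m ρ) atTop := setLIntegral_le_lintegral _ _
      _ ≤ liminf (fun m => ∫⁻ ρ, f m ρ) atTop := lintegral_liminf_le hfm
      _ ≤ liminf (fun m : ℕ => 2 ^ (d+1) *
            (μH[((d + 1 : ℕ) : ℝ)] T + ENNReal.ofReal (1 / ((m:ℝ) + 1)))) atTop :=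
          liminf_le_liminf (Eventually.of_forall hlint)
      _ = 2 ^ (d+1) * (μH[((d + 1 : ℕ) : ℝ)] T + 0) := by
          refine Tendsto.liminf_eq ?_
          refine ENNReal.Tendsto.const_mul ?_ (Or.inr (by finiteness))
          refine tendsto_const_nhds.add ?_
          simpa using hlim' 1
      _ = _ := by rw [add_zero]
  calc μH[(d:ℝ)] A = 2 * (μH[(d:ℝ)] A * ENNReal.ofReal (1/2)) := by
        rw [mul_left_comm]
        have : (2 : ℝ≥0∞) * ENNReal.ofReal (1/2) = 1 := by
          rw [← ENNReal.ofReal_ofNat, ← ENNReal.ofReal_mul (by norm_num)]; norm_num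
        rw [this, mul_one]
    _ ≤ 2 * (2 ^ (d+1) * μH[((d + 1 : ℕ) : ℝ)] T) := by gcongr
    _ = _ := by ring

end

/-! ### The cone over a deformation of the sphere -/

section

variable {n d : ℕ}

/-- The truncated open cone `{ρ y : 0 < ρ ≤ 1, y ∈ A}` over `A`. -/
def tcone (A : Set (Euc n)) : Set (Euc n) := image2 (fun (ρ : ℝ) y => ρ • y) (Ioc 0 1) A

/-- The `(d+1)`-dimensional measure of the truncated cone over `A`. -/
def kap (d : ℕ) (A : Set (Euc n)) : ℝ≥0∞ := μH[((d + 1 : ℕ) : ℝ)] (tcone A)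

lemma tcone_mono {A B : Set (Euc n)} (h : A ⊆ B) : tcone A ⊆ tcone B := image2_subset_left h

lemma kap_mono {A B : Set (Euc n)} (h : A ⊆ B) : kap d A ≤ kap d B := measure_mono (tcone_mono h)

lemma tcone_iUnion {κ : Type*} (A : κ → Set (Euc n)) : tcone (⋃ i, A i) = ⋃ i, tcone (A i) :=
  image2_iUnion_right _ _ _

lemma kap_iUnion_le {κ : Type*} [Countable κ] (A : κ → Set (Euc n)) :
    kap d (⋃ i, A i) ≤ ∑' i, kap d (A i) := by
  rw [kap, tcone_iUnion]; exact measure_iUnion_le _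

lemma kap_union_le (A B : Set (Euc n)) : kap d (A ∪ B) ≤ kap d A + kap d B := by
  rw [kap, tcone, image2_union_right]; exact measure_union_le _ _

/-- A non-sharp upper bound of the cone measure by `H^d`, valid for all sets. -/
lemma kap_le {A : Set (Euc n)} {R : ℝ} (hR : 0 < R) (hA : A ⊆ closedBall 0 R) :
    kap d A ≤ ENNReal.ofReal (2 ^ (d+1) * R) * μH[(d:ℝ)] A := by
  have := cyl_upper (d := d) A (a := 0) (l := 1) (c := R) (L := 1) one_pos hR one_pos
    (fun (ρ : ℝ) (y : Euc n) => ρ • y) ?_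
  · refine (measure_mono (image2_subset_right ?_)).trans (this.trans (le_of_eq ?_))
    · rw [zero_add]; exact Ioc_subset_Icc_self
    · simp
  · intro ρ hρ ρ' hρ' y hy y' hy'
    rw [zero_add] at hρ'
    have hy1 : ‖y‖ ≤ R := mem_closedBall_zero_iff.1 (hA hy)
    calc dist (ρ • y) (ρ' • y') = ‖(ρ - ρ') • y + ρ' • (y - y')‖ := by
          rw [dist_eq_norm]; congr 1; module
      _ ≤ |ρ - ρ'| * ‖y‖ + |ρ'| * ‖y - y'‖ := by
          refine (norm_add_le _ _).trans (le_of_eq ?_)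
          rw [norm_smul, norm_smul, Real.norm_eq_abs, Real.norm_eq_abs]
      _ ≤ |ρ - ρ'| * R + 1 * ‖y - y'‖ := by
          gcongr; rw [abs_le]; constructor <;> linarith [hρ'.1, hρ'.2]
      _ = _ := by rw [dist_eq_norm]; ring

/-- A non-sharp lower bound of the cone measure by `H^d`, valid for all subsets of the sphere. -/
lemma le_kap {A : Set (Euc n)} (hA : A ⊆ sphere 0 1) :
    μH[(d:ℝ)] A ≤ 2 ^ (d+2) * kap d A :=
  cone_lower A _ hA fun ρ hρ u hu =>
    ⟨ρ, ⟨by linarith [hρ.1], hρ.2⟩, u, hu, rfl⟩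

lemma normalize_smul {u : Euc n} (hu : ‖u‖ = 1) {ρ : ℝ} (hρ : 0 < ρ) :
    ‖ρ • u‖⁻¹ • (ρ • u) = u := by
  rw [norm_smul, hu, mul_one, Real.norm_of_nonneg hρ.le, smul_smul, inv_mul_cancel₀ hρ.ne', one_smul]

lemma cone_mem_iff {E : Set (Euc n)} (hE : IsConeAt0 E) {v : Euc n} (hv : v ≠ 0) :
    ‖v‖⁻¹ • v ∈ E ∩ sphere 0 1 ↔ v ∈ E := by
  have h0 : 0 < ‖v‖ := norm_pos_iff.2 hv
  constructor
  · intro h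
    have := hE _ h.1 ‖v‖ h0
    rwa [smul_smul, mul_inv_cancel₀ h0.ne', one_smul] at this
  · intro h
    refine ⟨hE v h _ (by positivity), ?_⟩
    rw [mem_sphere_zero_iff_norm, norm_smul, norm_inv, norm_norm, inv_mul_cancel₀ h0.ne']

/-- The cut-off used in the radial interpolation: `ρ` on `[0,1]`, then decreasing to `0` on
`[1, 1+δ]`. -/
def chi (δ ρ : ℝ) : ℝ := max 0 (min ρ ((1 + δ - ρ) / δ))

lemma chi_zero (δ : ℝ) : chi δ 0 = 0 := by simp [chi]

lemma chi_nonneg (δ ρ : ℝ) : 0 ≤ chi δ ρ := le_max_left _ _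

lemma chi_le {δ ρ : ℝ} (hρ : 0 ≤ ρ) : chi δ ρ ≤ ρ := max_le hρ (min_le_left _ _)

lemma chi_of_le {δ ρ : ℝ} (hδ : 0 < δ) (h0 : 0 ≤ ρ) (h1 : ρ ≤ 1) : chi δ ρ = ρ := by
  have : 1 ≤ (1 + δ - ρ) / δ := by rw [le_div_iff₀ hδ]; linarith
  rw [chi, min_eq_left (h1.trans this), max_eq_right h0]

lemma chi_of_ge {δ ρ : ℝ} (hδ : 0 < δ) (h1 : 1 + δ ≤ ρ) : chi δ ρ = 0 := by
  have : (1 + δ - ρ) / δ ≤ 0 := div_nonpos_of_nonpos_of_nonneg (by linarith) hδ.le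
  rw [chi, max_eq_left]
  exact (min_le_right _ _).trans this

lemma chi_le_one {δ ρ : ℝ} (hδ : 0 < δ) : chi δ ρ ≤ 1 := by
  refine max_le zero_le_one ?_
  rcases le_total ρ 1 with h | h
  · exact (min_le_left _ _).trans h
  · refine (min_le_right _ _).trans ?_
    rw [div_le_iff₀ hδ]; linarith

lemma chi_lip {δ : ℝ} (hδ : 0 < δ) (hδ1 : δ ≤ 1) (ρ ρ' : ℝ) :
    |chi δ ρ - chi δ ρ'| ≤ δ⁻¹ * |ρ - ρ'| := by
  have h1 : 1 ≤ δ⁻¹ := (one_le_inv₀ hδ).2 hδ1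
  unfold chi
  refine (abs_max_sub_max_le_max _ _ _ _).trans ?_
  refine max_le (by simp; positivity) ?_
  refine (abs_min_sub_min_le_max _ _ _ _).trans ?_
  refine max_le ?_ ?_
  · nlinarith [abs_nonneg (ρ - ρ')]
  · rw [← sub_div, abs_div, abs_of_pos hδ, div_eq_inv_mul]
    rw [show 1 + δ - ρ - (1 + δ - ρ') = -(ρ - ρ') by ring, abs_neg]

/-- The radial extension of a deformation `g` of the sphere: homogeneous of degree one in the unit
ball, interpolated with the identity over `1 ≤ |v| ≤ 1 + δ`, and the identity beyond. -/
def radExt (δ : ℝ) (g : Euc n → Euc n) (v : Euc n) : Euc n :=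
  v + chi δ ‖v‖ • (g (‖v‖⁻¹ • v) - ‖v‖⁻¹ • v)

lemma radExt_smul (δ : ℝ) (g : Euc n → Euc n) {u : Euc n} (hu : ‖u‖ = 1) {ρ : ℝ} (hρ : 0 < ρ) :
    radExt δ g (ρ • u) = ρ • u + chi δ ρ • (g u - u) := by
  have : ‖ρ • u‖ = ρ := by rw [norm_smul, hu, mul_one, Real.norm_of_nonneg hρ.le]
  unfold radExt
  rw [normalize_smul hu hρ, this]

/-- The radial extension is Lipschitz with a constant independent of `δ`: the slope `1/δ` of the
cut-off is compensated by the displacement `2δ` of `g`. -/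
lemma radExt_lip {δ : ℝ} (hδ : 0 < δ) (hδ1 : δ ≤ 1) {g : Euc n → Euc n} {Lg : ℝ≥0}
    (hg : LipschitzOnWith Lg g (sphere 0 1)) (hgd : ∀ u ∈ sphere (0 : Euc n) 1, dist (g u) u ≤ 2 * δ) :
    LipschitzWith (1 + (2 + 2 * (Lg + 1))) (radExt δ g) := by
  refine LipschitzWith.of_dist_le_mul fun v w => ?_
  set h : Euc n → Euc n := fun u => g u - u
  have hb : ∀ u ∈ sphere (0 : Euc n) 1, ‖h u‖ ≤ 2 * δ := fun u hu => by
    rw [← dist_eq_norm]; exact hgd u hu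
  have hl : ∀ u ∈ sphere (0 : Euc n) 1, ∀ u' ∈ sphere (0 : Euc n) 1,
      ‖h u - h u'‖ ≤ (Lg + 1) * ‖u - u'‖ := fun u hu u' hu' => by
    have h1 := hg.dist_le_mul u hu u' hu'
    calc ‖h u - h u'‖ = ‖(g u - g u') - (u - u')‖ := by congr 1; simp only [h]; abel
      _ ≤ ‖g u - g u'‖ + ‖u - u'‖ := norm_sub_le _ _
      _ ≤ Lg * ‖u - u'‖ + ‖u - u'‖ := by gcongr; simpa [dist_eq_norm] using h1
      _ = _ := by ring
  have hn : ∀ v : Euc n, v ≠ 0 → ‖v‖⁻¹ • v ∈ sphere (0 : Euc n) 1 := fun v hv => by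
    rw [mem_sphere_zero_iff_norm, norm_smul, norm_inv, norm_norm,
      inv_mul_cancel₀ (norm_pos_iff.2 hv).ne']
  have hz : ∀ w : Euc n, w ≠ 0 → ‖chi δ ‖w‖ • h (‖w‖⁻¹ • w)‖ ≤ (2 + 2 * (Lg + 1)) * ‖w‖ := by
    intro w hw
    rw [norm_smul, Real.norm_of_nonneg (chi_nonneg _ _)]
    have := chi_le (δ := δ) (norm_nonneg w)
    have h2 := hb _ (hn w hw)
    have h3 : (0:ℝ) ≤ Lg := Lg.2
    calc chi δ ‖w‖ * ‖h (‖w‖⁻¹ • w)‖ ≤ ‖w‖ * (2 * δ) := by gcongr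
      _ ≤ (2 + 2 * (Lg + 1)) * ‖w‖ := by nlinarith [norm_nonneg w, mul_nonneg h3 (norm_nonneg w)]
  have hmain : ‖chi δ ‖v‖ • h (‖v‖⁻¹ • v) - chi δ ‖w‖ • h (‖w‖⁻¹ • w)‖ ≤
      (2 + 2 * (Lg + 1)) * ‖v - w‖ := by
    rcases eq_or_ne v 0 with rfl | hv
    · rcases eq_or_ne w 0 with rfl | hw
      · simp
      · simpa [chi_zero] using hz w hw
    · rcases eq_or_ne w 0 with rfl | hw
      · simpa [chi_zero] using hz v hv
      · have hv0 : 0 < ‖v‖ := norm_pos_iff.2 hv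
        have hw0 : 0 < ‖w‖ := norm_pos_iff.2 hw
        set u := ‖v‖⁻¹ • v with hu
        set u' := ‖w‖⁻¹ • w with hu'
        have e1 : v = ‖v‖ • u := by rw [hu, smul_smul, mul_inv_cancel₀ hv0.ne', one_smul]
        have e2 : w = ‖w‖ • u' := by rw [hu', smul_smul, mul_inv_cancel₀ hw0.ne', one_smul]
        have hnorm : |‖v‖ - ‖w‖| ≤ ‖v - w‖ := abs_norm_sub_norm_le _ _
        have hu1 : ‖u‖ = 1 := mem_sphere_zero_iff_norm.1 (hn v hv)
        have e3 : ‖w‖ * ‖u - u'‖ ≤ 2 * ‖v - w‖ := by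
          calc ‖w‖ * ‖u - u'‖ = ‖‖w‖ • (u - u')‖ := by rw [norm_smul, norm_norm]
            _ = ‖(v - w) - (‖v‖ - ‖w‖) • u‖ := by
                have e4 : v - w = ‖v‖ • u - ‖w‖ • u' := by rw [← e1, ← e2]
                rw [e4]; congr 1; module
            _ ≤ ‖v - w‖ + ‖(‖v‖ - ‖w‖) • u‖ := norm_sub_le _ _
            _ ≤ _ := by rw [norm_smul, hu1, mul_one, Real.norm_eq_abs]; linarith
        calc ‖chi δ ‖v‖ • h u - chi δ ‖w‖ • h u'‖
            = ‖(chi δ ‖v‖ - chi δ ‖w‖) • h u + chi δ ‖w‖ • (h u - h u')‖ := by congr 1; module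
          _ ≤ |chi δ ‖v‖ - chi δ ‖w‖| * ‖h u‖ + chi δ ‖w‖ * ‖h u - h u'‖ := by
              refine (norm_add_le _ _).trans (le_of_eq ?_)
              rw [norm_smul, norm_smul, Real.norm_of_nonneg (chi_nonneg _ _), Real.norm_eq_abs]
          _ ≤ (δ⁻¹ * ‖v - w‖) * (2 * δ) + ‖w‖ * ((Lg + 1) * ‖u - u'‖) := by
              gcongr
              · exact (chi_lip hδ hδ1 _ _).trans (by gcongr)
              · exact hb _ (hn v hv)
              · exact chi_le hw0.le
              · exact hl _ (hn v hv) _ (hn w hw)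
          _ = 2 * ‖v - w‖ + (Lg + 1) * (‖w‖ * ‖u - u'‖) := by field_simp
          _ ≤ 2 * ‖v - w‖ + (Lg + 1) * (2 * ‖v - w‖) := by gcongr
          _ = _ := by ring
  calc dist (radExt δ g v) (radExt δ g w)
      = ‖(v - w) + (chi δ ‖v‖ • h (‖v‖⁻¹ • v) - chi δ ‖w‖ • h (‖w‖⁻¹ • w))‖ := by
        rw [dist_eq_norm]; congr 1; simp only [radExt, h]; abel
    _ ≤ ‖v - w‖ + (2 + 2 * (Lg + 1)) * ‖v - w‖ := (norm_add_le _ _).trans (by gcongr)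
    _ = _ := by rw [dist_eq_norm]; push_cast; ring

/-- If a competitor `φ` is the identity on `F \ F₁` then minimality of `F` compares `F₁` with
`φ(F₁)`. -/
lemma minimal_compare {m : ℕ} {F F₁ : Set (Euc n)} (hF : IsMinimalSet n m F) (hsub : F₁ ⊆ F)
    (hmeas : MeasurableSet F₁) {φ : Euc n → Euc n} (hφ : ∃ K : ℝ≥0, LipschitzWith K φ)
    (hb : IsBounded {x | φ x ≠ x}) (hid : ∀ x ∈ F \ F₁, φ x = x) :
    μH[(m:ℝ)] F₁ ≤ μH[(m:ℝ)] (φ '' F₁) := by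
  have h := hF.2.2 φ hφ hb
  have h1 : F₁ \ φ '' F₁ ⊆ F \ φ '' F := by
    rintro x ⟨hx, hx'⟩
    refine ⟨hsub hx, ?_⟩
    rintro ⟨y, hy, rfl⟩
    by_cases hy1 : y ∈ F₁
    · exact hx' ⟨y, hy1, rfl⟩
    · rw [hid y ⟨hy, hy1⟩] at hx; exact hy1 hx
  have h2 : φ '' F \ F ⊆ φ '' F₁ \ F₁ := by
    rintro _ ⟨⟨y, hy, rfl⟩, hx⟩
    by_cases hy1 : y ∈ F₁
    · exact ⟨⟨y, hy1, rfl⟩, fun h => hx (hsub h)⟩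
    · rw [hid y ⟨hy, hy1⟩] at hx; exact absurd hy hx
  calc μH[(m:ℝ)] F₁ ≤ μH[(m:ℝ)] (φ '' F₁ ∩ F₁) + μH[(m:ℝ)] (F₁ \ φ '' F₁) := by
        refine (measure_mono ?_).trans (measure_union_le _ _)
        intro x hx
        by_cases h : x ∈ φ '' F₁
        · exact Or.inl ⟨h, hx⟩
        · exact Or.inr ⟨hx, h⟩
    _ ≤ μH[(m:ℝ)] (φ '' F₁ ∩ F₁) + μH[(m:ℝ)] (φ '' F₁ \ F₁) := by
        exact add_le_add_right ((measure_mono h1).trans (h.trans (measure_mono h2))) _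
    _ = _ := measure_inter_add_sdiff _ hmeas

/-- Quasi-minimality of the spherical slice: a deformation `g` of the sphere that moves points by
at most `2δ` decreases the cone measure by at most an error of size `δ`. -/
lemma quasi_min {E : Set (Euc n)} (hE : IsMinimalSet n (d+1) E) (hc : IsConeAt0 E)
    {W : Set (Euc n)} (hW : W ⊆ E ∩ sphere 0 1) (hWm : MeasurableSet W)
    {δ : ℝ} (hδ : 0 < δ) (hδ1 : δ ≤ 1) {g : Euc n → Euc n} {Lg : ℝ≥0}
    (hg : LipschitzOnWith Lg g (sphere 0 1))
    (hgd : ∀ u ∈ sphere (0 : Euc n) 1, dist (g u) u ≤ 2 * δ)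
    (hid : ∀ u ∈ (E ∩ sphere 0 1) \ W, g u = u)
    {κ : Type*} [Countable κ] (A : κ → Set (Euc n)) (L : κ → ℝ≥0) (hA : W ⊆ ⋃ i, A i)
    (hL : ∀ i, LipschitzOnWith (L i) g (A i)) :
    kap d W ≤ kap d (g '' W) +
      ∑' i, ENNReal.ofReal (2 ^ (d+1) * 3 * (3 + L i) ^ d * δ) * μH[(d:ℝ)] (A i) := by
  set F₁ : Set (Euc n) := {v | v ≠ 0 ∧ ‖v‖⁻¹ • v ∈ W ∧ ‖v‖ ≤ 1 + δ} with hF₁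
  have hmeas : MeasurableSet F₁ := by
    have m1 : MeasurableSet {v : Euc n | v ≠ 0} := (measurableSet_singleton 0).compl
    have m2 : MeasurableSet {v : Euc n | ‖v‖⁻¹ • v ∈ W} :=
      (show Measurable fun v : Euc n => ‖v‖⁻¹ • v by fun_prop) hWm
    have m3 : MeasurableSet {v : Euc n | ‖v‖ ≤ 1 + δ} :=
      measurableSet_le measurable_norm measurable_const
    exact m1.inter (m2.inter m3)
  have hsub : F₁ ⊆ E := fun v hv => (cone_mem_iff hc hv.1).1 (hW hv.2.1)
  have hid' : ∀ v ∈ E \ F₁, radExt δ g v = v := by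
    rintro v ⟨hv, hv1⟩
    rcases eq_or_ne v 0 with rfl | hv0
    · simp [radExt, chi_zero]
    by_cases hn : ‖v‖ ≤ 1 + δ
    · have h1 : ‖v‖⁻¹ • v ∉ W := fun h => hv1 ⟨hv0, h, hn⟩
      rw [radExt, hid _ ⟨(cone_mem_iff hc hv0).2 hv, h1⟩, sub_self, smul_zero, add_zero]
    · rw [radExt, chi_of_ge hδ (not_le.1 hn).le, zero_smul, add_zero]
  have hb : IsBounded {v | radExt δ g v ≠ v} := by
    refine (isBounded_closedBall (x := (0 : Euc n)) (r := 1 + δ)).subset fun v hv => ?_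
    rw [mem_closedBall_zero_iff]
    by_contra h
    exact hv (by rw [radExt, chi_of_ge hδ (not_le.1 h).le, zero_smul, add_zero])
  -- the competitor `radExt δ g` maps the unit ball part to the cone over `g '' W`; the shell
  -- `1 ≤ |v| ≤ 1 + δ` contributes the error term
  have h1 := minimal_compare hE hsub hmeas ⟨_, radExt_lip hδ hδ1 hg hgd⟩ hb hid'
  have hn1 : ∀ w ∈ W, ‖w‖ = 1 := fun w hw => mem_sphere_zero_iff_norm.1 (hW hw).2
  have h2 : tcone W ⊆ F₁ := by
    rintro _ ⟨ρ, hρ, w, hw, rfl⟩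
    have hw1 := hn1 w hw
    have hnorm : ‖ρ • w‖ = ρ := by rw [norm_smul, hw1, mul_one, Real.norm_of_nonneg hρ.1.le]
    refine ⟨?_, ?_, ?_⟩
    · rw [← norm_pos_iff]; simpa only [hnorm] using hρ.1
    · simpa only [normalize_smul hw1 hρ.1] using hw
    · simp only [hnorm]; linarith [hρ.2]
  set Φ : ℝ → Euc n → Euc n := fun ρ w => ρ • w + chi δ ρ • (g w - w)
  have h3 : radExt δ g '' F₁ ⊆ tcone (g '' W) ∪ ⋃ i, image2 Φ (Icc 1 (1 + δ)) (A i ∩ W) := by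
    rintro _ ⟨v, ⟨hv0, hvW, hvn⟩, rfl⟩
    have hv1 := hn1 _ hvW
    have hp : 0 < ‖v‖ := norm_pos_iff.2 hv0
    have e1 : v = ‖v‖ • (‖v‖⁻¹ • v) := by rw [smul_smul, mul_inv_cancel₀ hp.ne', one_smul]
    set w := ‖v‖⁻¹ • v
    rw [e1, radExt_smul δ g hv1 hp]
    rcases le_total ‖v‖ 1 with hle | hge
    · left
      refine ⟨‖v‖, ⟨hp, hle⟩, g w, mem_image_of_mem _ hvW, ?_⟩
      rw [chi_of_le hδ hp.le hle]
      module
    · right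
      obtain ⟨i, hi⟩ := mem_iUnion.1 (hA hvW)
      exact mem_iUnion.2 ⟨i, ‖v‖, ⟨hge, hvn⟩, w, ⟨hi, hvW⟩, rfl⟩
  calc kap d W ≤ μH[((d+1:ℕ):ℝ)] (radExt δ g '' F₁) := (measure_mono h2).trans h1
    _ ≤ kap d (g '' W) + μH[((d+1:ℕ):ℝ)] (⋃ i, image2 Φ (Icc 1 (1 + δ)) (A i ∩ W)) :=
        (measure_mono h3).trans (measure_union_le _ _)
    _ ≤ kap d (g '' W) + ∑' i, μH[((d+1:ℕ):ℝ)] (image2 Φ (Icc 1 (1 + δ)) (A i ∩ W)) := by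
        gcongr; exact measure_iUnion_le _
    _ ≤ _ := by
        gcongr with i
        have hL0 : (0:ℝ) ≤ L i := (L i).2
        refine (cyl_upper (d := d) (A i ∩ W) (a := 1) (l := δ) (c := 3) (L := 3 + L i) hδ
          (by norm_num) (by positivity) Φ ?_).trans ?_
        · intro ρ hρ ρ' hρ' y hy y' hy'
          have hy1 := hn1 y hy.2
          have b1 : ‖g y - y‖ ≤ 2 * δ := by
            rw [← dist_eq_norm]; exact hgd y (hW hy.2).2
          have b2 : ‖g y - g y'‖ ≤ L i * ‖y - y'‖ := by
            simpa [dist_eq_norm] using (hL i).dist_le_mul y hy.1 y' hy'.1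
          have b3 : ρ' ≤ 2 := by linarith [hρ'.2]
          have b4 : 0 ≤ ρ' := by linarith [hρ'.1]
          calc dist (Φ ρ y) (Φ ρ' y') = ‖((ρ - ρ') • y + ρ' • (y - y')) +
                ((chi δ ρ - chi δ ρ') • (g y - y) + chi δ ρ' • ((g y - g y') - (y - y')))‖ := by
                rw [dist_eq_norm]; congr 1; simp only [Φ]; module
            _ ≤ (|ρ - ρ'| * 1 + ρ' * ‖y - y'‖) + (|chi δ ρ - chi δ ρ'| * ‖g y - y‖ +
                chi δ ρ' * (‖g y - g y'‖ + ‖y - y'‖)) := by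
                refine (norm_add_le _ _).trans (add_le_add ((norm_add_le _ _).trans ?_)
                  ((norm_add_le _ _).trans ?_))
                · rw [norm_smul, norm_smul, hy1, Real.norm_of_nonneg b4, Real.norm_eq_abs]
                · rw [norm_smul, norm_smul, Real.norm_of_nonneg (chi_nonneg _ _), Real.norm_eq_abs]
                  gcongr
                  · exact chi_nonneg _ _
                  · exact norm_sub_le _ _
            _ ≤ (|ρ - ρ'| * 1 + 2 * ‖y - y'‖) + ((δ⁻¹ * |ρ - ρ'|) * (2 * δ) +
                1 * (L i * ‖y - y'‖ + ‖y - y'‖)) := by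
                gcongr
                · exact chi_lip hδ hδ1 _ _
                · exact chi_le_one hδ
            _ = 3 * |ρ - ρ'| + (3 + L i) * dist y y' := by
                rw [dist_eq_norm]; field_simp; ring
        · gcongr
          exact inter_subset_left

end

/-! ### The Federer–Fleming retraction of ℝⁿ -/

section

variable {n d : ℕ}

/-- Centre of the cell `[2k-1, 2k+1]` containing `s`. -/
def ctr (s : ℝ) : ℝ := 2 * (round (s / 2) : ℝ)

/-- Distance to the even integers. -/
def tri (s : ℝ) : ℝ := |s - ctr s|

/-- Truncation to `[-1,1]`. -/
def clamp (x : ℝ) : ℝ := max (-1) (min x 1)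

/-- Radial expansion by `1/t`, truncated, in each cell `[2k-1,2k+1]`. -/
def ffS (s t : ℝ) : ℝ := ctr s + clamp ((s - ctr s) / t)

lemma abs_sub_ctr_le (s : ℝ) : |s - ctr s| ≤ 1 := by
  have := abs_sub_round (s / 2)
  rw [ctr, show s - 2 * (round (s/2) : ℝ) = 2 * (s/2 - round (s/2)) by ring, abs_mul]
  norm_num; linarith

lemma tri_nonneg (s : ℝ) : 0 ≤ tri s := abs_nonneg _

lemma tri_le_one (s : ℝ) : tri s ≤ 1 := abs_sub_ctr_le s

lemma tri_le_abs (s : ℝ) (k : ℤ) : tri s ≤ |s - 2 * k| := by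
  have := round_le (s / 2) k
  rw [tri, ctr, show s - 2 * (round (s/2) : ℝ) = 2 * (s/2 - round (s/2)) by ring,
    show s - 2 * (k:ℝ) = 2 * (s/2 - k) by ring, abs_mul, abs_mul]
  gcongr

lemma tri_lip (s s' : ℝ) : tri s ≤ tri s' + |s - s'| := by
  refine (tri_le_abs s (round (s'/2))).trans ?_
  have : s - 2 * (round (s'/2) : ℝ) = (s' - ctr s') + (s - s') := by rw [ctr]; ring
  rw [this]
  exact abs_add_le _ _

lemma clamp_lip (x y : ℝ) : |clamp x - clamp y| ≤ |x - y| := by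
  unfold clamp
  refine (abs_max_sub_max_le_max _ _ _ _).trans (max_le (by simp) ?_)
  refine (abs_min_sub_min_le_max _ _ _ _).trans (max_le le_rfl (by simp))

lemma clamp_le (x : ℝ) : clamp x ≤ 1 := max_le (by norm_num) (min_le_right _ _)

lemma le_clamp (x : ℝ) : -1 ≤ clamp x := le_max_left _ _

lemma clamp_of_ge {x : ℝ} (h : 1 ≤ x) : clamp x = 1 := by
  rw [clamp, min_eq_right h]; norm_num

lemma clamp_of_le {x : ℝ} (h : x ≤ -1) : clamp x = -1 := by
  rw [clamp, min_eq_left (h.trans (by norm_num)), max_eq_left h]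

lemma clamp_self {x : ℝ} (h1 : -1 ≤ x) (h2 : x ≤ 1) : clamp x = x := by
  rw [clamp, min_eq_left h2, max_eq_right h1]

lemma ffS_sub_le {s t : ℝ} (ht0 : 0 < t) (ht : t ≤ 1) : |ffS s t - s| ≤ 1 := by
  have h1 := abs_le.1 (abs_sub_ctr_le s)
  have ht1 : 1 ≤ t⁻¹ := (one_le_inv₀ ht0).2 ht
  have : ffS s t - s = clamp ((s - ctr s)/t) - (s - ctr s) := by rw [ffS]; ring
  rw [this]
  set σ := s - ctr s
  rw [div_eq_mul_inv]
  have c1 := clamp_le (σ * t⁻¹)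
  have c2 := le_clamp (σ * t⁻¹)
  rcases le_total 0 σ with h | h
  · have : 0 ≤ clamp (σ * t⁻¹) := le_max_of_le_right (le_min (by positivity) zero_le_one)
    rw [abs_le]; constructor <;> linarith
  · have : clamp (σ * t⁻¹) ≤ 0 := max_le (by norm_num) ((min_le_left _ _).trans
      (mul_nonpos_of_nonpos_of_nonneg h (by positivity)))
    rw [abs_le]; constructor <;> linarith

lemma ffS_mono_lip {s s' t : ℝ} (ht0 : 0 < t) (ht : t ≤ 1) (hs : s ≤ s') :
    |ffS s t - ffS s' t| ≤ (s' - s) / t := by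
  have ht1 : 1 ≤ t⁻¹ := (one_le_inv₀ ht0).2 ht
  have hr : round (s/2) ≤ round (s'/2) := by
    rw [round_eq, round_eq]; exact Int.floor_mono (by linarith)
  rcases hr.eq_or_lt with h | h
  · have hc : ctr s = ctr s' := by rw [ctr, ctr, h]
    rw [ffS, ffS, hc]
    calc |ctr s' + clamp ((s - ctr s') / t) - (ctr s' + clamp ((s' - ctr s') / t))|
        = |clamp ((s - ctr s') / t) - clamp ((s' - ctr s') / t)| := by congr 1; ring
      _ ≤ |(s - ctr s') / t - (s' - ctr s') / t| := clamp_lip _ _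
      _ = |(s' - s) / t| := by rw [← abs_neg]; congr 1; ring
      _ = _ := abs_of_nonneg (div_nonneg (by linarith) ht0.le)
  · have h1 : (round (s/2) : ℝ) + 1 ≤ round (s'/2) := by exact_mod_cast h
    have hc : ctr s + 2 ≤ ctr s' := by rw [ctr, ctr]; linarith
    have b1 := abs_le.1 (abs_sub_ctr_le s)
    have b2 := abs_le.1 (abs_sub_ctr_le s')
    have k1 : 1 - clamp ((s - ctr s) / t) ≤ (1 - (s - ctr s)) / t := by
      have h0 : clamp (1/t) = 1 := clamp_of_ge (by rw [one_div]; exact ht1)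
      have := (le_abs_self _).trans (clamp_lip (1/t) ((s - ctr s)/t))
      rw [h0, ← sub_div, abs_of_nonneg (div_nonneg (by linarith) ht0.le)] at this
      exact this
    have k2 : clamp ((s' - ctr s') / t) + 1 ≤ (s' - ctr s' + 1) / t := by
      have h0 : clamp (-1/t) = -1 := clamp_of_le (by rw [neg_div, one_div]; linarith)
      have := (le_abs_self _).trans (clamp_lip ((s' - ctr s')/t) (-1/t))
      rw [h0, ← sub_div, abs_of_nonneg (div_nonneg (by linarith) ht0.le)] at this
      rwa [sub_neg_eq_add, sub_neg_eq_add] at this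
    have c1 := clamp_le ((s - ctr s) / t)
    have c2 := le_clamp ((s' - ctr s') / t)
    have k3 : ctr s' - ctr s - 2 ≤ (ctr s' - ctr s - 2) / t := by
      rw [div_eq_mul_inv]; nlinarith
    rw [abs_sub_comm, abs_of_nonneg (by rw [ffS, ffS]; linarith), ffS, ffS]
    calc ctr s' + clamp ((s' - ctr s') / t) - (ctr s + clamp ((s - ctr s) / t))
        = (clamp ((s' - ctr s') / t) + 1) + (ctr s' - ctr s - 2) +
          (1 - clamp ((s - ctr s) / t)) := by ring
      _ ≤ (s' - ctr s' + 1) / t + (ctr s' - ctr s - 2) / t + (1 - (s - ctr s)) / t := by gcongr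
      _ = _ := by ring

lemma ffS_lip_left {s s' t : ℝ} (ht0 : 0 < t) (ht : t ≤ 1) :
    |ffS s t - ffS s' t| ≤ |s - s'| / t := by
  rcases le_total s s' with h | h
  · rw [abs_sub_comm s s', abs_of_nonneg (sub_nonneg.2 h)]; exact ffS_mono_lip ht0 ht h
  · rw [abs_sub_comm, abs_of_nonneg (sub_nonneg.2 h)]; exact ffS_mono_lip ht0 ht h

lemma ffS_lip_right {s t t' : ℝ} (ht0 : 0 < t) (htt : t ≤ t') :
    |ffS s t - ffS s t'| ≤ (t' - t) / t' := by
  have h1 := abs_le.1 (abs_sub_ctr_le s)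
  have ht0' : 0 < t' := ht0.trans_le htt
  have : ffS s t - ffS s t' = clamp ((s - ctr s)/t) - clamp ((s - ctr s)/t') := by
    rw [ffS, ffS]; ring
  rw [this]
  set σ := s - ctr s
  rcases le_total |σ| t with h | h
  · have hs : clamp (σ/t) = σ/t := by
      rw [abs_le] at h
      exact clamp_self (by rw [le_div_iff₀ ht0]; linarith) (by rw [div_le_iff₀ ht0]; linarith)
    have hs' : clamp (σ/t') = σ/t' := by
      rw [abs_le] at h
      exact clamp_self (by rw [le_div_iff₀ ht0']; linarith) (by rw [div_le_iff₀ ht0']; linarith)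
    rw [hs, hs']
    have e : σ/t - σ/t' = (σ / t) * ((t'-t)/t') := by field_simp
    rw [e, abs_mul, abs_div, abs_of_pos ht0, abs_of_nonneg (div_nonneg (sub_nonneg.2 htt) ht0'.le)]
    have : |σ|/t ≤ 1 := (div_le_one ht0).2 h
    have h3 : 0 ≤ (t'-t)/t' := div_nonneg (sub_nonneg.2 htt) ht0'.le
    nlinarith
  · have hq : (t' - t)/t' = 1 - t/t' := by field_simp
    have hq1 : t / t' ≤ 1 := (div_le_one ht0').2 htt
    rcases le_total 0 σ with h0 | h0
    · rw [abs_of_nonneg h0] at h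
      rw [clamp_of_ge (by rw [le_div_iff₀ ht0]; linarith), hq]
      have : t/t' ≤ clamp (σ/t') := le_max_of_le_right (le_min (by gcongr) hq1)
      have c1 := clamp_le (σ / t')
      rw [abs_le]; constructor <;> linarith
    · rw [abs_of_nonpos h0] at h
      rw [clamp_of_le (by rw [div_le_iff₀ ht0]; linarith), hq]
      have : clamp (σ/t') ≤ -(t/t') := by
        refine max_le (by linarith) ((min_le_left _ _).trans ?_)
        rw [← neg_div]; gcongr; linarith
      have c1 := le_clamp (σ / t')
      rw [abs_le]; constructor <;> linarith

lemma ffS_lip {s s' t t' t₀ : ℝ} (h0 : 0 < t₀) (h1 : t₀ ≤ t) (h1' : t₀ ≤ t') (h2 : t ≤ 1) : |ffS s t - ffS s' t'| ≤ (|s - s'| + |t - t'|) / t₀ := by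
  have a1 : |ffS s t - ffS s' t| ≤ |s - s'| / t₀ :=
    (ffS_lip_left (h0.trans_le h1) h2).trans (by gcongr)
  have a2 : |ffS s' t - ffS s' t'| ≤ |t - t'| / t₀ := by
    rcases le_total t t' with h | h
    · refine (ffS_lip_right (h0.trans_le h1) h).trans ?_
      rw [abs_sub_comm, abs_of_nonneg (sub_nonneg.2 h)]
      have : 0 ≤ t' - t := by linarith
      gcongr
    · rw [abs_sub_comm]
      refine (ffS_lip_right (h0.trans_le h1') h).trans ?_
      rw [abs_of_nonneg (sub_nonneg.2 h)]
      have : 0 ≤ t - t' := by linarith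
      gcongr
  calc |ffS s t - ffS s' t'| ≤ |ffS s t - ffS s' t| + |ffS s' t - ffS s' t'| := abs_sub_le _ _ _
    _ ≤ _ := by rw [add_div]; exact add_le_add a1 a2

lemma ctr_int (s : ℝ) : ∃ k : ℤ, ctr s = k := ⟨2 * round (s/2), by simp [ctr]⟩

lemma ffS_of_ge {s t : ℝ} (ht0 : 0 < t) (h : t ≤ tri s) : ∃ k : ℤ, ffS s t = k := by
  obtain ⟨k, hk⟩ := ctr_int s
  rw [tri] at h
  rcases le_total 0 (s - ctr s) with h0 | h0
  · rw [abs_of_nonneg h0] at h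
    refine ⟨k + 1, ?_⟩
    rw [ffS, clamp_of_ge (by rwa [le_div_iff₀ ht0, one_mul]), hk]; push_cast; ring
  · rw [abs_of_nonpos h0] at h
    refine ⟨k - 1, ?_⟩
    rw [ffS, clamp_of_le (by rw [div_le_iff₀ ht0]; linarith), hk]; push_cast; ring

/-- The subsets of `Fin n` with `d+1` elements. -/
def subs (n d : ℕ) : Finset (Finset (Fin n)) := Finset.powersetCard (d+1) Finset.univ

lemma subs_nonempty (h : d + 1 ≤ n) : (subs n d).Nonempty :=
  Finset.powersetCard_nonempty.2 (by simpa using h)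

/-- The `(d+1)`-st smallest of the numbers `tri (x i)`: essentially the distance to the skeleton
dual to the `d`-skeleton of the cubical grid. -/
def tau (d : ℕ) (x : Fin n → ℝ) : ℝ :=
  if h : d + 1 ≤ n then (subs n d).inf' (subs_nonempty h)
    (fun I => if hI : I.Nonempty then I.sup' hI (fun i => tri (x i)) else 0) else 0

lemma mem_subs {I : Finset (Fin n)} : I ∈ subs n d ↔ I.card = d + 1 := by
  simp [subs, Finset.mem_powersetCard]

lemma subs_ne {I : Finset (Fin n)} (h : I ∈ subs n d) : I.Nonempty := by
  rw [← Finset.card_pos, mem_subs.1 h]; omega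

lemma tau_exists (h : d + 1 ≤ n) (x : Fin n → ℝ) : ∃ I ∈ subs n d, (∀ i ∈ I, tri (x i) ≤ tau d x) ∧
    ∃ i ∈ I, tri (x i) = tau d x := by
  obtain ⟨I, hI, heq⟩ := Finset.exists_mem_eq_inf' (subs_nonempty h)
    (fun I : Finset (Fin n) => if hI : I.Nonempty then I.sup' hI (fun i => tri (x i)) else 0)
  have hne := subs_ne hI
  rw [dif_pos hne] at heq
  have ht : tau d x = I.sup' hne (fun i => tri (x i)) := by rw [tau, dif_pos h, heq]
  refine ⟨I, hI, fun i hi => ?_, ?_⟩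
  · rw [ht]; exact Finset.le_sup' (fun i => tri (x i)) hi
  · obtain ⟨i, hi, he⟩ := Finset.exists_mem_eq_sup' hne (fun i => tri (x i))
    exact ⟨i, hi, by rw [ht, he]⟩

lemma tau_le_of (h : d + 1 ≤ n) (x : Fin n → ℝ) {I : Finset (Fin n)} (hI : I ∈ subs n d) {c : ℝ}
    (hc : ∀ i ∈ I, tri (x i) ≤ c) : tau d x ≤ c := by
  have hne := subs_ne hI
  rw [tau, dif_pos h]
  refine (Finset.inf'_le _ hI).trans ?_
  rw [dif_pos hne]
  exact Finset.sup'_le _ _ hc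

lemma tau_nonneg (x : Fin n → ℝ) : 0 ≤ tau d x := by
  by_cases h : d + 1 ≤ n
  · obtain ⟨I, -, -, i, -, hi⟩ := tau_exists h x
    rw [← hi]; exact tri_nonneg _
  · rw [tau, dif_neg h]

lemma tau_le_one (x : Fin n → ℝ) : tau d x ≤ 1 := by
  by_cases h : d + 1 ≤ n
  · obtain ⟨I, -, -, i, -, hi⟩ := tau_exists h x
    rw [← hi]; exact tri_le_one _
  · rw [tau, dif_neg h]; exact zero_le_one

lemma tau_le_add (x y : Fin n → ℝ) : tau d x ≤ tau d y + dist x y := by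
  by_cases h : d + 1 ≤ n
  · obtain ⟨I, hI, hle, -⟩ := tau_exists h y
    refine tau_le_of h x hI fun i hi => (tri_lip _ (y i)).trans (add_le_add (hle i hi) ?_)
    rw [← Real.dist_eq]; exact dist_le_pi_dist x y i
  · rw [tau, tau, dif_neg h, dif_neg h, zero_add]; exact dist_nonneg

lemma abs_tau_sub_le (x y : Fin n → ℝ) : |tau d x - tau d y| ≤ dist x y := by
  rw [abs_le]
  have h1 := tau_le_add (d := d) x y
  have h2 := tau_le_add (d := d) y x
  rw [dist_comm] at h2
  constructor <;> linarith

lemma tau_continuous : Continuous (tau (n := n) d) :=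
  (LipschitzWith.of_dist_le_mul (K := 1) fun x y => by
    rw [Real.dist_eq, NNReal.coe_one, one_mul]; exact abs_tau_sub_le x y).continuous

/-- Few coordinates lie below `tau`. -/
lemma card_lt_tau (h : d + 1 ≤ n) (x : Fin n → ℝ) :
    (Finset.univ.filter fun i => tri (x i) < tau d x).card ≤ d := by
  by_contra hc
  push Not at hc
  obtain ⟨I, hIs, hIc⟩ := Finset.exists_subset_card_eq (Nat.succ_le_of_lt hc)
  have hI : I ∈ subs n d := mem_subs.2 hIc
  obtain ⟨i, hi, he⟩ := Finset.exists_mem_eq_sup' (subs_ne hI) (fun i => tri (x i))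
  have h1 : tau d x ≤ tri (x i) := by
    refine tau_le_of h x hI fun j hj => ?_
    rw [← he]; exact Finset.le_sup' (fun i => tri (x i)) hj
  have := (Finset.mem_filter.1 (hIs hi)).2
  linarith

/-- The Federer–Fleming retraction onto the `d`-skeleton, regularised at scale `η`. -/
def ffG (d : ℕ) (η : ℝ) (x : Fin n → ℝ) : Fin n → ℝ := fun j => ffS (x j) (max (tau d x) η)

lemma ffG_sub_le {η : ℝ} (h0 : 0 < η) (h1 : η ≤ 1) (x : Fin n → ℝ) : dist (ffG d η x) x ≤ 1 := by
  rw [dist_pi_le_iff zero_le_one]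
  intro j
  rw [Real.dist_eq]
  exact ffS_sub_le (lt_max_of_lt_right h0) (max_le (tau_le_one x) h1)

/-- The retraction has Lipschitz constant `2/t` on the set at distance at least `t` from the dual skeleton. -/
lemma ffG_lip {η t : ℝ} (h1 : η ≤ 1) (ht0 : 0 < t) {x y : Fin n → ℝ}
    (hx : t ≤ max (tau d x) η) (hy : t ≤ max (tau d y) η) :
    dist (ffG d η x) (ffG d η y) ≤ 2 / t * dist x y := by
  rw [dist_pi_le_iff (by positivity)]
  intro j
  rw [Real.dist_eq]
  refine (ffS_lip ht0 hx hy (max_le (tau_le_one x) h1)).trans ?_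
  have a1 : |x j - y j| ≤ dist x y := by rw [← Real.dist_eq]; exact dist_le_pi_dist x y j
  have a2 : |max (tau d x) η - max (tau d y) η| ≤ dist x y := by
    refine (abs_max_sub_max_le_max _ _ _ _).trans (max_le (abs_tau_sub_le x y) ?_)
    simp
  calc _ ≤ (dist x y + dist x y) / t := by gcongr
    _ = _ := by ring

/-- Away from the dual skeleton, the image lies in the `d`-skeleton, and the free coordinates are
quotients of the deviations from the cell centres. -/
lemma ffG_form (h : d + 1 ≤ n) {η : ℝ} (h0 : 0 < η) {x : Fin n → ℝ} (hx : η ≤ tau d x) :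
    ∃ (e : Fin d → Fin n) (j : Fin n) (c : Fin n → ℤ), Function.Injective e ∧ (∀ l, e l ≠ j) ∧
      |x j - ctr (x j)| = tau d x ∧
      ffG d η x = Function.extend e
        (fun l => ctr (x (e l)) + clamp ((x (e l) - ctr (x (e l))) / tau d x)) (fun i => (c i : ℝ)) := by
  obtain ⟨-, -, -, j, -, hj⟩ := tau_exists h x
  set I := Finset.univ.filter fun i => tri (x i) < tau d x with hI
  have hIj : I ⊆ Finset.univ.erase j := by
    intro i hi
    have := (Finset.mem_filter.1 hi).2
    simp only [Finset.mem_erase, Finset.mem_univ, and_true]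
    rintro rfl; linarith
  obtain ⟨I', hII', hI'j, hcard⟩ := Finset.exists_subsuperset_card_eq hIj (card_lt_tau h x)
    (by rw [Finset.card_erase_of_mem (Finset.mem_univ _)]; simp; omega)
  have htau : 0 < tau d x := h0.trans_le hx
  have hc : ∀ i, ∃ c : ℤ, i ∉ I → ffS (x i) (tau d x) = c := by
    intro i
    by_cases hi : i ∈ I
    · exact ⟨0, fun h => absurd hi h⟩
    · have : tau d x ≤ tri (x i) := by
        by_contra hlt
        exact hi (Finset.mem_filter.2 ⟨Finset.mem_univ _, not_le.1 hlt⟩)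
      obtain ⟨k, hk⟩ := ffS_of_ge htau this
      exact ⟨k, fun _ => hk⟩
  choose c hc using hc
  have hinj : Function.Injective (I'.orderEmbOfFin hcard) := (I'.orderEmbOfFin hcard).injective
  refine ⟨I'.orderEmbOfFin hcard, j, c, hinj, ?_, hj, ?_⟩
  · intro l hl
    have := hI'j (Finset.orderEmbOfFin_mem I' hcard l)
    rw [hl] at this
    simp at this
  · ext i
    simp only [ffG, max_eq_left hx]
    by_cases hi : i ∈ I'
    · have : i ∈ Set.range (I'.orderEmbOfFin hcard) := by
        rw [Finset.range_orderEmbOfFin]; exact hi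
      obtain ⟨l, rfl⟩ := this
      rw [hinj.extend_apply]
      rfl
    · rw [Function.extend_apply']
      · exact hc i fun h => hi (hII' h)
      · rintro ⟨l, rfl⟩
        exact hi (Finset.orderEmbOfFin_mem I' hcard l)

end

/-! ### Skeleta of the integer grid -/

section

variable {n d : ℕ}

lemma extend_lip (e : Fin d → Fin n) (c : Fin n → ℝ) :
    LipschitzWith 1 (fun q : Fin d → ℝ => Function.extend e q c) := by
  refine LipschitzWith.of_dist_le_mul fun q q' => ?_
  rw [NNReal.coe_one, one_mul, dist_pi_le_iff dist_nonneg]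
  intro i
  simp only [Function.extend_def]
  split_ifs with h
  · exact dist_le_pi_dist q q' _
  · simp

/-- A bounded piece of the `d`-skeleton of the integer grid of `ℝⁿ`. -/
def skel (n d : ℕ) (R : ℝ) : Set (Fin n → ℝ) :=
  ⋃ (e : Fin d → Fin n) (c : Fin n → Finset.Icc (-⌈R⌉) ⌈R⌉),
    (fun q : Fin d → ℝ => Function.extend e q (fun i => ((c i : ℤ) : ℝ))) '' closedBall 0 R

lemma skel_lt_top (R : ℝ) : μH[(d:ℝ)] (skel n d R) < ⊤ := by
  refine (measure_iUnion_le _).trans_lt ?_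
  rw [tsum_fintype (L := .unconditional _)]
  refine ENNReal.sum_lt_top.2 fun e _ => (measure_iUnion_le _).trans_lt ?_
  rw [tsum_fintype (L := .unconditional _)]
  refine ENNReal.sum_lt_top.2 fun c _ => ?_
  refine ((extend_lip e _).hausdorffMeasure_image_le (by positivity) _).trans_lt ?_
  rw [← vol_pi_eq]
  simp only [ENNReal.coe_one, ENNReal.one_rpow, one_mul]
  exact measure_closedBall_lt_top

lemma ffG_mem_skel (h : d + 1 ≤ n) {η R : ℝ} (h0 : 0 < η) (h1 : η ≤ 1) {x : Fin n → ℝ}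
    (hx : η ≤ tau d x) (hR : ‖x‖ ≤ R) : ffG d η x ∈ skel n d (R + 1) := by
  obtain ⟨e, j, c, he, hj, -, hG⟩ := ffG_form h h0 hx
  have hn : ∀ i, |ffG d η x i| ≤ R + 1 := by
    intro i
    have h2 : ‖ffG d η x‖ ≤ R + 1 := by
      have := ffG_sub_le (d := d) h0 h1 x
      rw [dist_eq_norm] at this
      calc ‖ffG d η x‖ = ‖x + (ffG d η x - x)‖ := by congr 1; abel
        _ ≤ _ := (norm_add_le _ _).trans (by gcongr)
    exact (norm_le_pi_norm (ffG d η x) i).trans h2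
  have hR1 : 0 ≤ R + 1 := by linarith [norm_nonneg x]
  set c' : Fin n → ℤ := fun i => if i ∈ Set.range e then 0 else c i with hc'
  have hc'R : ∀ i, c' i ∈ Finset.Icc (-⌈R+1⌉) ⌈R+1⌉ := by
    intro i
    have hce : 0 ≤ ⌈R+1⌉ := Int.ceil_nonneg hR1
    by_cases hi : i ∈ Set.range e
    · simp only [hc', hi, if_true, Finset.mem_Icc]; omega
    · have h3 := hn i
      rw [hG, Function.extend_apply' _ _ _ (by simpa using hi)] at h3
      simp only [hc', hi, if_false, Finset.mem_Icc]
      rw [abs_le] at h3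
      have h4 : (c i : ℝ) ≤ ⌈R+1⌉ := h3.2.trans (Int.le_ceil _)
      have h5 : (-⌈R+1⌉ : ℝ) ≤ c i := by have := Int.le_ceil (R+1); linarith
      exact ⟨by exact_mod_cast h5, by exact_mod_cast h4⟩
  refine mem_iUnion₂.2 ⟨e, fun i => ⟨c' i, hc'R i⟩, fun l => ffG d η x (e l), ?_, ?_⟩
  · rw [mem_closedBall_zero_iff, pi_norm_le_iff_of_nonneg hR1]
    exact fun l => hn (e l)
  · ext i
    by_cases hi : i ∈ Set.range e
    · obtain ⟨l, rfl⟩ := hi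
      simp only [he.extend_apply]
    · simp only [Function.extend_apply' _ _ _ (show ¬ ∃ l, e l = i by simpa using hi)]
      rw [hG, Function.extend_apply' _ _ _ (by simpa using hi)]
      simp only [hc', hi, if_false]

/-! ### Images of purely unrectifiable sets under random retractions -/

section kill
variable {ι : Type*} [Fintype ι]

/-- The graph of the quotients `(a_{e l}·x)/(a_j·x)` along `S`, as a set of pairs (matrix, value). -/
def quotSet (S : Set (ι → ℝ)) (e : Fin d → Fin n) (j : Fin n) (t : ℝ) :
    Set ((Fin n → ι → ℝ) × (Fin d → ℝ)) :=
  {w | ∃ x ∈ S, t ≤ |pB w.1 x j| ∧ ∀ l, w.2 l * pB w.1 x j = pB w.1 x (e l)}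

lemma pB_apply {m : ℕ} (B : Fin m → ι → ℝ) (x : ι → ℝ) (j : Fin m) : pB B x j = ∑ i, B j i * x i := rfl

lemma isClosed_quotSet {S : Set (ι → ℝ)} (hS : IsCompact S) (e : Fin d → Fin n) (j : Fin n) (t : ℝ) :
    IsClosed (quotSet S e j t) := by
  refine isClosed_exists_compact (P := {z : ((Fin n → ι → ℝ) × (Fin d → ℝ)) × (ι → ℝ) |
    t ≤ |pB z.1.1 z.2 j| ∧ ∀ l, z.1.2 l * pB z.1.1 z.2 j = pB z.1.1 z.2 (e l)}) hS ?_
  have hc : ∀ i, Continuous fun z : ((Fin n → ι → ℝ) × (Fin d → ℝ)) × (ι → ℝ) =>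
      pB z.1.1 z.2 i := by
    intro i; simp only [pB_apply]; fun_prop
  have c1 : IsClosed {z : ((Fin n → ι → ℝ) × (Fin d → ℝ)) × (ι → ℝ) | t ≤ |pB z.1.1 z.2 j|} :=
    isClosed_le continuous_const (hc j).abs
  have c2 : IsClosed {z : ((Fin n → ι → ℝ) × (Fin d → ℝ)) × (ι → ℝ) |
      ∀ l, z.1.2 l * pB z.1.1 z.2 j = pB z.1.1 z.2 (e l)} := by
    rw [Set.ofPred_forall]
    refine isClosed_iInter fun l => isClosed_eq (Continuous.mul (by fun_prop) (hc j)) (hc _)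
  exact c1.inter c2

/-- Pure unrectifiability is invariant under bi-Lipschitz maps. -/
lemma PU_image {X Y : Type*} [MetricSpace X] [MeasurableSpace X] [BorelSpace X]
    [MetricSpace Y] [MeasurableSpace Y] [BorelSpace Y] {S : Set X} (hS : PU d S) {f : X → Y}
    {K c : ℝ≥0} (hf : LipschitzOnWith K f S)
    (hf' : ∀ x ∈ S, ∀ y ∈ S, dist x y ≤ c * dist (f x) (f y)) : PU d (f '' S) := by
  rintro F hF ⟨p, ⟨Kp, hp⟩, cp, hcp⟩
  set F' := S ∩ f ⁻¹' F with hF'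
  have hFF : F = f '' F' := by
    rw [hF', image_inter_preimage, inter_eq_self_of_subset_right hF]
  have hmaps : MapsTo f F' F := fun x hx => hx.2
  have hnull : μH[(d:ℝ)] F' = 0 := by
    refine hS F' inter_subset_left ⟨p ∘ f, ⟨Kp * K, hp.comp (hf.mono inter_subset_left) hmaps⟩,
      c * cp, fun x hx y hy => ?_⟩
    refine (hf' x hx.1 y hy.1).trans ?_
    have := hcp _ hx.2 _ hy.2
    push_cast
    rw [mul_assoc]
    gcongr
    exact this
  rw [hFF, ← le_zero_iff]
  refine ((hf.mono inter_subset_left).hausdorffMeasure_image_le (by positivity)).trans ?_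
  rw [hnull, mul_zero]

lemma PU_zero_empty {X : Type*} [MetricSpace X] [MeasurableSpace X] [BorelSpace X] {S : Set X}
    (hS : PU 0 S) : S = ∅ := by
  by_contra h
  obtain ⟨x, hx⟩ := nonempty_iff_ne_empty.2 h
  have := hS {x} (by simpa using hx) ⟨fun _ => 0, ⟨0, by simp⟩, 0, by simp⟩
  rw [Nat.cast_zero, Measure.hausdorffMeasure_zero_singleton] at this
  exact one_ne_zero this

/-- For almost every matrix `A`, the quotients of the rows `e` by the row `j` map a purely
unrectifiable set to a null set. Once the row `j` is frozen, the division by `a_j·x` is a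
bi-Lipschitz projective change of chart (as `x i₀ = 1`), and the quotient is a linear projection of
the image, to which `besicovitch_federer` applies. -/
lemma ae_quot_null {S : Set (ι → ℝ)} (hS : IsCompact S) (hfin : μH[(d:ℝ)] S < ⊤) (hPU : PU d S)
    {i₀ : ι} (hi₀ : ∀ x ∈ S, x i₀ = 1) {e : Fin d → Fin n} (he : Function.Injective e) {j : Fin n} (hj : ∀ l, e l ≠ j) {t : ℝ}
    (ht : 0 < t) :
    ∀ᵐ A : Fin n → ι → ℝ, volume {q | (A, q) ∈ quotSet S e j t} = 0 := by
  rcases Nat.eq_zero_or_pos d with rfl | hd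
  · have : S = ∅ := PU_zero_empty hPU
    subst this
    simp [quotSet]
  have hmeas : MeasurableSet {A : Fin n → ι → ℝ | volume {q | (A, q) ∈ quotSet S e j t} = 0} :=
    (measurable_measure_prodMk_left (isClosed_quotSet hS e j t).measurableSet)
      (measurableSet_singleton 0)
  -- insertion of `d` rows in the positions `e`
  set L : (Fin d → ι → ℝ) →ₗ[ℝ] (Fin n → ι → ℝ) :=
    { toFun := fun B => Function.extend e B 0
      map_add' := fun B B' => by
        ext i k
        by_cases hi : ∃ l, e l = i
        · obtain ⟨l, rfl⟩ := hi; simp [he.extend_apply]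
        · simp [Function.extend_apply' _ _ _ hi]
      map_smul' := fun c B => by
        ext i k
        by_cases hi : ∃ l, e l = i
        · obtain ⟨l, rfl⟩ := hi; simp [he.extend_apply]
        · simp [Function.extend_apply' _ _ _ hi] } with hL
  refine ae_mem_of_ae_add_linearMap_mem L volume volume hmeas (fun A => ?_)
  -- freeze the row `j`
  set a : (ι → ℝ) → ℝ := fun x => pB A x j with ha
  have hac : Continuous a := by simp only [ha, pB_apply]; fun_prop
  set St := {x ∈ S | t ≤ |a x|} with hSt
  have hStc : IsCompact St := hS.inter_right (isClosed_le continuous_const hac.abs)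
  have haL : ∃ M : ℝ, 0 ≤ M ∧ ∀ x y, |a x - a y| ≤ M * dist x y := by
    refine ⟨∑ i, |A j i|, by positivity, fun x y => ?_⟩
    simp only [ha, pB_apply, ← Finset.sum_sub_distrib, ← mul_sub, Finset.sum_mul]
    refine (Finset.abs_sum_le_sum_abs _ _).trans (Finset.sum_le_sum fun i _ => ?_)
    rw [abs_mul, ← Real.dist_eq]
    gcongr
    exact dist_le_pi_dist x y i
  obtain ⟨M, hM0, hM⟩ := haL
  obtain ⟨R, hR0, hR⟩ : ∃ R : ℝ, 0 ≤ R ∧ ∀ x ∈ S, ‖x‖ ≤ R := by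
    obtain ⟨R, hR⟩ := hS.isBounded.exists_norm_le
    exact ⟨max R 0, le_max_right _ _, fun x hx => (hR x hx).trans (le_max_left _ _)⟩
  set Ψ : (ι → ℝ) → (ι → ℝ) := fun x => (a x)⁻¹ • x with hΨ
  have haR : ∀ x ∈ S, |a x| ≤ M * R := by
    intro x hx
    have h1 := hM x 0
    have h2 : a 0 = 0 := by simp [ha, pB_apply]
    rw [h2, sub_zero, dist_zero_right] at h1
    exact h1.trans (by gcongr; exact hR x hx)
  have hapos : ∀ x ∈ St, 0 < |a x| := fun x hx => ht.trans_le hx.2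
  have hΨl : LipschitzOnWith (Real.toNNReal (t⁻¹ + R * (M * (t⁻¹ * t⁻¹)))) Ψ St := by
    refine LipschitzOnWith.of_dist_le_mul fun x hx y hy => ?_
    rw [Real.coe_toNNReal _ (by positivity)]
    have hx0 := hapos x hx
    have hy0 := hapos y hy
    have hxi : |(a x)⁻¹| ≤ t⁻¹ := by rw [abs_inv]; gcongr; exact hx.2
    have hyi : |(a y)⁻¹| ≤ t⁻¹ := by rw [abs_inv]; gcongr; exact hy.2
    have e2 : (a x)⁻¹ - (a y)⁻¹ = (a y - a x) * ((a x)⁻¹ * (a y)⁻¹) := by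
      have := abs_pos.1 hx0; have := abs_pos.1 hy0
      field_simp
    calc dist (Ψ x) (Ψ y) = ‖(a x)⁻¹ • (x - y) + ((a x)⁻¹ - (a y)⁻¹) • y‖ := by
          rw [dist_eq_norm]; congr 1; simp only [hΨ]; module
      _ ≤ |(a x)⁻¹| * ‖x - y‖ + |(a x)⁻¹ - (a y)⁻¹| * ‖y‖ := by
          refine (norm_add_le _ _).trans (le_of_eq ?_)
          rw [norm_smul, norm_smul, Real.norm_eq_abs, Real.norm_eq_abs]
      _ ≤ t⁻¹ * dist x y + (M * dist x y * (t⁻¹ * t⁻¹)) * R := by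
          rw [dist_eq_norm, e2, abs_mul, abs_mul]
          gcongr
          · rw [abs_sub_comm, ← dist_eq_norm]; exact hM x y
          · exact hR y hy.1
      _ = _ := by ring
  -- since `x i₀ = 1`, the point `x` is recovered as `Ψ x / (Ψ x) i₀`
  have hΨa : ∀ x ∈ St, ∀ y ∈ St, dist x y ≤
      (Real.toNNReal (M * R + (M * R) * (M * R) * (t⁻¹ * R)) : ℝ) * dist (Ψ x) (Ψ y) := by
    intro x hx y hy
    rw [Real.coe_toNNReal _ (by positivity)]
    have hx0 := abs_pos.1 (hapos x hx)
    have hy0 := abs_pos.1 (hapos y hy)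
    have ex : Ψ x i₀ = (a x)⁻¹ := by simp [hΨ, hi₀ x hx.1]
    have ey : Ψ y i₀ = (a y)⁻¹ := by simp [hΨ, hi₀ y hy.1]
    have e1 : |(a x)⁻¹ - (a y)⁻¹| ≤ dist (Ψ x) (Ψ y) := by
      rw [← ex, ← ey, ← Real.dist_eq]; exact dist_le_pi_dist _ _ _
    have e2 : a x - a y = (a x * a y) * (-((a x)⁻¹ - (a y)⁻¹)) := by field_simp; ring
    have e3 : ‖Ψ y‖ ≤ t⁻¹ * R := by
      simp only [hΨ, norm_smul, norm_inv, Real.norm_eq_abs]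
      gcongr
      · exact hy.2
      · exact hR y hy.1
    calc dist x y = ‖a x • (Ψ x - Ψ y) + (a x - a y) • Ψ y‖ := by
          rw [dist_eq_norm]; congr 1
          have r1 : a x • Ψ x = x := by simp [hΨ, smul_smul, hx0]
          have r2 : a y • Ψ y = y := by simp [hΨ, smul_smul, hy0]
          rw [smul_sub, sub_smul, r1, r2]; abel
      _ ≤ |a x| * ‖Ψ x - Ψ y‖ + |a x - a y| * ‖Ψ y‖ := by
          refine (norm_add_le _ _).trans (le_of_eq ?_)
          rw [norm_smul, norm_smul, Real.norm_eq_abs, Real.norm_eq_abs]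
      _ ≤ (M * R) * dist (Ψ x) (Ψ y) + ((M * R) * (M * R) * dist (Ψ x) (Ψ y)) * (t⁻¹ * R) := by
          rw [← dist_eq_norm, e2, abs_mul, abs_mul, abs_neg]
          gcongr
          · exact haR x hx.1
          · exact haR x hx.1
          · exact haR y hy.1
      _ = _ := by ring
  have hPUt : PU d (Ψ '' St) := by
    refine PU_image (fun F hF h => hPU F (hF.trans (sep_subset _ _)) h) hΨl hΨa
  have hfint : μH[(d:ℝ)] (Ψ '' St) < ⊤ := by
    refine (hΨl.hausdorffMeasure_image_le (by positivity)).trans_lt ?_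
    refine ENNReal.mul_lt_top (ENNReal.rpow_lt_top_of_nonneg (by positivity) ENNReal.coe_ne_top) ?_
    exact (measure_mono (sep_subset _ _)).trans_lt hfin
  have hBF := besicovitch_federer hd (Ψ '' St) (hStc.image_of_continuousOn hΨl.continuousOn) hfint hPUt
  have hBF' : ∀ᵐ B : Fin d → ι → ℝ, volume (pB ((fun l => A (e l)) + B) '' (Ψ '' St)) = 0 :=
    (measurePreserving_add_left volume (fun l => A (e l))).quasiMeasurePreserving.ae hBF
  filter_upwards [hBF'] with B hB
  refine measure_mono_null ?_ hB
  rintro q ⟨x, hx, hxt, hq⟩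
  have hrow : pB (A + L B) x j = a x := by
    have : L B j = 0 := Function.extend_apply' _ _ _ (by rintro ⟨l, hl⟩; exact hj l hl)
    simp only [ha, pB_apply, Pi.add_apply, this, Pi.zero_apply, add_zero]
  have hrow' : ∀ l, pB (A + L B) x (e l) = pB ((fun l => A (e l)) + B) x l := by
    intro l
    have : L B (e l) = B l := he.extend_apply _ _ _
    simp only [pB_apply, Pi.add_apply, this]
  simp only [hrow] at hxt hq
  have hxS : x ∈ St := ⟨hx, hxt⟩
  refine ⟨Ψ x, mem_image_of_mem _ hxS, ?_⟩
  have hx0 := abs_pos.1 (hapos x hxS)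
  ext l
  have h1 := hq l
  rw [hrow' l] at h1
  rw [← mul_right_cancel_iff_of_pos (abs_pos.2 hx0)]
  have h2 : pB ((fun l => A (e l)) + B) (Ψ x) l = (a x)⁻¹ * pB ((fun l => A (e l)) + B) x l := by
    simp only [pB_apply, hΨ, Pi.smul_apply, smul_eq_mul, Finset.mul_sum]
    exact Finset.sum_congr rfl fun i _ => by ring
  rw [h2, ← h1]
  field_simp

/-- The Federer–Fleming images of a purely unrectifiable set are null for almost every affine
position of the grid. -/
lemma ae_kill [DecidableEq ι] (h : d + 1 ≤ n) {S : Set (ι → ℝ)} (hS : IsCompact S)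
    (hfin : μH[(d:ℝ)] S < ⊤) (hPU : PU d S) {i₀ : ι} (hi₀ : ∀ x ∈ S, x i₀ = 1) :
    ∀ᵐ A : Fin n → ι → ℝ, ∀ η : ℝ, 0 < η →
      μH[(d:ℝ)] ((fun x => ffG d η (pB A x)) '' {x ∈ S | η ≤ tau d (pB A x)}) = 0 := by
  set sh : (Fin n → ℤ) → (Fin n → ι → ℝ) := fun k i => Pi.single i₀ (2 * (k i : ℝ)) with hsh
  have hae : ∀ᵐ A : Fin n → ι → ℝ, ∀ (k : Fin n → ℤ) (e : Fin d → Fin n) (j : Fin n) (m : ℕ),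
      Function.Injective e → (∀ l, e l ≠ j) →
      volume {q | (A - sh k, q) ∈ quotSet S e j (1 / ((m:ℝ) + 1))} = 0 := by
    refine ae_all_iff.2 fun k => ae_all_iff.2 fun e => ae_all_iff.2 fun j => ae_all_iff.2 fun m => ?_
    by_cases he : Function.Injective e
    · by_cases hj : ∀ l, e l ≠ j
      · have h1 := ae_quot_null (n := n) hS hfin hPU hi₀ he hj (Nat.one_div_pos_of_nat (n := m))
        have h2 := (measurePreserving_sub_right (volume : Measure (Fin n → ι → ℝ))
          (sh k)).quasiMeasurePreserving.ae h1
        filter_upwards [h2] with A hA _ _ using hA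
      · exact Eventually.of_forall fun A _ h => absurd h hj
    · exact Eventually.of_forall fun A h => absurd h he
  filter_upwards [hae] with A hA η hη
  set Θ : (Fin d → Fin n) → (Fin n → ℤ) → (Fin n → ℤ) → Bool → (Fin d → ℝ) → (Fin n → ℝ) :=
    fun e k c s q => Function.extend e
      (fun l => 2 * (k (e l) : ℝ) + clamp ((if s then 1 else -1) * q l)) (fun i => (c i : ℝ)) with hΘ
  have hΘl : ∀ e k c s, LipschitzWith 1 (Θ e k c s) := by
    intro e k c s
    have h1 : LipschitzWith 1 (fun (q : Fin d → ℝ) (l : Fin d) =>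
        2 * (k (e l) : ℝ) + clamp ((if s then 1 else -1) * q l)) := by
      refine LipschitzWith.of_dist_le_mul fun q q' => ?_
      rw [NNReal.coe_one, one_mul, dist_pi_le_iff dist_nonneg]
      intro l
      rw [Real.dist_eq, add_sub_add_left_eq_sub]
      refine (clamp_lip _ _).trans ?_
      rw [← mul_sub, abs_mul]
      have : |(if s then 1 else -1 : ℝ)| = 1 := by split_ifs <;> simp
      rw [this, one_mul, ← Real.dist_eq]
      exact dist_le_pi_dist q q' l
    have := (extend_lip e (fun i => (c i : ℝ))).comp h1
    rwa [one_mul] at this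
  have hnull : ∀ (e : Fin d → Fin n) (j : Fin n) (k c : Fin n → ℤ) (s : Bool) (m : ℕ),
      μH[(d:ℝ)] (Θ e k c s '' {q | (Function.Injective e ∧ ∀ l, e l ≠ j) ∧
        (A - sh k, q) ∈ quotSet S e j (1 / ((m:ℝ) + 1))}) = 0 := by
    intro e j k c s m
    by_cases hej : Function.Injective e ∧ ∀ l, e l ≠ j
    · rw [← le_zero_iff]
      refine ((hΘl e k c s).hausdorffMeasure_image_le (by positivity) _).trans ?_
      have h1 := hA k e j m hej.1 hej.2
      rw [vol_pi_eq] at h1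
      rw [ENNReal.coe_one, ENNReal.one_rpow, one_mul]
      exact (measure_mono_null (fun q hq => hq.2) h1).le
    · simp [hej]
  refine measure_mono_null (t := ⋃ (e : Fin d → Fin n) (j : Fin n) (k : Fin n → ℤ) (c : Fin n → ℤ)
    (s : Bool) (m : ℕ), Θ e k c s '' {q | (Function.Injective e ∧ ∀ l, e l ≠ j) ∧
        (A - sh k, q) ∈ quotSet S e j (1 / ((m:ℝ) + 1))}) ?_ ?_
  · rintro _ ⟨x, ⟨hx, hxη⟩, rfl⟩
    set z := pB A x with hz
    obtain ⟨e, j, c, he, hj, htau, hG⟩ := ffG_form h hη hxη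
    set k : Fin n → ℤ := fun i => round (z i / 2) with hk
    have hctr : ∀ i, ctr (z i) = 2 * (k i : ℝ) := fun i => rfl
    have hrow : ∀ i, pB (A - sh k) x i = z i - ctr (z i) := by
      intro i
      rw [hctr i, pB_apply]
      have e1 : z i = ∑ l, A i l * x l := by rw [hz, pB_apply]
      rw [e1]
      simp only [Pi.sub_apply, sub_mul, Finset.sum_sub_distrib, hsh]
      congr 1
      rw [Finset.sum_eq_single i₀]
      · simp [hi₀ x hx]
      · intro b _ hb; simp [Pi.single_eq_of_ne hb]
      · simp
    obtain ⟨m, hm⟩ := exists_nat_one_div_lt (hη.trans_le hxη)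
    have htpos : 0 < tau d z := hη.trans_le hxη
    have hne : z j - ctr (z j) ≠ 0 := abs_pos.1 (by rw [htau]; exact htpos)
    simp only [mem_iUnion]
    refine ⟨e, j, k, c, decide (0 ≤ z j - ctr (z j)), m,
      fun l => (z (e l) - ctr (z (e l))) / (z j - ctr (z j)), ⟨⟨he, hj⟩, x, hx, ?_, fun l => ?_⟩, ?_⟩
    · simp only [hrow]; rw [htau]; exact hm.le
    · simp only [hrow]; field_simp
    · rw [hG]
      simp only [hΘ]
      congr 1
      ext l
      have hs : (if decide (0 ≤ z j - ctr (z j)) = true then (1:ℝ) else -1) *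
          ((z (e l) - ctr (z (e l))) / (z j - ctr (z j))) =
          (z (e l) - ctr (z (e l))) / tau d z := by
        rw [← htau]
        by_cases h0 : 0 ≤ z j - ctr (z j)
        · simp only [h0, decide_true, if_true, one_mul, abs_of_nonneg h0]
        · rw [abs_of_neg (not_le.1 h0)]
          simp only [h0, decide_false, Bool.false_eq_true, if_false]
          rw [div_neg]; ring
      rw [hs, ← hctr]
  · simp only [measure_iUnion_null_iff]
    exact fun e j k c s m => hnull e j k c s m

end kill

end

/-! ### Averaging over affine maps -/

section

variable {n d : ℕ}

/-- The range of the `i`-th row of the random affine map: the first entry is the translation, the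
others are close to the `i`-th row of the identity matrix. -/
def rowBox (i : Fin n) : Set (Fin (n+1) → ℝ) :=
  {a | a 0 ∈ Icc (0:ℝ) 2 ∧ ∀ j : Fin n, a j.succ ∈
    Icc ((if i = j then 1 else 0) - 1 / (2 * (n:ℝ))) ((if i = j then 1 else 0) + 1 / (2 * (n:ℝ)))}

/-- The range of the random affine map. -/
def affBox (n : ℕ) : Set (Fin n → Fin (n+1) → ℝ) := {A | ∀ i, A i ∈ rowBox i}

lemma vol_tri_le (c t : ℝ) (ht : 0 ≤ t) :
    volume {s ∈ Icc (0:ℝ) 2 | tri (s + c) ≤ t} ≤ ENNReal.ofReal (4 * t) := by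
  have hsub : {s ∈ Icc (0:ℝ) 2 | tri (s + c) ≤ t} ⊆
      closedBall (2 * (round (c/2) : ℝ) - c) t ∪ closedBall (2 * (round (c/2) : ℝ) + 2 - c) t := by
    rintro s ⟨⟨h0, h2⟩, hs⟩
    have k1 : round (c/2) ≤ round ((s+c)/2) := by
      rw [round_eq, round_eq]; exact Int.floor_mono (by linarith)
    have k2 : round ((s+c)/2) ≤ round (c/2) + 1 := by
      rw [← round_add_one, round_eq, round_eq]; exact Int.floor_mono (by linarith)
    have hs' : |s + c - 2 * (round ((s+c)/2) : ℝ)| ≤ t := hs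
    rcases (show round ((s+c)/2) = round (c/2) ∨ round ((s+c)/2) = round (c/2) + 1 by omega) with h | h
    · left
      rw [h] at hs'
      rw [mem_closedBall, Real.dist_eq]
      convert hs' using 2; ring
    · right
      rw [h] at hs'
      rw [mem_closedBall, Real.dist_eq]
      convert hs' using 2; push_cast; ring
  refine (measure_mono hsub).trans ((measure_union_le _ _).trans ?_)
  rw [Real.volume_closedBall, Real.volume_closedBall, ← ENNReal.ofReal_add (by positivity) (by positivity)]
  apply le_of_eq; congr 1; ring

/-- The common volume of the row boxes. -/
def rowVol (n : ℕ) : ℝ≥0∞ := ENNReal.ofReal 2 * ENNReal.ofReal (1 / (n:ℝ)) ^ n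

lemma measurableSet_rowBox (i : Fin n) : MeasurableSet (rowBox i) := by
  unfold rowBox
  rw [Set.ofPred_and, Set.ofPred_forall]
  refine MeasurableSet.inter ?_ (MeasurableSet.iInter fun j => ?_)
  · exact measurableSet_Icc.preimage (measurable_pi_apply 0)
  · exact measurableSet_Icc.preimage (measurable_pi_apply j.succ)

lemma tri_continuous : Continuous tri :=
  (LipschitzWith.of_dist_le_mul (K := 1) fun x y => by
    rw [NNReal.coe_one, one_mul, Real.dist_eq, Real.dist_eq, abs_le]
    have h1 := tri_lip x y
    have h2 := tri_lip y x
    rw [abs_sub_comm] at h2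
    constructor <;> linarith).continuous

lemma vol_row_eq (hn : 0 < n) (i : Fin n) : volume (rowBox i) = rowVol n := by
  have he : rowBox i = Set.pi univ (Fin.cons (Icc (0:ℝ) 2) fun j : Fin n =>
    Icc ((if i = j then 1 else 0) - 1 / (2 * (n:ℝ))) ((if i = j then 1 else 0) + 1 / (2 * (n:ℝ)))) := by
    ext a
    simp only [rowBox, mem_ofPred_eq, Set.mem_pi, mem_univ, forall_true_left, Fin.forall_fin_succ,
      Fin.cons_zero, Fin.cons_succ]
  rw [he, volume_pi_pi, Fin.prod_univ_succ]
  simp only [Fin.cons_zero, Fin.cons_succ, Real.volume_Icc, rowVol]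
  congr 1
  · norm_num
  · rw [Finset.prod_congr rfl (g := fun _ => ENNReal.ofReal (1/(n:ℝ)))]
    · simp
    · intro j _
      congr 1
      have : (n:ℝ) ≠ 0 := by positivity
      field_simp; ring

/-- By the translation entry alone, the `i`-th coordinate of a random affine image falls at distance
at most `t` from the even integers with probability at most `2t`. -/
lemma vol_row_tri_le (i : Fin n) (x : Fin (n+1) → ℝ) (hx : x 0 = 1) {t : ℝ} (ht : 0 ≤ t) :
    volume {a ∈ rowBox i | tri (∑ j, a j * x j) ≤ t} ≤ ENNReal.ofReal (2 * t) * rowVol n := by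
  have hmp := volume_preserving_piFinSuccAbove (fun _ : Fin (n+1) => ℝ) 0
  set bx : Set (Fin n → ℝ) := Set.pi univ fun j : Fin n =>
    Icc ((if i = j then 1 else 0) - 1 / (2 * (n:ℝ))) ((if i = j then 1 else 0) + 1 / (2 * (n:ℝ))) with hbx
  have hbxm : MeasurableSet bx := MeasurableSet.univ_pi fun _ => measurableSet_Icc
  set D : Set (ℝ × (Fin n → ℝ)) := {p | p.1 ∈ Icc (0:ℝ) 2 ∧ p.2 ∈ bx ∧
    tri (p.1 + ∑ j : Fin n, p.2 j * x j.succ) ≤ t} with hD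
  have hDm : MeasurableSet D := by
    rw [hD, Set.ofPred_and, Set.ofPred_and]
    refine (measurableSet_Icc.preimage measurable_fst).inter ((hbxm.preimage measurable_snd).inter ?_)
    refine (isClosed_le (tri_continuous.comp ?_) continuous_const).measurableSet
    fun_prop
  have he : {a ∈ rowBox i | tri (∑ j, a j * x j) ≤ t} =
      (MeasurableEquiv.piFinSuccAbove (fun _ : Fin (n+1) => ℝ) 0) ⁻¹' D := by
    ext a
    simp only [rowBox, mem_ofPred_eq, mem_preimage, hD, hbx, Set.mem_pi, mem_univ, forall_true_left,
      Fin.sum_univ_succ, hx, mul_one, MeasurableEquiv.piFinSuccAbove, MeasurableEquiv.coe_mk,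
      Fin.insertNthEquiv, Equiv.coe_fn_symm_mk, Fin.removeNth, Fin.zero_succAbove, and_assoc]
  rw [he, hmp.measure_preimage hDm.nullMeasurableSet, Measure.volume_eq_prod,
    Measure.prod_apply_symm hDm]
  calc ∫⁻ b, volume ((fun s => (s, b)) ⁻¹' D) ≤ ∫⁻ b in bx, ENNReal.ofReal (4 * t) := by
        rw [← lintegral_indicator hbxm]
        refine lintegral_mono fun b => ?_
        by_cases hb : b ∈ bx
        · rw [indicator_of_mem hb]
          refine (measure_mono ?_).trans (vol_tri_le (∑ j : Fin n, b j * x j.succ) t ht)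
          rintro s ⟨h1, -, h3⟩
          exact ⟨h1, h3⟩
        · rw [indicator_of_notMem hb]
          refine (measure_mono_null ?_ (measure_empty (μ := volume))).le
          rintro s ⟨h1, h2, h3⟩
          exact (hb h2).elim
    _ = ENNReal.ofReal (4 * t) * ENNReal.ofReal (1/(n:ℝ)) ^ n := by
        rw [setLIntegral_const, hbx, volume_pi_pi]
        congr 1
        simp only [Real.volume_Icc]
        rw [Finset.prod_congr rfl (g := fun _ => ENNReal.ofReal (1/(n:ℝ)))]
        · simp
        · intro j _
          congr 1
          have : (n:ℝ) ≠ 0 := by have := j.pos; positivity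
          field_simp; ring
    _ = _ := by
        rw [rowVol, ← mul_assoc, ← ENNReal.ofReal_mul (by positivity)]
        congr 2; ring

lemma affBox_eq : affBox n = Set.pi univ rowBox := by
  ext A; simp [affBox]

lemma vol_affBox (hn : 0 < n) : volume (affBox n) = rowVol n ^ n := by
  rw [affBox_eq, volume_pi_pi]; simp [vol_row_eq hn]

lemma measurableSet_affBox : MeasurableSet (affBox n) := by
  rw [affBox_eq]; exact MeasurableSet.univ_pi fun i => measurableSet_rowBox i

/-- The probability that a random affine image of a point falls `t`-close to the dual skeleton is
`O(t^{d+1})`: then `d+1` independent coordinates are `t`-close to the even integers. -/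
lemma vol_tau_le (h : d + 1 ≤ n) (x : Fin (n+1) → ℝ) (hx : x 0 = 1) {t : ℝ} (ht : 0 ≤ t) :
    volume {A ∈ affBox n | tau d (pB A x) ≤ t} ≤
      ((subs n d).card : ℝ≥0∞) * ENNReal.ofReal (2 * t) ^ (d+1) * volume (affBox n) := by
  classical
  have hn : 0 < n := by omega
  have hsub : {A ∈ affBox n | tau d (pB A x) ≤ t} ⊆ ⋃ I ∈ subs n d, Set.pi univ fun i =>
      if i ∈ I then {a ∈ rowBox i | tri (∑ j, a j * x j) ≤ t} else rowBox i := by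
    rintro A ⟨hA, hAt⟩
    obtain ⟨I, hI, hle, -⟩ := tau_exists h (pB A x)
    refine mem_iUnion₂.2 ⟨I, hI, fun i _ => ?_⟩
    dsimp only
    split_ifs with hi
    · exact ⟨hA i, (hle i hi).trans hAt⟩
    · exact hA i
  refine (measure_mono hsub).trans ((measure_biUnion_finset_le _ _).trans ?_)
  rw [mul_assoc, ← nsmul_eq_mul]
  refine Finset.sum_le_card_nsmul _ _ _ fun I hI => ?_
  rw [volume_pi_pi, vol_affBox hn]
  calc _ ≤ ∏ i : Fin n, ((if i ∈ I then ENNReal.ofReal (2 * t) else 1) * rowVol n) := by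
        refine Finset.prod_le_prod' fun i _ => ?_
        split_ifs with hi
        · exact vol_row_tri_le i x hx ht
        · rw [one_mul, vol_row_eq hn]
    _ = _ := by
        rw [Finset.prod_mul_distrib, Finset.prod_ite_mem, Finset.univ_inter]
        simp [mem_subs.1 hI]

/-- The constant of the averaging argument. -/
def avgC (n d : ℕ) : ℝ≥0∞ := ((subs n d).card : ℝ≥0∞) * 2 ^ (d+2)

set_option maxHeartbeats 400000 in
/-- Averaging over affine maps, by Fubini and `vol_tau_le`: some `A` outside a given null set controls
the `σ`-measures of all dyadic neighbourhoods of the dual skeleton, weighted by the `d`-th powers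
of the corresponding Lipschitz constants. The weight `2^{id}` is beaten by the probability
`O(2^{-i(d+1)})`. -/
lemma exists_good_aff (h : d + 1 ≤ n) {X : Type*} [TopologicalSpace X] [MeasurableSpace X] [BorelSpace X]
    [SecondCountableTopology X]
    (σ : Measure X) [IsFiniteMeasure σ] (lf : X → Fin (n+1) → ℝ) (hlf : Continuous lf)
    (hlf0 : ∀ u, lf u 0 = 1) (N : Set (Fin n → Fin (n+1) → ℝ)) (hN : volume N = 0) :
    ∃ A ∈ affBox n, A ∉ N ∧
      ∑' i : ℕ, ENNReal.ofReal ((2:ℝ) ^ (i * d)) * σ {u | tau d (pB A (lf u)) ≤ 2⁻¹ ^ i} ≤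
        avgC n d * σ univ := by
  have hn : 0 < n := by omega
  have hrv0 : rowVol n ≠ 0 := by
    unfold rowVol
    have : 0 < 1 / (n:ℝ) := by positivity
    refine mul_ne_zero (by simp) (pow_ne_zero _ (ENNReal.ofReal_pos.2 this).ne')
  have hrvt : rowVol n ≠ ⊤ := by
    unfold rowVol
    exact ENNReal.mul_ne_top ENNReal.ofReal_ne_top (ENNReal.pow_ne_top ENNReal.ofReal_ne_top)
  have hv0 : volume (affBox n) ≠ 0 := by rw [vol_affBox hn]; exact pow_ne_zero _ hrv0
  have hvt : volume (affBox n) ≠ ⊤ := by rw [vol_affBox hn]; exact ENNReal.pow_ne_top hrvt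
  have hcl : ∀ t : ℝ, MeasurableSet {p : (Fin n → Fin (n+1) → ℝ) × X | tau d (pB p.1 (lf p.2)) ≤ t} := by
    intro t
    refine (isClosed_le (tau_continuous.comp ?_) continuous_const).measurableSet
    refine continuous_pi fun j => ?_
    simp only [pB_apply]
    fun_prop
  have hfm : ∀ i : ℕ, Measurable fun A : Fin n → Fin (n+1) → ℝ =>
      ENNReal.ofReal ((2:ℝ) ^ (i * d)) * σ {u | tau d (pB A (lf u)) ≤ 2⁻¹ ^ i} := fun i =>
    (measurable_measure_prodMk_left (hcl (2⁻¹ ^ i))).const_mul _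
  have hlint : ∀ i : ℕ, ∫⁻ A in affBox n, ENNReal.ofReal ((2:ℝ) ^ (i * d)) *
      σ {u | tau d (pB A (lf u)) ≤ 2⁻¹ ^ i} ≤
      (2⁻¹:ℝ≥0∞) ^ i * (((subs n d).card : ℝ≥0∞) * 2 ^ (d+1) * volume (affBox n) * σ univ) := by
    intro i
    have hm := hcl (2⁻¹ ^ i)
    have hmm : Measurable fun A : Fin n → Fin (n+1) → ℝ => σ {u | tau d (pB A (lf u)) ≤ 2⁻¹ ^ i} :=
      measurable_measure_prodMk_left hm
    rw [lintegral_const_mul _ hmm]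
    have e1 : ∫⁻ A in affBox n, σ {u | tau d (pB A (lf u)) ≤ 2⁻¹ ^ i} =
        ∫⁻ u, (volume.restrict (affBox n)) {A | tau d (pB A (lf u)) ≤ 2⁻¹ ^ i} ∂σ := by
      rw [show (∫⁻ A in affBox n, σ {u | tau d (pB A (lf u)) ≤ 2⁻¹ ^ i}) =
        ((volume.restrict (affBox n)).prod σ) {p | tau d (pB p.1 (lf p.2)) ≤ 2⁻¹ ^ i} from
        (Measure.prod_apply hm).symm, Measure.prod_apply_symm hm]
      rfl
    rw [e1]
    have e2 : ∫⁻ u, (volume.restrict (affBox n)) {A | tau d (pB A (lf u)) ≤ 2⁻¹ ^ i} ∂σ ≤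
        ∫⁻ u, ((subs n d).card : ℝ≥0∞) * ENNReal.ofReal (2 * 2⁻¹ ^ i) ^ (d+1) * volume (affBox n) ∂σ := by
      refine lintegral_mono fun u => ?_
      have hmu : MeasurableSet {A : Fin n → Fin (n+1) → ℝ | tau d (pB A (lf u)) ≤ 2⁻¹ ^ i} := by
        refine (isClosed_le (tau_continuous.comp ?_) continuous_const).measurableSet
        refine continuous_pi fun j => ?_
        simp only [pB_apply]
        fun_prop
      rw [Measure.restrict_apply hmu]
      refine le_trans (measure_mono ?_) (vol_tau_le h (lf u) (hlf0 u) (by positivity))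
      rintro A ⟨h1, h2⟩
      exact ⟨h2, h1⟩
    refine (mul_le_mul_right e2 _).trans (le_of_eq ?_)
    rw [lintegral_const]
    have e3 : ENNReal.ofReal ((2:ℝ) ^ (i * d)) * ENNReal.ofReal (2 * 2⁻¹ ^ i) ^ (d+1) =
        (2⁻¹:ℝ≥0∞) ^ i * 2 ^ (d+1) := by
      rw [← ENNReal.ofReal_pow (by positivity), ← ENNReal.ofReal_mul (by positivity)]
      rw [show (2:ℝ) ^ (i * d) * (2 * 2⁻¹ ^ i) ^ (d+1) = 2⁻¹ ^ i * 2 ^ (d+1) by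
        rw [mul_pow, ← pow_mul, mul_add, pow_add, mul_one]
        have : (2:ℝ) ^ (i*d) * 2⁻¹ ^ (i*d) = 1 := by rw [← mul_pow]; norm_num
        calc _ = ((2:ℝ) ^ (i*d) * 2⁻¹ ^ (i*d)) * (2⁻¹ ^ i * 2 ^ (d+1)) := by ring
          _ = _ := by rw [this, one_mul, pow_succ, pow_one]]
      rw [ENNReal.ofReal_mul (by positivity), ENNReal.ofReal_pow (by positivity),
        ENNReal.ofReal_pow (by positivity), ENNReal.ofReal_inv_of_pos (by norm_num)]
      norm_num
    calc _ = (ENNReal.ofReal ((2:ℝ) ^ (i * d)) * ENNReal.ofReal (2 * 2⁻¹ ^ i) ^ (d+1)) *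
          (((subs n d).card : ℝ≥0∞) * volume (affBox n) * σ univ) := by ring
      _ = _ := by rw [e3]; ring
  have htot : ∫⁻ A in affBox n, ∑' i : ℕ, ENNReal.ofReal ((2:ℝ) ^ (i * d)) *
      σ {u | tau d (pB A (lf u)) ≤ 2⁻¹ ^ i} ≤ avgC n d * σ univ * volume (affBox n) := by
    rw [lintegral_tsum fun i => (hfm i).aemeasurable]
    refine (ENNReal.tsum_le_tsum hlint).trans (le_of_eq ?_)
    rw [ENNReal.tsum_mul_right, ENNReal.tsum_geometric, ENNReal.one_sub_inv_two, inv_inv, avgC,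
      pow_succ _ (d+1)]
    ring
  have hfinm : IsFiniteMeasure (volume.restrict (affBox n)) :=
    ⟨by rw [Measure.restrict_apply_univ]; exact hvt.lt_top⟩
  obtain ⟨A, hA, hle⟩ := exists_notMem_null_le_laverage (μ := volume.restrict (affBox n))
    (f := fun A => ∑' i : ℕ, ENNReal.ofReal ((2:ℝ) ^ (i * d)) *
      σ {u | tau d (pB A (lf u)) ≤ 2⁻¹ ^ i}) (N := (affBox n)ᶜ ∪ N)
    (by rw [Ne, Measure.restrict_eq_zero]; exact hv0)
    (Measurable.tsum hfm).aemeasurable (by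
      refine measure_union_null ?_ (Measure.absolutelyContinuous_of_le Measure.restrict_le_self hN)
      rw [Measure.restrict_apply measurableSet_affBox.compl]; simp)
  simp only [mem_union, mem_compl_iff, not_or, not_not] at hA
  refine ⟨A, hA.1, hA.2, hle.trans ?_⟩
  rw [laverage_eq, Measure.restrict_apply_univ]
  exact ENNReal.div_le_of_le_mul htot

/-! ### The Federer–Fleming projection -/

lemma norm_toLp_le (v : Fin n → ℝ) : ‖(WithLp.toLp 2 v : Euc n)‖ ≤ n * ‖v‖ := by
  rcases Nat.eq_zero_or_pos n with h | h
  · subst h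
    simp [EuclideanSpace.norm_eq]
  have h1 : (1:ℝ) ≤ n := by exact_mod_cast h
  rw [EuclideanSpace.norm_eq]
  refine Real.sqrt_le_iff.2 ⟨by positivity, ?_⟩
  calc ∑ i : Fin n, ‖v i‖ ^ 2 ≤ ∑ i : Fin n, ‖v‖ ^ 2 := by
        gcongr with i; exact norm_le_pi_norm v i
    _ = n * ‖v‖ ^ 2 := by simp
    _ ≤ n * (n * ‖v‖ ^ 2) := by
        gcongr
        exact le_mul_of_one_le_left (by positivity) h1
    _ = _ := by ring

lemma norm_ofLp_le (u : Euc n) : ‖u.ofLp‖ ≤ ‖u‖ := by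
  rw [pi_norm_le_iff_of_nonneg (norm_nonneg _)]
  exact fun i => PiLp.norm_apply_le u i

/-- The linear part of an affine map `A`. -/
def linPart (A : Fin n → Fin (n+1) → ℝ) : (Fin n → ℝ) →ₗ[ℝ] (Fin n → ℝ) :=
  LinearMap.pi fun i => ∑ j : Fin n, A i j.succ • LinearMap.proj j

lemma linPart_apply (A : Fin n → Fin (n+1) → ℝ) (w : Fin n → ℝ) (i : Fin n) :
    linPart A w i = ∑ j : Fin n, A i j.succ * w j := by
  simp [linPart]

lemma linPart_close {A : Fin n → Fin (n+1) → ℝ} (hA : A ∈ affBox n) (w : Fin n → ℝ) :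
    ‖linPart A w - w‖ ≤ 1/2 * ‖w‖ := by
  rw [pi_norm_le_iff_of_nonneg (by positivity)]
  intro i
  have hn : (0:ℝ) < n := by exact_mod_cast i.pos
  have e : (linPart A w - w) i = ∑ j : Fin n, (A i j.succ - if i = j then 1 else 0) * w j := by
    simp [linPart_apply, sub_mul, Finset.sum_sub_distrib]
  rw [e]
  calc ‖∑ j : Fin n, (A i j.succ - if i = j then 1 else 0) * w j‖
      ≤ ∑ j : Fin n, ‖(A i j.succ - if i = j then 1 else 0) * w j‖ := norm_sum_le _ _
    _ ≤ ∑ j : Fin n, 1 / (2 * (n:ℝ)) * ‖w‖ := by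
        refine Finset.sum_le_sum fun j _ => ?_
        rw [norm_mul]
        refine mul_le_mul ?_ (norm_le_pi_norm w j) (norm_nonneg _) (by positivity)
        have := (hA i).2 j
        rw [mem_Icc] at this
        rw [Real.norm_eq_abs, abs_le]; constructor <;> linarith
    _ = _ := by
        simp; field_simp

lemma linPart_inv {A : Fin n → Fin (n+1) → ℝ} (hA : A ∈ affBox n) :
    ∃ Mi : (Fin n → ℝ) →ₗ[ℝ] (Fin n → ℝ), (∀ w, Mi (linPart A w) = w) ∧ ∀ v, ‖Mi v‖ ≤ 2 * ‖v‖ := by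
  have hlow : ∀ w, ‖w‖ ≤ 2 * ‖linPart A w‖ := by
    intro w
    have h1 := linPart_close hA w
    have h2 : ‖w‖ ≤ ‖linPart A w‖ + ‖linPart A w - w‖ := by
      calc ‖w‖ = ‖linPart A w - (linPart A w - w)‖ := by congr 1; abel
        _ ≤ _ := norm_sub_le _ _
    linarith
  have hinj : Function.Injective (linPart A) := by
    rw [injective_iff_map_eq_zero]
    intro w hw
    have := hlow w
    rw [hw, norm_zero, mul_zero] at this
    exact norm_le_zero_iff.1 this
  set e := LinearEquiv.ofInjectiveEndo (linPart A) hinj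
  have he : ∀ w, e w = linPart A w := fun w => rfl
  refine ⟨e.symm, fun w => ?_, fun v => ?_⟩
  · rw [← he w]; exact e.symm_apply_apply w
  · have := hlow (e.symm v)
    rw [← he, e.apply_symm_apply] at this
    exact this

/-- A Federer–Fleming projection adapted to a finite measure `σ` and killing a purely
unrectifiable set `S`, at scale `ρ`. -/
lemma federer_fleming (h : d + 1 ≤ n) : ∃ CR : ℝ → ℝ≥0, ∀ (x₀ : Euc n) (ρ : ℝ), 0 < ρ →
    ∀ (σ : Measure (Euc n)) [IsFiniteMeasure σ] (S : Set (Euc n)), IsCompact S → μH[(d:ℝ)] S < ⊤ →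
    PU d S → ∀ ε : ℝ≥0∞, 0 < ε → ∃ (T : Euc n → Euc n) (m : ℕ) (θ : Euc n → ℝ),
      Continuous θ ∧ (∀ u, θ u ≤ 1) ∧
      (∀ t : ℝ, 0 < t → LipschitzOnWith (Real.toNNReal (6 * n / t)) T {u | t ≤ max (θ u) (2⁻¹ ^ m)}) ∧
      (∀ u, dist (T u) u ≤ 2 * n * ρ) ∧
      (∑' i : ℕ, ENNReal.ofReal ((2:ℝ) ^ (i * d)) * σ {u | θ u ≤ 2⁻¹ ^ i} ≤ avgC n d * σ univ) ∧
      (ENNReal.ofReal ((2:ℝ) ^ (m * d)) * σ {u | θ u ≤ 2⁻¹ ^ m} ≤ ε) ∧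
      (∀ R : ℝ, μH[(d:ℝ)] (T '' (closedBall x₀ (R * ρ) ∩ {u | 2⁻¹ ^ m ≤ θ u})) ≤
        ENNReal.ofReal (ρ ^ d) * CR R) ∧
      μH[(d:ℝ)] (T '' (S ∩ {u | 2⁻¹ ^ m ≤ θ u})) = 0 := by
  have hn : 0 < n := by omega
  have hn0 : (0:ℝ) < n := by exact_mod_cast hn
  set CR : ℝ → ℝ≥0 := fun R => (ENNReal.ofReal ((2 * n) ^ d) * μH[(d:ℝ)] (skel n d (2 + 3/2 * R + 1))).toNNReal
    with hCR
  refine ⟨CR, fun x₀ ρ hρ σ _ S hS hfin hPU ε hε => ?_⟩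
  set lf : Euc n → Fin (n+1) → ℝ := fun u => Fin.cons 1 (ρ⁻¹ • (u - x₀).ofLp) with hlf
  have hlfd : ∀ u v, dist (lf u) (lf v) = ρ⁻¹ * ‖(u - v).ofLp‖ := by
    intro u v
    have e1 : dist (lf u) (lf v) = dist (ρ⁻¹ • (u - x₀).ofLp) (ρ⁻¹ • (v - x₀).ofLp) := by
      refine le_antisymm ?_ ?_
      · rw [dist_pi_le_iff dist_nonneg]
        intro i
        refine Fin.cases ?_ (fun j => ?_) i
        · simp [hlf]
        · simp only [hlf, Fin.cons_succ]
          exact dist_le_pi_dist (ρ⁻¹ • (u - x₀).ofLp) (ρ⁻¹ • (v - x₀).ofLp) j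
      · rw [dist_pi_le_iff dist_nonneg]
        intro j
        have := dist_le_pi_dist (lf u) (lf v) j.succ
        simpa only [hlf, Fin.cons_succ] using this
    rw [e1, dist_eq_norm, ← smul_sub, norm_smul, Real.norm_of_nonneg (by positivity)]
    congr 2
    simp
  have hlfL : LipschitzWith (Real.toNNReal ρ⁻¹) lf := by
    refine LipschitzWith.of_dist_le_mul fun u v => ?_
    rw [hlfd, Real.coe_toNNReal _ (by positivity), dist_eq_norm]
    gcongr
    exact norm_ofLp_le _
  have hlfA : ∀ u v, dist u v ≤ (Real.toNNReal (n * ρ)) * dist (lf u) (lf v) := by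
    intro u v
    rw [hlfd, Real.coe_toNNReal _ (by positivity), dist_eq_norm]
    have := norm_toLp_le (u - v).ofLp
    calc ‖u - v‖ ≤ n * ‖(u-v).ofLp‖ := this
      _ = _ := by field_simp
  have hlf0 : ∀ u, lf u 0 = 1 := fun u => rfl
  have hPU' : PU d (lf '' S) := PU_image hPU (hlfL.lipschitzOnWith) (fun x _ y _ => hlfA x y)
  have hfin' : μH[(d:ℝ)] (lf '' S) < ⊤ := by
    refine (hlfL.hausdorffMeasure_image_le (by positivity) _).trans_lt ?_
    exact ENNReal.mul_lt_top (ENNReal.rpow_lt_top_of_nonneg (by positivity) ENNReal.coe_ne_top) hfin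
  have hkill := ae_kill (n := n) (i₀ := (0 : Fin (n+1))) h (hS.image hlfL.continuous) hfin' hPU'
    (by rintro _ ⟨u, -, rfl⟩; rfl)
  obtain ⟨A, hA, hAN, hsum⟩ := exists_good_aff h σ lf hlfL.continuous hlf0 _ (ae_iff.1 hkill)
  simp only [mem_ofPred_eq, not_not] at hAN
  set θ : Euc n → ℝ := fun u => tau d (pB A (lf u)) with hθ
  obtain ⟨Mi, hMi, hMin⟩ := linPart_inv hA
  set y : Fin n → ℝ := fun i => A i 0 with hy
  set z : Euc n → Fin n → ℝ := fun u => pB A (lf u) with hz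
  have hzy : ∀ u, z u = y + linPart A (ρ⁻¹ • (u - x₀).ofLp) := by
    intro u; ext i
    simp only [hz, pB_apply, Fin.sum_univ_succ, hlf, Fin.cons_zero, Fin.cons_succ, mul_one,
      Pi.add_apply, linPart_apply, hy]
  have hMup : ∀ w, ‖linPart A w‖ ≤ 3/2 * ‖w‖ := by
    intro w
    have h1 := linPart_close hA w
    have : ‖linPart A w‖ ≤ ‖linPart A w - w‖ + ‖w‖ := by
      calc ‖linPart A w‖ = ‖(linPart A w - w) + w‖ := by congr 1; abel
        _ ≤ _ := norm_add_le _ _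
    linarith
  have hzd : ∀ u v, dist (z u) (z v) ≤ 3/2 * ρ⁻¹ * dist u v := by
    intro u v
    rw [hzy, hzy, dist_add_left, dist_eq_norm, ← map_sub, ← smul_sub]
    refine (hMup _).trans ?_
    rw [norm_smul, Real.norm_of_nonneg (by positivity), mul_assoc]
    gcongr
    have : (u - x₀).ofLp - (v - x₀).ofLp = (u - v).ofLp := by simp
    rw [this, dist_eq_norm]
    exact norm_ofLp_le _
  have hzc : Continuous z :=
    (LipschitzWith.of_dist_le_mul (K := Real.toNNReal (3/2 * ρ⁻¹)) fun u v => by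
      rw [Real.coe_toNNReal _ (by positivity)]; exact hzd u v).continuous
  have hθc : Continuous θ := tau_continuous.comp hzc
  -- the tail of the convergent series gives the threshold
  obtain ⟨m, hm⟩ : ∃ m : ℕ, ENNReal.ofReal ((2:ℝ) ^ (m * d)) * σ {u | θ u ≤ 2⁻¹ ^ m} ≤ ε := by
    have hne : (∑' i : ℕ, ENNReal.ofReal ((2:ℝ) ^ (i * d)) * σ {u | θ u ≤ 2⁻¹ ^ i}) ≠ ⊤ := by
      refine (hsum.trans_lt (ENNReal.mul_lt_top ?_ (measure_lt_top _ _))).ne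
      unfold avgC
      exact ENNReal.mul_lt_top (ENNReal.natCast_lt_top _) (ENNReal.pow_lt_top (by simp))
    have ht := (ENNReal.tendsto_atTop_zero_of_tsum_ne_top hne)
    obtain ⟨m, hm⟩ := (ENNReal.tendsto_atTop_zero.1 ht) ε hε
    exact ⟨m, hm m le_rfl⟩
  set η : ℝ := 2⁻¹ ^ m with hη
  have hη0 : 0 < η := by positivity
  have hη1 : η ≤ 1 := pow_le_one₀ (by norm_num) (by norm_num)
  set P : (Fin n → ℝ) → Euc n := fun v => x₀ + ρ • (WithLp.toLp 2 (Mi (v - y)) : Euc n) with hP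
  have hPd : ∀ v v', dist (P v) (P v') ≤ 2 * n * ρ * dist v v' := by
    intro v v'
    rw [hP]
    simp only [dist_add_left]
    rw [dist_eq_norm, ← smul_sub, norm_smul, Real.norm_of_nonneg hρ.le, ← WithLp.toLp_sub, ← map_sub]
    have e : v - y - (v' - y) = v - v' := by abel
    rw [e]
    calc ρ * ‖(WithLp.toLp 2 (Mi (v - v')) : Euc n)‖ ≤ ρ * (n * (2 * ‖v - v'‖)) := by
          gcongr
          refine (norm_toLp_le _).trans ?_
          gcongr; exact hMin _
      _ = _ := by rw [dist_eq_norm]; ring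
  have hPL : LipschitzWith (Real.toNNReal (2 * n * ρ)) P := LipschitzWith.of_dist_le_mul fun v v' => by
    rw [Real.coe_toNNReal _ (by positivity)]; exact hPd v v'
  have hPz : ∀ u, P (z u) = u := by
    intro u
    simp only [hP, hzy, add_sub_cancel_left, hMi]
    rw [WithLp.toLp_smul, smul_smul, mul_inv_cancel₀ hρ.ne', one_smul]
    simp
  refine ⟨fun u => P (ffG d η (z u)), m, θ, hθc, fun u => tau_le_one _, fun t ht => ?_, fun u => ?_, hsum, hm,
    fun R => ?_, ?_⟩
  · refine LipschitzOnWith.of_dist_le_mul fun u hu v hv => ?_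
    rw [Real.coe_toNNReal _ (by positivity)]
    refine (hPd _ _).trans ?_
    have := ffG_lip hη1 ht (x := z u) (y := z v) hu hv
    calc 2 * n * ρ * dist (ffG d η (z u)) (ffG d η (z v))
        ≤ 2 * n * ρ * (2 / t * (3/2 * ρ⁻¹ * dist u v)) := by
          gcongr
          refine this.trans ?_
          gcongr
          exact hzd u v
      _ = _ := by field_simp; ring
  · nth_rewrite 2 [← hPz u]
    refine (hPd _ _).trans ?_
    have := ffG_sub_le (d := d) hη0 hη1 (z u)
    calc _ ≤ 2 * n * ρ * 1 := by gcongr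
      _ = _ := by ring
  · have hsub : (fun u => P (ffG d η (z u))) '' (closedBall x₀ (R * ρ) ∩ {u | η ≤ θ u}) ⊆
        P '' (skel n d (2 + 3/2 * R + 1)) := by
      rintro _ ⟨u, ⟨hu, huθ⟩, rfl⟩
      refine mem_image_of_mem P (ffG_mem_skel h hη0 hη1 huθ ?_)
      rw [mem_closedBall, dist_eq_norm] at hu
      rw [hzy]
      refine (norm_add_le _ _).trans (add_le_add ?_ ?_)
      · rw [pi_norm_le_iff_of_nonneg (by norm_num)]
        intro i
        have := (hA i).1
        rw [Real.norm_eq_abs, abs_le]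
        exact ⟨by linarith [this.1], this.2⟩
      · refine (hMup _).trans ?_
        gcongr
        rw [norm_smul, Real.norm_of_nonneg (by positivity)]
        calc ρ⁻¹ * ‖(u - x₀).ofLp‖ ≤ ρ⁻¹ * (R * ρ) := by
              gcongr; exact (norm_ofLp_le _).trans hu
          _ = R := by field_simp
    refine (measure_mono hsub).trans ((hPL.hausdorffMeasure_image_le (by positivity) _).trans (le_of_eq ?_))
    rw [hCR]
    dsimp only
    rw [ENNReal.coe_toNNReal (ENNReal.mul_ne_top ENNReal.ofReal_ne_top (skel_lt_top _).ne), ← mul_assoc,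
      ← ENNReal.ofReal_mul (by positivity), ENNReal.rpow_natCast]
    congr 1
    rw [← ENNReal.ofReal, ← ENNReal.ofReal_pow (by positivity)]
    congr 1; ring
  · have hsub : (fun u => P (ffG d η (z u))) '' (S ∩ {u | η ≤ θ u}) ⊆
        P '' ((fun x => ffG d η (pB A x)) '' {x ∈ lf '' S | η ≤ tau d (pB A x)}) := by
      rintro _ ⟨u, ⟨hu, huθ⟩, rfl⟩
      exact ⟨_, ⟨lf u, ⟨mem_image_of_mem _ hu, huθ⟩, rfl⟩, rfl⟩
    refine measure_mono_null hsub ?_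
    rw [← le_zero_iff]
    refine (hPL.hausdorffMeasure_image_le (by positivity) _).trans ?_
    rw [hAN η hη0, mul_zero]

end

/-! ### Comparison of the slice with its projections -/

section

variable {n d : ℕ}

lemma exists_small {Q : ℝ≥0∞} (hQ : Q ≠ ⊤) : ∃ s : ℝ, 0 < s ∧ s < 1 ∧ ENNReal.ofReal s * Q ≤ 1/4 := by
  refine ⟨1 / (4 * (Q.toReal + 1)), by positivity, ?_, ?_⟩
  · rw [div_lt_one (by positivity)]; linarith [ENNReal.toReal_nonneg (a := Q)]
  · rw [← ENNReal.ofReal_toReal hQ, ← ENNReal.ofReal_mul (by positivity),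
      ENNReal.toReal_ofReal ENNReal.toReal_nonneg,
      show (1/4 : ℝ≥0∞) = ENNReal.ofReal (1/4) by
        rw [ENNReal.ofReal_div_of_pos (by norm_num)]; simp]
    refine ENNReal.ofReal_le_ofReal ?_
    have := ENNReal.toReal_nonneg (a := Q)
    rw [div_mul_eq_mul_div, div_le_div_iff₀ (by positivity) (by norm_num)]
    linarith

lemma sphere_slice_fin {E : Set (Euc n)} (hE : IsMinimalSet n (d+1) E) (hc : IsConeAt0 E) :
    μH[(d:ℝ)] (E ∩ sphere 0 1) < ⊤ := by
  refine (le_kap inter_subset_right).trans_lt (ENNReal.mul_lt_top (ENNReal.pow_lt_top (by simp)) ?_)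
  refine (measure_mono ?_).trans_lt (hE.2.1 2 (by norm_num))
  rintro _ ⟨ρ, hρ, u, hu, rfl⟩
  refine ⟨hc u hu.1 ρ hρ.1, ?_⟩
  have hu1 : ‖u‖ = 1 := by simpa using hu.2
  rw [mem_ball_zero_iff, norm_smul, hu1, Real.norm_of_nonneg hρ.1.le]
  linarith [hρ.2]

lemma isCompact_slice {E : Set (Euc n)} (hE : IsMinimalSet n (d+1) E) : IsCompact (E ∩ sphere 0 1) :=
  (isCompact_sphere 0 1).inter_left hE.1

/-- Cut-off used to localise a deformation in `B(x,r)`: equal to `1` on `B(x,(1-ε)r)` and to `0`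
outside `B(x,r)`. -/
def cutoff (x : Euc n) (r ε : ℝ) (u : Euc n) : ℝ := max 0 (min 1 ((r - dist u x) / (ε * r)))

lemma cutoff_nonneg (x : Euc n) (r ε : ℝ) (u : Euc n) : 0 ≤ cutoff x r ε u := le_max_left _ _

lemma cutoff_le_one (x : Euc n) (r ε : ℝ) (u : Euc n) : cutoff x r ε u ≤ 1 :=
  max_le zero_le_one (min_le_left _ _)

lemma cutoff_eq_zero {x : Euc n} {r ε : ℝ} (h : 0 < ε * r) {u : Euc n} (hu : r ≤ dist u x) :
    cutoff x r ε u = 0 := by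
  refine max_eq_left ((min_le_right _ _).trans ?_)
  exact div_nonpos_of_nonpos_of_nonneg (by linarith) h.le

lemma cutoff_eq_one {x : Euc n} {r ε : ℝ} (h : 0 < ε * r) {u : Euc n} (hu : dist u x ≤ (1 - ε) * r) :
    cutoff x r ε u = 1 := by
  have : 1 ≤ (r - dist u x) / (ε * r) := by rw [le_div_iff₀ h]; linarith
  rw [cutoff, min_eq_left this]; exact max_eq_right zero_le_one

lemma cutoff_lip {x : Euc n} {r ε : ℝ} (h : 0 < ε * r) (u v : Euc n) :
    |cutoff x r ε u - cutoff x r ε v| ≤ dist u v / (ε * r) := by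
  unfold cutoff
  refine (abs_max_sub_max_le_max _ _ _ _).trans (max_le (by simp; positivity) ?_)
  refine (abs_min_sub_min_le_max _ _ _ _).trans (max_le (by simp; positivity) ?_)
  rw [← sub_div, abs_div, abs_of_pos h]
  gcongr
  rw [sub_sub_sub_cancel_left, dist_comm u v]
  exact abs_dist_sub_le v u x

/-- The map `T` localised in `B(x,r)`: it is interpolated with the identity across the layer of relative
width `ε` along the boundary. -/
def locDef (T : Euc n → Euc n) (x : Euc n) (r ε : ℝ) (u : Euc n) : Euc n :=
  u + cutoff x r ε u • (T u - u)

lemma locDef_dist {T : Euc n → Euc n} {x : Euc n} {r ε D : ℝ} {u : Euc n} (hu : dist (T u) u ≤ D) :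
    dist (locDef T x r ε u) u ≤ D := by
  rw [locDef, dist_eq_norm, add_sub_cancel_left, norm_smul, Real.norm_of_nonneg (cutoff_nonneg _ _ _ _),
    ← dist_eq_norm]
  refine le_trans ?_ hu
  exact mul_le_of_le_one_left dist_nonneg (cutoff_le_one _ _ _ _)

lemma locDef_lip {T : Euc n → Euc n} {x : Euc n} {r ε D l : ℝ} (h : 0 < ε * r) (hl : 0 ≤ l)
    {u v : Euc n} (hv : dist (T v) v ≤ D * (ε * r)) (hT : dist (T u) (T v) ≤ l * dist u v) :
    dist (locDef T x r ε u) (locDef T x r ε v) ≤ (1 + l + D) * dist u v := by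
  set a := cutoff x r ε u with ha
  set b := cutoff x r ε v with hb
  have e : locDef T x r ε u - locDef T x r ε v =
      (1 - a) • (u - v) + a • (T u - T v) + (a - b) • (T v - v) := by
    simp only [locDef, ← ha, ← hb, smul_sub, sub_smul, one_smul]; abel
  have ha0 : 0 ≤ a := cutoff_nonneg _ _ _ _
  have ha1 : a ≤ 1 := cutoff_le_one _ _ _ _
  rw [dist_eq_norm, e]
  calc _ ≤ ‖(1 - a) • (u - v)‖ + ‖a • (T u - T v)‖ + ‖(a - b) • (T v - v)‖ := norm_add₃_le
    _ = (1 - a) * dist u v + a * dist (T u) (T v) + |a - b| * dist (T v) v := by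
        rw [norm_smul, norm_smul, norm_smul, Real.norm_of_nonneg ha0,
          Real.norm_of_nonneg (sub_nonneg.2 ha1), Real.norm_eq_abs, dist_eq_norm, dist_eq_norm, dist_eq_norm]
    _ ≤ 1 * dist u v + 1 * (l * dist u v) + dist u v / (ε * r) * (D * (ε * r)) := by
        gcongr
        · linarith
        · exact cutoff_lip h u v
    _ = _ := by
        rw [div_mul_eq_mul_div, ← mul_assoc (dist u v), mul_div_cancel_right₀ _ h.ne']; ring

lemma half_absorb {a b : ℝ≥0∞} (ha : a ≠ ⊤) (h : a ≤ b + (1/4 * a + 1/4 * a)) : a ≤ 2 * b := by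
  have e : (1/4 * a + 1/4 * a) = a / 2 := by
    rw [← add_mul, ENNReal.div_add_div_same, show (1 + 1 : ℝ≥0∞) = 2 by norm_num, ENNReal.div_eq_inv_mul,
      show (4:ℝ≥0∞) = 2 * 2 by norm_num, ENNReal.mul_inv (by simp) (by simp), mul_assoc 2⁻¹,
      ENNReal.inv_mul_cancel (by simp) (by simp), mul_one, ENNReal.div_eq_inv_mul]
  rw [e] at h
  have h2 : a / 2 + a / 2 ≤ b + a / 2 := by rwa [ENNReal.add_halves]
  have h3 : a / 2 ≤ b := (ENNReal.add_le_add_iff_right (ENNReal.div_ne_top ha (by simp))).1 h2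
  rw [← ENNReal.add_halves a, two_mul]
  exact add_le_add h3 h3

set_option maxHeartbeats 1000000 in
/-- Comparison of the slice `K` of a minimal cone with its Federer–Fleming projections: if `B`
carries little of the mass of `K` in a ball and contains its boundary layer, the mass is bounded by
that of the projected skeleton, and vanishes if the rest is purely unrectifiable. -/
lemma core (h : d + 1 ≤ n) : ∃ s₀ : ℝ, 0 < s₀ ∧ s₀ < 1 ∧ ∃ ε₀ : ℝ, 0 < ε₀ ∧ ε₀ < 1 ∧
    ∃ Cε : ℝ → ℝ≥0, ∀ (E : Set (Euc n)), IsMinimalSet n (d+1) E → IsConeAt0 E →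
    ∀ (ε : ℝ), 0 < ε → ε ≤ ε₀ → ∀ (x : Euc n) (r : ℝ), 0 < r → r ≤ 3 →
    ∀ B : Set (Euc n), MeasurableSet B → B ⊆ (E ∩ sphere 0 1) ∩ closedBall x r →
    ((E ∩ sphere 0 1) ∩ closedBall x r) \ ball x ((1 - ε) * r) ⊆ B →
    μH[(d:ℝ)] B ≤ ENNReal.ofReal s₀ * μH[(d:ℝ)] ((E ∩ sphere 0 1) ∩ closedBall x r) →
    μH[(d:ℝ)] ((E ∩ sphere 0 1) ∩ closedBall x r) ≤ Cε ε * ENNReal.ofReal (r ^ d) ∧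
    ∀ S : Set (Euc n), IsCompact S → μH[(d:ℝ)] S < ⊤ → PU d S →
      ((E ∩ sphere 0 1) ∩ closedBall x r) \ B ⊆ S →
      μH[(d:ℝ)] ((E ∩ sphere 0 1) ∩ closedBall x r) = 0 := by
  have hn : 0 < n := by omega
  have hn0 : (0:ℝ) < n := by exact_mod_cast hn
  have hn1 : (1:ℝ) ≤ n := by exact_mod_cast hn
  have havg : avgC n d ≠ ⊤ := by
    unfold avgC
    exact ENNReal.mul_ne_top (ENNReal.natCast_ne_top _) (ENNReal.pow_ne_top (by simp))
  set Q1 : ℝ≥0∞ := 2 ^ (d+2) * (ENNReal.ofReal (2 ^ (d+1) * 3 * (18 * n) ^ d * (3 * n)) * (avgC n d * 2))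
    with hQ1
  set Q2 : ℝ≥0∞ := 2 ^ (d+2) * (ENNReal.ofReal (2 ^ (d+1) * 3) * (ENNReal.ofReal ((15 * n) ^ d) *
    (avgC n d * 2))) with hQ2
  have hQ1t : Q1 ≠ ⊤ := ENNReal.mul_ne_top (ENNReal.pow_ne_top (by simp))
    (ENNReal.mul_ne_top ENNReal.ofReal_ne_top (ENNReal.mul_ne_top havg (by simp)))
  have hQ2t : Q2 ≠ ⊤ := ENNReal.mul_ne_top (ENNReal.pow_ne_top (by simp))
    (ENNReal.mul_ne_top ENNReal.ofReal_ne_top (ENNReal.mul_ne_top ENNReal.ofReal_ne_top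
      (ENNReal.mul_ne_top havg (by simp))))
  obtain ⟨s₀, hs0, hs1, hsQ⟩ := exists_small hQ2t
  obtain ⟨ε₁, hε10, hε11, hεQ⟩ := exists_small hQ1t
  obtain ⟨CR, hFF⟩ := federer_fleming (n := n) (d := d) h
  set D : ℝ≥0∞ := 2 ^ (d+2) * ENNReal.ofReal (2 ^ (d+1) * 3) with hD
  have hDt : D ≠ ⊤ := ENNReal.mul_ne_top (ENNReal.pow_ne_top (by simp)) ENNReal.ofReal_ne_top
  set G : ℝ≥0∞ := ENNReal.ofReal ((15 * n) ^ d) with hG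
  refine ⟨s₀, hs0, hs1, min ε₁ (1 / (3 * n)), by positivity, (min_le_left _ _).trans_lt hε11,
    fun ε => (2 * (D * (ENNReal.ofReal (ε ^ d) * CR (1/ε) + G))).toNNReal, ?_⟩
  intro E hE hc ε hε hεε x r hr hr3 B hBm hBW hlay hBs
  set W := (E ∩ sphere 0 1) ∩ closedBall x r with hW
  have hε1 : ε ≤ ε₁ := hεε.trans (min_le_left _ _)
  have hεn : ε ≤ 1 / (3 * n) := hεε.trans (min_le_right _ _)
  have hWm : MeasurableSet W := ((isCompact_slice hE).isClosed.inter isClosed_closedBall).measurableSet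
  have hWt : μH[(d:ℝ)] W < ⊤ := (measure_mono inter_subset_left).trans_lt (sphere_slice_fin hE hc)
  have hεr : 0 < ε * r := by positivity
  have key : ∀ (S : Set (Euc n)), IsCompact S → μH[(d:ℝ)] S < ⊤ → PU d S → ∀ ε' : ℝ≥0∞, 0 < ε' →
      ∃ (T : Euc n → Euc n) (V : Set (Euc n)), μH[(d:ℝ)] W ≤ 2 * (D * (μH[(d:ℝ)] (T '' ((W \ B) ∩ V)) + G * ε')) ∧
        μH[(d:ℝ)] (T '' (S ∩ V)) = 0 ∧
        μH[(d:ℝ)] (T '' (closedBall x r ∩ V)) ≤ ENNReal.ofReal ((ε * r) ^ d) * CR (1/ε) := by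
    intro S hSc hSt hSPU ε' hε'
    -- the weight `s₀⁻¹` on `B` turns `H^d(B) ≤ s₀ H^d(W)` into a bound for the image of `B`
    set σ : Measure (Euc n) := (μH[(d:ℝ)]).restrict W + ENNReal.ofReal s₀⁻¹ • (μH[(d:ℝ)]).restrict B with hσ
    have hσle : σ univ ≤ 2 * μH[(d:ℝ)] W := by
      rw [hσ]
      simp only [Measure.add_apply, Measure.smul_apply, Measure.restrict_apply_univ, smul_eq_mul]
      rw [two_mul]
      gcongr
      calc ENNReal.ofReal s₀⁻¹ * μH[(d:ℝ)] B ≤ ENNReal.ofReal s₀⁻¹ * (ENNReal.ofReal s₀ * μH[(d:ℝ)] W) := by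
            gcongr
        _ = μH[(d:ℝ)] W := by
            rw [← mul_assoc, ← ENNReal.ofReal_mul (by positivity), inv_mul_cancel₀ hs0.ne']
            simp
    have hσf : IsFiniteMeasure σ := ⟨hσle.trans_lt (ENNReal.mul_lt_top (by simp) hWt)⟩
    obtain ⟨T, m, θ, hθc, hθ1, hTL, hTd, hsum, htail, hskel, hkill⟩ :=
      hFF x (ε * r) hεr σ S hSc hSt hSPU ε' hε'
    have hθm : ∀ t : ℝ, MeasurableSet {u | θ u ≤ t} := fun t =>
      (isClosed_le hθc continuous_const).measurableSet
    have hσW : ∀ t : ℝ, μH[(d:ℝ)] (W ∩ {u | θ u ≤ t}) ≤ σ {u | θ u ≤ t} := by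
      intro t
      rw [hσ, Measure.add_apply, Measure.restrict_apply (hθm t), inter_comm]
      exact le_self_add
    have hσB : ∀ t : ℝ, μH[(d:ℝ)] (B ∩ {u | θ u ≤ t}) ≤ ENNReal.ofReal s₀ * σ {u | θ u ≤ t} := by
      intro t
      rw [hσ, Measure.add_apply, Measure.smul_apply, Measure.restrict_apply (hθm t) (s := B), smul_eq_mul,
        mul_add, ← mul_assoc, ← ENNReal.ofReal_mul hs0.le, mul_inv_cancel₀ hs0.ne', ENNReal.ofReal_one,
        one_mul, inter_comm]
      exact le_add_self
    set g := locDef T x r ε with hg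
    have hgl : ∀ i : ℕ, ∀ A : Set (Euc n), (∀ u ∈ A, (2⁻¹:ℝ) ^ (i+1) ≤ max (θ u) (2⁻¹ ^ m)) →
        LipschitzOnWith (Real.toNNReal (15 * n * 2 ^ i)) g A := by
      intro i A hA
      refine LipschitzOnWith.of_dist_le_mul fun u hu v hv => ?_
      rw [Real.coe_toNNReal _ (by positivity)]
      have h1 := (hTL (2⁻¹ ^ (i+1)) (by positivity)).dist_le_mul u (hA u hu) v (hA v hv)
      rw [Real.coe_toNNReal _ (by positivity)] at h1
      have h2 : dist (T v) v ≤ (2 * n) * (ε * r) := hTd v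
      refine (locDef_lip hεr (by positivity) h2 h1).trans ?_
      gcongr
      have h3 : 6 * (n:ℝ) / 2⁻¹ ^ (i+1) = 12 * (n * 2 ^ i) := by
        rw [inv_pow, div_inv_eq_mul, pow_succ]; ring
      rw [h3]
      have h4 : (n:ℝ) ≤ n * 2 ^ i := le_mul_of_one_le_right hn0.le (one_le_pow₀ (by norm_num))
      linarith
    have hpow : (2⁻¹:ℝ) ^ (m+1) ≤ 2⁻¹ ^ m :=
      pow_le_pow_of_le_one (by norm_num) (by norm_num) (Nat.le_succ m)
    have hgL : LipschitzWith (Real.toNNReal (15 * n * 2 ^ m)) g := by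
      rw [← lipschitzOnWith_univ]
      exact hgl m univ fun u _ => le_max_of_le_right hpow
    obtain ⟨δ, hδ⟩ : ∃ δ : ℝ, δ = n * (ε * r) := ⟨_, rfl⟩
    have hδ0 : 0 < δ := by rw [hδ]; positivity
    have hδε : δ ≤ 3 * n * ε := by rw [hδ]; nlinarith [mul_pos hn0 hε]
    have hδ1 : δ ≤ 1 := by
      refine hδε.trans ?_
      rw [le_div_iff₀ (by positivity)] at hεn
      linarith
    have hgd : ∀ u, dist (g u) u ≤ 2 * δ := fun u => (locDef_dist (hTd u)).trans (by rw [hδ]; linarith)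
    -- dyadic pieces according to the distance `θ` to the dual skeleton; on `P i` the map `g` is
    -- `(15 n 2^i)`-Lipschitz
    set P : ℕ → Set (Euc n) := fun i => {u | θ u ≤ 2⁻¹ ^ i} ∩ {u | (2⁻¹:ℝ) ^ (i+1) ≤ max (θ u) (2⁻¹ ^ m)}
      with hP
    have hPc : ∀ u, ∃ i, u ∈ P i := by
      intro u
      by_cases hu : θ u ≤ 2⁻¹ ^ m
      · exact ⟨m, hu, le_max_of_le_right hpow⟩
      · have hex : ∃ i : ℕ, (2⁻¹:ℝ) ^ i < θ u := ⟨m, not_le.1 hu⟩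
        have hmin := Nat.find_spec hex
        have hne : Nat.find hex ≠ 0 := by
          intro h0
          rw [h0, pow_zero] at hmin
          linarith [hθ1 u]
        obtain ⟨i, hi⟩ := Nat.exists_eq_succ_of_ne_zero hne
        have hi' : θ u ≤ 2⁻¹ ^ i := not_lt.1 (Nat.find_min hex (by omega))
        rw [hi] at hmin
        exact ⟨i, hi', le_max_of_le_left hmin.le⟩
    have hPl : ∀ i, ∀ A, LipschitzOnWith (Real.toNNReal (15 * n * 2 ^ i)) g (A ∩ P i) :=
      fun i A => hgl i _ fun u hu => hu.2.2
    have hqm := quasi_min hE hc (W := W) inter_subset_left hWm hδ0 hδ1 (g := g)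
      (hgL.lipschitzOnWith) (fun u _ => hgd u) (by
        rintro u ⟨hu, huW⟩
        have : r ≤ dist u x := by
          by_contra hlt
          exact huW ⟨hu, (not_le.1 hlt).le⟩
        simp only [hg, locDef, cutoff_eq_zero hεr this, zero_smul, add_zero])
      (fun i => W ∩ P i) (fun i => Real.toNNReal (15 * n * 2 ^ i))
      (fun u hu => by obtain ⟨i, hi⟩ := hPc u; exact mem_iUnion.2 ⟨i, hu, hi⟩) (fun i => hPl i W)
    have hS1 : ∑' i : ℕ, ENNReal.ofReal (2 ^ (d+1) * 3 * (3 + (Real.toNNReal (15 * n * 2 ^ i) : ℝ)) ^ d * δ) *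
        μH[(d:ℝ)] (W ∩ P i) ≤
        ENNReal.ofReal ε₁ * (ENNReal.ofReal (2 ^ (d+1) * 3 * (18 * n) ^ d * (3 * n)) * (avgC n d * 2)) *
          μH[(d:ℝ)] W := by
      calc _ ≤ ∑' i : ℕ, ENNReal.ofReal (2 ^ (d+1) * 3 * (18 * n) ^ d * (3 * n) * ε₁) *
            (ENNReal.ofReal ((2:ℝ) ^ (i * d)) * σ {u | θ u ≤ 2⁻¹ ^ i}) := by
            refine ENNReal.tsum_le_tsum fun i => ?_
            rw [← mul_assoc (ENNReal.ofReal _) (ENNReal.ofReal _), ← ENNReal.ofReal_mul (by positivity)]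
            refine mul_le_mul' (ENNReal.ofReal_le_ofReal ?_) ((measure_mono ?_).trans (hσW (2⁻¹ ^ i)))
            · rw [Real.coe_toNNReal _ (by positivity)]
              have h3 : (3:ℝ) + 15 * n * 2 ^ i ≤ 18 * n * 2 ^ i := by
                have h4 : (1:ℝ) ≤ n * 2 ^ i := one_le_mul_of_one_le_of_one_le hn1 (one_le_pow₀ (by norm_num))
                linarith
              calc (2:ℝ) ^ (d+1) * 3 * (3 + 15 * n * 2 ^ i) ^ d * δ
                  ≤ 2 ^ (d+1) * 3 * (18 * n * 2 ^ i) ^ d * (3 * n * ε₁) := by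
                    gcongr
                    exact hδε.trans (by gcongr)
                _ = _ := by rw [mul_pow (18 * (n:ℝ)), ← pow_mul]; ring
            · exact fun u hu => ⟨hu.1, hu.2.1⟩
        _ ≤ ENNReal.ofReal (2 ^ (d+1) * 3 * (18 * n) ^ d * (3 * n) * ε₁) * (avgC n d * (2 * μH[(d:ℝ)] W)) := by
            rw [ENNReal.tsum_mul_left]
            refine mul_le_mul_right (hsum.trans (mul_le_mul_right hσle _)) _
        _ = _ := by
            rw [ENNReal.ofReal_mul (by positivity)]; ring
    have hgB : μH[(d:ℝ)] (g '' B) ≤ ENNReal.ofReal s₀ * (G * (avgC n d * 2)) * μH[(d:ℝ)] W := by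
      have hcov : g '' B ⊆ ⋃ i, g '' (B ∩ P i) := by
        rintro _ ⟨u, hu, rfl⟩
        obtain ⟨i, hi⟩ := hPc u
        exact mem_iUnion.2 ⟨i, mem_image_of_mem g ⟨hu, hi⟩⟩
      refine (measure_mono hcov).trans ((measure_iUnion_le _).trans ?_)
      calc _ ≤ ∑' i : ℕ, (G * ENNReal.ofReal s₀) * (ENNReal.ofReal ((2:ℝ) ^ (i * d)) * σ {u | θ u ≤ 2⁻¹ ^ i}) := by
            refine ENNReal.tsum_le_tsum fun i => ?_
            refine ((hPl i B).hausdorffMeasure_image_le (by positivity)).trans ?_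
            rw [ENNReal.rpow_natCast, ← ENNReal.ofReal, ← ENNReal.ofReal_pow (by positivity)]
            calc _ ≤ ENNReal.ofReal ((15 * n * 2 ^ i) ^ d) * (ENNReal.ofReal s₀ * σ {u | θ u ≤ 2⁻¹ ^ i}) := by
                  refine mul_le_mul_right ((measure_mono ?_).trans (hσB (2⁻¹ ^ i))) _
                  exact fun u hu => ⟨hu.1, hu.2.1⟩
              _ = _ := by
                  rw [mul_pow (15 * (n:ℝ)), ← pow_mul, ENNReal.ofReal_mul (by positivity)]; ring
        _ ≤ (G * ENNReal.ofReal s₀) * (avgC n d * (2 * μH[(d:ℝ)] W)) := by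
            rw [ENNReal.tsum_mul_left]
            exact mul_le_mul_right (hsum.trans (mul_le_mul_right hσle _)) _
        _ = _ := by ring
    have hgZ : μH[(d:ℝ)] (g '' (W ∩ {u | θ u ≤ 2⁻¹ ^ m})) ≤ G * ε' := by
      refine (hgL.hausdorffMeasure_image_le (by positivity) _).trans ?_
      rw [ENNReal.rpow_natCast, ← ENNReal.ofReal, ← ENNReal.ofReal_pow (by positivity),
        mul_pow (15 * (n:ℝ)), ← pow_mul, ENNReal.ofReal_mul (by positivity), mul_assoc]
      refine mul_le_mul_right (le_trans ?_ htail) _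
      exact mul_le_mul_right (hσW _) _
    have hgW : μH[(d:ℝ)] (g '' W) ≤ μH[(d:ℝ)] (T '' ((W \ B) ∩ {u | 2⁻¹ ^ m ≤ θ u})) + G * ε' +
        ENNReal.ofReal s₀ * (G * (avgC n d * 2)) * μH[(d:ℝ)] W := by
      have hcov : g '' W ⊆ (T '' ((W \ B) ∩ {u | 2⁻¹ ^ m ≤ θ u}) ∪ g '' (W ∩ {u | θ u ≤ 2⁻¹ ^ m})) ∪ g '' B := by
        rintro _ ⟨u, hu, rfl⟩
        by_cases huB : u ∈ B
        · exact Or.inr (mem_image_of_mem g huB)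
        rcases le_total ((2⁻¹:ℝ) ^ m) (θ u) with h1 | h1
        · refine Or.inl (Or.inl ⟨u, ⟨⟨hu, huB⟩, h1⟩, ?_⟩)
          have : u ∈ ball x ((1 - ε) * r) := by
            by_contra hb
            exact huB (hlay ⟨hu, hb⟩)
          simp only [hg, locDef, cutoff_eq_one hεr (mem_ball.1 this).le, one_smul, add_sub_cancel]
        · exact Or.inl (Or.inr (mem_image_of_mem g ⟨hu, h1⟩))
      refine (measure_mono hcov).trans ((measure_union_le _ _).trans ?_)
      exact add_le_add ((measure_union_le _ _).trans (add_le_add_right hgZ _)) hgB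
    refine ⟨T, {u | 2⁻¹ ^ m ≤ θ u}, ?_, hkill, ?_⟩
    -- the image of `B` and the layer error each absorb a quarter of the mass
    · refine half_absorb hWt.ne ?_
      have hgsub : g '' W ⊆ closedBall 0 3 := by
        rintro _ ⟨u, hu, rfl⟩
        have hu1 : ‖u‖ = 1 := by simpa using hu.1.2
        have := hgd u
        rw [mem_closedBall_zero_iff]
        rw [dist_eq_norm] at this
        calc ‖g u‖ = ‖(g u - u) + u‖ := by congr 1; abel
          _ ≤ ‖g u - u‖ + ‖u‖ := norm_add_le _ _
          _ ≤ 3 := by linarith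
      have hk := kap_le (d := d) (by norm_num : (0:ℝ) < 3) hgsub
      have hlk := le_kap (d := d) (A := W) (fun u hu => hu.1.2)
      set X := μH[(d:ℝ)] (T '' ((W \ B) ∩ {u | 2⁻¹ ^ m ≤ θ u})) + G * ε' with hX
      calc μH[(d:ℝ)] W ≤ 2 ^ (d+2) * (ENNReal.ofReal (2 ^ (d+1) * 3) * (X +
            ENNReal.ofReal s₀ * (G * (avgC n d * 2)) * μH[(d:ℝ)] W) +
            ENNReal.ofReal ε₁ * (ENNReal.ofReal (2 ^ (d+1) * 3 * (18 * n) ^ d * (3 * n)) * (avgC n d * 2)) *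
            μH[(d:ℝ)] W) := by
            refine hlk.trans (mul_le_mul_right (hqm.trans (add_le_add (hk.trans ?_) hS1)) _)
            exact mul_le_mul_right hgW _
        _ = D * X + (ENNReal.ofReal s₀ * Q2 * μH[(d:ℝ)] W + ENNReal.ofReal ε₁ * Q1 * μH[(d:ℝ)] W) := by
            rw [hD, hQ1, hQ2, hG]; ring
        _ ≤ _ := by gcongr
    · have := hskel (1/ε)
      rwa [show 1 / ε * (ε * r) = r by field_simp] at this
  constructor
  · obtain ⟨T, V, h1, -, h3⟩ := key ∅ isCompact_empty (by simp) (fun F hF _ => by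
      rw [subset_empty_iff.1 hF]; simp) (ENNReal.ofReal (r ^ d)) (by simp; positivity)
    refine h1.trans ?_
    rw [ENNReal.coe_toNNReal]
    · calc _ ≤ 2 * (D * (ENNReal.ofReal ((ε * r) ^ d) * CR (1/ε) + G * ENNReal.ofReal (r ^ d))) := by
            gcongr
            refine (measure_mono (image_mono ?_)).trans h3
            exact fun u hu => ⟨hu.1.1.2, hu.2⟩
        _ = _ := by rw [mul_pow, ENNReal.ofReal_mul (by positivity)]; ring
    · refine ENNReal.mul_ne_top (by simp) (ENNReal.mul_ne_top hDt (ENNReal.add_ne_top.2 ⟨?_, ENNReal.ofReal_ne_top⟩))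
      exact ENNReal.mul_ne_top ENNReal.ofReal_ne_top ENNReal.coe_ne_top
  · intro S hSc hSt hSPU hWS
    rw [← le_zero_iff]
    refine ENNReal.le_of_forall_pos_le_add fun η hη _ => ?_
    rw [zero_add]
    have hGD : 2 * (D * G) ≠ ⊤ := ENNReal.mul_ne_top (by simp) (ENNReal.mul_ne_top hDt ENNReal.ofReal_ne_top)
    obtain ⟨T, V, h1, h2, -⟩ := key S hSc hSt hSPU ((η:ℝ≥0∞) / (2 * (D * G)))
      (ENNReal.div_pos (by exact_mod_cast hη.ne') hGD)
    refine h1.trans ?_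
    have : μH[(d:ℝ)] (T '' ((W \ B) ∩ V)) = 0 := measure_mono_null (image_mono (inter_subset_inter_left _ hWS)) h2
    rw [this, zero_add]
    calc _ = (2 * (D * G)) * ((η:ℝ≥0∞) / (2 * (D * G))) := by ring
      _ ≤ η := ENNReal.mul_div_le

end

/-! ### Upper Ahlfors regularity -/

section

variable {n d : ℕ}

/-- If the boundary layer of `B(x,r)` carries more than the fraction `s` of the mass, then the mass
drops by the factor `1 - s` on passing to the radius `(1 - 2ε)r`. -/
lemma layer_step {K : Set (Euc n)} (hK : MeasurableSet K) (hfin : μH[(d:ℝ)] K < ⊤) (x : Euc n) {r ε s : ℝ}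
    (hr : 0 < r) (hε : 0 < ε) (hs : 0 ≤ s) (hs1 : s ≤ 1)
    (hl : ¬ μH[(d:ℝ)] ((K ∩ closedBall x r) \ ball x ((1 - ε) * r)) ≤
      ENNReal.ofReal s * μH[(d:ℝ)] (K ∩ closedBall x r)) :
    μH[(d:ℝ)] (K ∩ closedBall x ((1 - 2 * ε) * r)) ≤
      ENNReal.ofReal (1 - s) * μH[(d:ℝ)] (K ∩ closedBall x r) := by
  have hlt : (1 - 2 * ε) * r < (1 - ε) * r := by nlinarith
  have hle : (1 - 2 * ε) * r ≤ r := by nlinarith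
  have hm : MeasurableSet ((K ∩ closedBall x r) \ ball x ((1 - ε) * r)) :=
    (hK.inter measurableSet_closedBall).diff measurableSet_ball
  have h1 : μH[(d:ℝ)] (K ∩ closedBall x ((1 - 2 * ε) * r)) +
      μH[(d:ℝ)] ((K ∩ closedBall x r) \ ball x ((1 - ε) * r)) ≤ μH[(d:ℝ)] (K ∩ closedBall x r) := by
    rw [← measure_union _ hm]
    · exact measure_mono (union_subset (inter_subset_inter_right _ (closedBall_subset_closedBall hle))
        sdiff_subset)
    · rw [Set.disjoint_left]
      rintro y ⟨_, hy⟩ ⟨_, hy2⟩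
      exact hy2 (closedBall_subset_ball hlt hy)
  have hWf : μH[(d:ℝ)] (K ∩ closedBall x r) ≠ ⊤ := ((measure_mono inter_subset_left).trans_lt hfin).ne
  have h2 : ENNReal.ofReal (1 - s) * μH[(d:ℝ)] (K ∩ closedBall x r) +
      ENNReal.ofReal s * μH[(d:ℝ)] (K ∩ closedBall x r) = μH[(d:ℝ)] (K ∩ closedBall x r) := by
    rw [← add_mul, ← ENNReal.ofReal_add (by linarith) hs]; simp
  push Not at hl
  refine (ENNReal.add_le_add_iff_right (ENNReal.mul_ne_top ENNReal.ofReal_ne_top hWf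
    : ENNReal.ofReal s * μH[(d:ℝ)] (K ∩ closedBall x r) ≠ ⊤)).1 ?_
  rw [h2]
  exact (add_le_add_right hl.le _).trans h1

lemma pow_lower {s : ℝ} (m : ℕ) {ε : ℝ} (hε : 0 < ε)
    (h : ε ≤ s / (2 * (m + 1))) (h1 : ε ≤ 1 / 7) : 1 - s ≤ (1 - 2 * ε) ^ m := by
  have h2 := one_add_mul_le_pow (a := -2 * ε) (by linarith) m
  have h3 : ε * (2 * (m+1)) ≤ s := by rwa [le_div_iff₀ (by positivity)] at h
  have h4 : 1 + -2 * ε = 1 - 2 * ε := by ring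
  rw [h4] at h2
  refine le_trans ?_ h2
  nlinarith

/-- Upper Ahlfors regularity of the slice, with a constant depending only on `n` and `d`. Along the
radii `3ρ^k`, `ρ = 1 - 2ε`: if the boundary layer is thin then `core` bounds the mass directly;
otherwise `layer_step` makes the mass decay at least as fast as `ρ^d`. -/
lemma upper_reg (h : d + 1 ≤ n) : ∃ C₀ : ℝ≥0, ∀ (E : Set (Euc n)), IsMinimalSet n (d+1) E → IsConeAt0 E →
    ∀ x ∈ sphere (0 : Euc n) 1, ∀ r, 0 < r → r ≤ 3 →
      μH[(d:ℝ)] ((E ∩ sphere 0 1) ∩ closedBall x r) ≤ C₀ * ENNReal.ofReal (r ^ d) := by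
  obtain ⟨s₀, hs0, hs1, ε₀, hε0, hε1, Cε, hcore⟩ := core (d := d) h
  obtain ⟨ε, hε, hεε, hε7, hεs⟩ : ∃ ε : ℝ, 0 < ε ∧ ε ≤ ε₀ ∧ ε ≤ 1/7 ∧ ε ≤ s₀ / (2 * (d + 1)) :=
    ⟨min ε₀ (min (1/7) (s₀ / (2 * (d + 1)))), by positivity, min_le_left _ _,
      (min_le_right _ _).trans (min_le_left _ _), (min_le_right _ _).trans (min_le_right _ _)⟩
  have hρ := pow_lower d hε hεs hε7
  obtain ⟨ρ, hρd⟩ : ∃ ρ, ρ = 1 - 2 * ε := ⟨_, rfl⟩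
  rw [← hρd] at hρ
  have hρ0 : 0 < ρ := by linarith
  have hρ1 : ρ < 1 := by linarith
  have hρd0 : 0 < ρ ^ d := by positivity
  have hρd1 : ρ ^ d ≤ 1 := pow_le_one₀ hρ0.le hρ1.le
  obtain ⟨Q, hQ⟩ : ∃ Q, Q = Real.toNNReal ((ρ ^ d)⁻¹) := ⟨_, rfl⟩
  have hQm : ∀ t : ℝ, ENNReal.ofReal (t ^ d) ≤ Q * ENNReal.ofReal ((ρ * t) ^ d) := by
    intro t
    rw [hQ, ← ENNReal.ofReal, ← ENNReal.ofReal_mul (by positivity), mul_pow, ← mul_assoc,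
      inv_mul_cancel₀ hρd0.ne', one_mul]
  have hQ1 : (1:ℝ≥0∞) ≤ Q := by
    rw [hQ, ← ENNReal.ofReal, ENNReal.one_le_ofReal]; exact (one_le_inv₀ hρd0).2 hρd1
  refine ⟨Cε ε * Q * Q, fun E hE hc x hx r hr hr3 => ?_⟩
  have hK := isCompact_slice hE
  have hfin := sphere_slice_fin hE hc
  have hx1 : ‖x‖ = 1 := by simpa using hx
  have key : ∀ k : ℕ, μH[(d:ℝ)] ((E ∩ sphere 0 1) ∩ closedBall x (3 * ρ ^ k)) ≤
      Cε ε * Q * ENNReal.ofReal ((3 * ρ ^ k) ^ d) := by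
    intro k
    induction k with
    | zero =>
      -- the ball of radius `3` contains the whole sphere, and its boundary layer misses it
      refine ((hcore E hE hc ε hε hεε x _ (by simp) (by simp) ∅ MeasurableSet.empty (empty_subset _) ?_
        (by simp)).1).trans ?_
      · rintro y ⟨⟨⟨_, hy⟩, _⟩, hy2⟩
        refine (hy2 ?_).elim
        have hy1 : ‖y‖ = 1 := by simpa using hy
        rw [mem_ball, dist_eq_norm]
        have := norm_sub_le y x
        simp only [pow_zero, mul_one]
        linarith
      · gcongr
        exact le_mul_of_one_le_right' hQ1
    | succ k ih =>
      have hp : 0 < ρ ^ k := by positivity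
      have hp1 : ρ ^ k ≤ 1 := pow_le_one₀ hρ0.le hρ1.le
      have hle : 3 * ρ ^ (k+1) = (1 - 2 * ε) * (3 * ρ ^ k) := by rw [← hρd]; ring
      have hle2 : 3 * ρ ^ (k+1) = ρ * (3 * ρ ^ k) := by ring
      by_cases hl : μH[(d:ℝ)] (((E ∩ sphere 0 1) ∩ closedBall x (3 * ρ ^ k)) \ ball x ((1 - ε) * (3 * ρ ^ k))) ≤
        ENNReal.ofReal s₀ * μH[(d:ℝ)] ((E ∩ sphere 0 1) ∩ closedBall x (3 * ρ ^ k))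
      · have h1 := (hcore E hE hc ε hε hεε x (3 * ρ ^ k) (by positivity) (by linarith) _
          ((hK.measurableSet.inter measurableSet_closedBall).diff measurableSet_ball) sdiff_subset
          subset_rfl hl).1
        calc _ ≤ μH[(d:ℝ)] ((E ∩ sphere 0 1) ∩ closedBall x (3 * ρ ^ k)) :=
              measure_mono (inter_subset_inter_right _ (closedBall_subset_closedBall (by
                rw [hle2]; nlinarith)))
          _ ≤ _ := h1
          _ ≤ Cε ε * (Q * ENNReal.ofReal ((ρ * (3 * ρ ^ k)) ^ d)) := by gcongr; exact hQm _
          _ = _ := by rw [hle2, mul_assoc]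
      · have := layer_step hK.measurableSet hfin x (by positivity) hε hs0.le hs1.le hl
        rw [← hle] at this
        calc _ ≤ _ := this
          _ ≤ ENNReal.ofReal (ρ ^ d) * (Cε ε * Q * ENNReal.ofReal ((3 * ρ ^ k) ^ d)) := by
            gcongr
          _ = Cε ε * Q * (ENNReal.ofReal (ρ ^ d) * ENNReal.ofReal ((3 * ρ ^ k) ^ d)) := by ring
          _ = _ := by rw [← ENNReal.ofReal_mul (by positivity), ← mul_pow, hle2]
  obtain ⟨k, hk1, hk2⟩ := exists_nat_pow_near_of_lt_one (x := r / 3) (y := ρ) (by positivity)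
    (by linarith) hρ0 hρ1
  calc _ ≤ μH[(d:ℝ)] ((E ∩ sphere 0 1) ∩ closedBall x (3 * ρ ^ k)) :=
        measure_mono (inter_subset_inter_right _ (closedBall_subset_closedBall (by linarith)))
    _ ≤ _ := key k
    _ ≤ Cε ε * Q * (Q * ENNReal.ofReal ((ρ * (3 * ρ ^ k)) ^ d)) := by gcongr; exact hQm _
    _ ≤ Cε ε * Q * (Q * ENNReal.ofReal (r ^ d)) := by
        gcongr
        rw [pow_succ] at hk1
        linarith
    _ = _ := by push_cast; ring

end

/-! ### Densities, thin layers and exhaustion by bi-Lipschitz pieces -/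

section

variable {n d : ℕ}

/-- Almost every point of a set of finite `H^d` measure has upper density at least `1/2`. -/
lemma null_low_density {K : Set (Euc n)} (hfin : μH[(d:ℝ)] K < ⊤) {η : ℝ} (hη : 0 < η) :
    μH[(d:ℝ)] {x ∈ K | ∀ r, 0 < r → r < η →
      μH[(d:ℝ)] (K ∩ closedBall x r) ≤ ENNReal.ofReal (r ^ d / 2)} = 0 := by
  obtain ⟨Z, hZ⟩ : ∃ Z, Z = {x ∈ K | ∀ r, 0 < r → r < η →
      μH[(d:ℝ)] (K ∩ closedBall x r) ≤ ENNReal.ofReal (r ^ d / 2)} := ⟨_, rfl⟩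
  rw [← hZ]
  have hZK : Z ⊆ K := by rw [hZ]; exact fun x hx => hx.1
  have hZf : μH[(d:ℝ)] Z < ⊤ := (measure_mono hZK).trans_lt hfin
  have key : ∀ ε : ℝ, 0 < ε → ε < η → μH[(d:ℝ)] Z ≤ ENNReal.ofReal (1/2) * (μH[(d:ℝ)] Z + ENNReal.ofReal ε) := by
    intro ε hε hεη
    obtain ⟨κ, _, t, e, hcov, hne, hsub, he, hdiam, hsum⟩ := cover_of_hm_lt d Z hZf hε
    calc _ ≤ ∑' i, μH[(d:ℝ)] (t i) := (measure_mono hcov).trans (measure_iUnion_le _)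
      _ ≤ ∑' i, ENNReal.ofReal (1/2) * ENNReal.ofReal (e i ^ d) := by
        refine ENNReal.tsum_le_tsum fun i => ?_
        obtain ⟨x, hx⟩ := hne i
        have hxZ := hsub i hx
        rw [hZ] at hxZ
        refine (measure_mono ?_).trans ((hxZ.2 (e i) (he i).1 ((he i).2.trans_lt hεη)).trans ?_)
        · intro y hy
          refine ⟨hZK (hsub i hy), ?_⟩
          have := (edist_le_ediam_of_mem hy hx).trans (hdiam i)
          rw [edist_dist] at this
          exact (ENNReal.ofReal_le_ofReal_iff (he i).1.le).1 this
        · rw [← ENNReal.ofReal_mul (by norm_num)]; apply le_of_eq; congr 1; ring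
      _ ≤ _ := by rw [ENNReal.tsum_mul_left]; gcongr
  have key2 : ∀ ε : ℝ, 0 < ε → ε < η → (μH[(d:ℝ)] Z).toReal ≤ ε := by
    intro ε hε hεη
    have h := key ε hε hεη
    rw [← ENNReal.ofReal_toReal hZf.ne, ← ENNReal.ofReal_add ENNReal.toReal_nonneg hε.le,
      ← ENNReal.ofReal_mul (by norm_num), ENNReal.ofReal_le_ofReal_iff (by positivity)] at h
    linarith
  have h0 : (μH[(d:ℝ)] Z).toReal ≤ 0 := by
    refine le_of_forall_pos_le_add fun ε hε => ?_
    rw [zero_add]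
    exact (key2 (min ε (η/2)) (by positivity) (by
      have := min_le_right ε (η/2); linarith)).trans (min_le_left _ _)
  have := le_antisymm h0 ENNReal.toReal_nonneg
  rcases (ENNReal.toReal_eq_zero_iff _).1 this with h | h
  · exact h
  · exact absurd h hZf.ne

/-- At a point of positive upper density there are arbitrarily small balls with thin boundary layers:
otherwise the mass would decay like `r^{d+1}` by iteration of `layer_step`. -/
lemma exists_thin_layer {K : Set (Euc n)} (hK : MeasurableSet K) (hfin : μH[(d:ℝ)] K < ⊤) (x : Euc n) {ε s : ℝ}
    (hε : 0 < ε) (hε1 : ε ≤ 1/7) (hs : 0 ≤ s) (hs1 : s ≤ 1) (hεs : 1 - s ≤ (1 - 2 * ε) ^ (d + 1))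
    (hx : ∀ η : ℝ, 0 < η → ∃ r, 0 < r ∧ r < η ∧ ENNReal.ofReal (r ^ d / 2) < μH[(d:ℝ)] (K ∩ closedBall x r))
    {η : ℝ} (hη : 0 < η) : ∃ r, 0 < r ∧ r < η ∧
      μH[(d:ℝ)] ((K ∩ closedBall x r) \ ball x ((1 - ε) * r)) ≤
      ENNReal.ofReal s * μH[(d:ℝ)] (K ∩ closedBall x r) := by
  by_contra! hcon
  obtain ⟨ρ, hρd⟩ : ∃ ρ, ρ = 1 - 2 * ε := ⟨_, rfl⟩
  rw [← hρd] at hεs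
  have hρ0 : 0 < ρ := by linarith
  have hρ1 : ρ < 1 := by linarith
  obtain ⟨r₀, hr₀⟩ : ∃ r₀, r₀ = η / 2 := ⟨_, rfl⟩
  have hr0 : 0 < r₀ := by linarith
  obtain ⟨w, hw⟩ : ∃ w, w = (μH[(d:ℝ)] K).toReal := ⟨_, rfl⟩
  have hw0 : 0 ≤ w := by rw [hw]; exact ENNReal.toReal_nonneg
  have key : ∀ k : ℕ, μH[(d:ℝ)] (K ∩ closedBall x (ρ ^ k * r₀)) ≤ ENNReal.ofReal ((ρ ^ k) ^ (d+1) * w) := by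
    intro k
    induction k with
    | zero => 
      simp only [pow_zero, one_pow, one_mul]
      rw [hw, ENNReal.ofReal_toReal hfin.ne]
      exact measure_mono inter_subset_left
    | succ k ih =>
      have hp : 0 < ρ ^ k := by positivity
      have hp1 : ρ ^ k ≤ 1 := pow_le_one₀ hρ0.le hρ1.le
      have h1 := layer_step hK hfin x (by positivity) hε hs hs1
        (not_le.2 (hcon (ρ ^ k * r₀) (by positivity) (by nlinarith)))
      rw [← hρd] at h1
      calc _ = μH[(d:ℝ)] (K ∩ closedBall x (ρ * (ρ ^ k * r₀))) := by congr 3; ring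
        _ ≤ _ := h1
        _ ≤ ENNReal.ofReal (ρ ^ (d+1)) * ENNReal.ofReal ((ρ ^ k) ^ (d+1) * w) := by gcongr
        _ = _ := by rw [← ENNReal.ofReal_mul (by positivity)]; congr 1; ring
  obtain ⟨A, hA⟩ : ∃ A, A = w / (r₀ * ρ) ^ (d+1) := ⟨_, rfl⟩
  have hA0 : 0 ≤ A := by rw [hA]; positivity
  obtain ⟨t, ht0, htη, ht⟩ := hx (min r₀ (1 / (2 * (A + 1)))) (by positivity)
  have ht1 := htη.trans_le (min_le_left _ _)
  have ht2 := htη.trans_le (min_le_right _ _)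
  obtain ⟨k, hk1, hk2⟩ := exists_nat_pow_near_of_lt_one (x := t / r₀) (y := ρ) (by positivity)
    ((div_le_one hr0).2 ht1.le) hρ0 hρ1
  rw [div_le_iff₀ hr0] at hk2
  rw [lt_div_iff₀ hr0, pow_succ] at hk1
  refine absurd ht (not_lt.2 ?_)
  calc _ ≤ μH[(d:ℝ)] (K ∩ closedBall x (ρ ^ k * r₀)) :=
        measure_mono (inter_subset_inter_right _ (closedBall_subset_closedBall hk2))
    _ ≤ _ := key k
    _ ≤ _ := by
      apply ENNReal.ofReal_le_ofReal
      have h1 : (ρ ^ k * (r₀ * ρ)) ^ (d+1) ≤ t ^ (d+1) := by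
        gcongr; linarith
      rw [mul_pow] at h1
      have h2 : (ρ ^ k) ^ (d+1) * w = ((ρ ^ k) ^ (d+1) * (r₀ * ρ) ^ (d+1)) * A := by
        rw [hA]; field_simp
      rw [h2]
      have h3 : t * (2 * (A+1)) ≤ 1 := by
        rw [lt_div_iff₀ (by positivity)] at ht2; exact ht2.le
      calc _ ≤ t ^ (d+1) * A := by gcongr
        _ = t ^ d * (t * A) := by ring
        _ ≤ t ^ d * (1/2) := by gcongr; nlinarith
        _ = _ := by ring

/-- A closed subset `F` of `K` which is bi-Lipschitz equivalent to a subset of `ℝ^d` by a map `p` which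
is Lipschitz on the whole space. -/
def GoodPiece (d : ℕ) (K F : Set (Euc n)) : Prop :=
  IsClosed F ∧ F ⊆ K ∧ ∃ p : Euc n → Fin d → ℝ, (∃ L : ℝ≥0, LipschitzWith L p) ∧
    ∃ c : ℝ≥0, ∀ x ∈ F, ∀ y ∈ F, dist x y ≤ c * dist (p x) (p y)

lemma goodPiece_closure {K F : Set (Euc n)} (hK : IsClosed K) (hF : F ⊆ K) (p : Euc n → Fin d → ℝ) 
    {L c : ℝ≥0} (hp : LipschitzOnWith L p F) (hc : ∀ x ∈ F, ∀ y ∈ F, dist x y ≤ c * dist (p x) (p y)) :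
    GoodPiece d K (closure F) := by
  obtain ⟨g, hg, hpg⟩ := hp.extend_pi
  refine ⟨isClosed_closure, closure_minimal hF hK, g, ⟨L, hg⟩, c, ?_⟩
  have hcl : IsClosed {z : Euc n × Euc n | dist z.1 z.2 ≤ c * dist (g z.1) (g z.2)} := by
    have := hg.continuous
    exact isClosed_le (by fun_prop) (by fun_prop)
  have hsub : F ×ˢ F ⊆ {z : Euc n × Euc n | dist z.1 z.2 ≤ c * dist (g z.1) (g z.2)} := by
    rintro ⟨x, y⟩ ⟨hx, hy⟩
    show dist x y ≤ c * dist (g x) (g y)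
    rw [← hpg hx, ← hpg hy]; exact hc x hx y hy
  intro x hx y hy
  have := closure_minimal hsub hcl (by rw [closure_prod_eq]; exact ⟨hx, hy⟩ : (x, y) ∈ closure (F ×ˢ F))
  exact this

/-- A closed set of finite `H^d` measure is the union of countably many bi-Lipschitz pieces and a
purely unrectifiable set: the countable family of pieces is chosen so that its union has maximal
measure. -/
lemma exhaustion {K : Set (Euc n)} (hK : IsClosed K) (hfin : μH[(d:ℝ)] K < ⊤) :
    ∃ G : ℕ → Set (Euc n), (∀ j, GoodPiece d K (G j)) ∧ PU d (K \ ⋃ j, G j) := by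
  obtain ⟨S, hS⟩ : ∃ S : Set ℝ≥0∞, S = {m | ∃ G : ℕ → Set (Euc n), (∀ j, GoodPiece d K (G j)) ∧ m = μH[(d:ℝ)] (⋃ j, G j)} := ⟨_, rfl⟩
  have hempty : GoodPiece d K ∅ := ⟨isClosed_empty, empty_subset _, fun _ => 0, ⟨0, LipschitzWith.const 0⟩, 0, by simp⟩
  have hSne : S.Nonempty := by rw [hS]; exact ⟨_, fun _ => ∅, fun _ => hempty, rfl⟩
  obtain ⟨u, -, hu, huS⟩ := exists_seq_tendsto_sSup hSne (OrderTop.bddAbove S)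
  have hex : ∀ m, ∃ G : ℕ → Set (Euc n), (∀ j, GoodPiece d K (G j)) ∧ u m = μH[(d:ℝ)] (⋃ j, G j) := by
    intro m; have := huS m; rw [hS] at this; exact this
  choose G hG hGu using hex
  refine ⟨fun j => G (Nat.unpair j).1 (Nat.unpair j).2, fun j => hG _ _, ?_⟩
  obtain ⟨U, hU⟩ : ∃ U, U = ⋃ j, G (Nat.unpair j).1 (Nat.unpair j).2 := ⟨_, rfl⟩
  rw [← hU]
  have hUm : MeasurableSet U := by rw [hU]; exact MeasurableSet.iUnion fun j => (hG _ _).1.measurableSet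
  have hUK : U ⊆ K := by rw [hU]; exact iUnion_subset fun j => (hG _ _).2.1
  have hUf := (measure_mono hUK).trans_lt hfin
  have hUs : sSup S ≤ μH[(d:ℝ)] U := by
    refine le_of_tendsto' hu fun m => ?_
    rw [hGu m, hU]
    refine measure_mono (iUnion_subset fun j => ?_)
    refine (le_of_eq ?_).trans (subset_iUnion _ (Nat.pair m j))
    simp
  rintro F hF ⟨p, ⟨L, hp⟩, c, hc⟩
  have hgc := goodPiece_closure hK (hF.trans sdiff_subset) p hp hc
  have h1 : μH[(d:ℝ)] (closure F ∪ U) ≤ μH[(d:ℝ)] U := by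
    refine le_trans (le_sSup ?_) hUs
    rw [hS]
    refine ⟨fun j => Nat.casesOn j (closure F) fun j => G (Nat.unpair j).1 (Nat.unpair j).2, ?_, ?_⟩
    · rintro (_ | j)
      · exact hgc
      · exact hG _ _
    · congr 1
      rw [hU]
      ext y
      simp only [mem_union, mem_iUnion]
      constructor
      · rintro (h | ⟨j, h⟩)
        · exact ⟨0, h⟩
        · exact ⟨j+1, h⟩
      · rintro ⟨_ | j, h⟩
        · exact Or.inl h
        · exact Or.inr ⟨j, h⟩
  have h2 : μH[(d:ℝ)] (F ∪ U) ≤ μH[(d:ℝ)] U := (measure_mono (union_subset_union_left _ subset_closure)).trans h1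
  rw [measure_union (Set.disjoint_left.2 fun y hy => (hF hy).2) hUm] at h2
  have h3 : μH[(d:ℝ)] F + μH[(d:ℝ)] U ≤ 0 + μH[(d:ℝ)] U := by simpa using h2
  exact le_antisymm ((ENNReal.add_le_add_iff_right hUf.ne).1 h3) (zero_le)

end

/-! ### Rectifiability of the slice -/

section

variable {n d : ℕ}

lemma PU_mono {S T : Set (Euc n)} (h : S ⊆ T) (hT : PU d T) : PU d S := fun F hF hp => hT F (hF.trans h) hp

/-- The slice of a minimal cone is rectifiable. Otherwise, at a density point of the purely
unrectifiable remainder, a small ball with thin boundary layer satisfies the hypotheses of `core`,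
which gives zero mass in that ball; this contradicts the positive density there. -/
theorem slice_rectifiable (h : d + 1 ≤ n) {E : Set (Euc n)} (hE : IsMinimalSet n (d+1) E) (hc : IsConeAt0 E) :
    ∃ G : ℕ → Set (Euc n), (∀ j, GoodPiece d (E ∩ sphere 0 1) (G j)) ∧
      μH[(d:ℝ)] ((E ∩ sphere 0 1) \ ⋃ j, G j) = 0 := by
  have hKc := isCompact_slice hE
  have hfin := sphere_slice_fin hE hc
  obtain ⟨s, hs0, hs1, ε₀, hε0, hε1, Cε, hcore⟩ := core (d := d) h
  replace hcore := hcore E hE hc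
  obtain ⟨K, hKd⟩ : ∃ K, K = E ∩ sphere (0 : Euc n) 1 := ⟨_, rfl⟩
  rw [← hKd] at hKc hfin ⊢
  simp only [← hKd] at hcore
  have hKm := hKc.measurableSet
  obtain ⟨G, hG, hPU⟩ := exhaustion hKc.isClosed hfin
  refine ⟨G, hG, ?_⟩
  obtain ⟨U, hU⟩ : ∃ U, U = K \ ⋃ j, G j := ⟨_, rfl⟩
  rw [← hU] at hPU ⊢
  have hUm : MeasurableSet U := by
    rw [hU]; exact hKm.diff (MeasurableSet.iUnion fun j => (hG j).1.measurableSet)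
  have hUK : U ⊆ K := by rw [hU]; exact sdiff_subset
  by_contra hne
  obtain ⟨μ, hμ⟩ : ∃ μ, μ = (μH[(d:ℝ)] : Measure (Euc n)).restrict K := ⟨_, rfl⟩
  have hμf : IsFiniteMeasure μ := ⟨by rw [hμ, Measure.restrict_apply_univ]; exact hfin⟩
  have hμa : ∀ A, MeasurableSet A → μ A = μH[(d:ℝ)] (K ∩ A) := fun A hA => by
    rw [hμ, Measure.restrict_apply hA, inter_comm]
  have hdens := Besicovitch.ae_tendsto_measure_inter_div_of_measurableSet μ hUm
  have hZ : ∀ᵐ x ∂μ, ∀ j : ℕ, x ∉ {x ∈ K | ∀ r, 0 < r → r < 1 / ((j:ℝ)+1) →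
      μH[(d:ℝ)] (K ∩ closedBall x r) ≤ ENNReal.ofReal (r ^ d / 2)} := by
    rw [ae_all_iff]
    intro j
    refine measure_eq_zero_iff_ae_notMem.1 ?_
    rw [hμ]
    exact Measure.absolutelyContinuous_of_le Measure.restrict_le_self
      (null_low_density hfin (by positivity))
  have hfreq : ∃ᵐ x ∂μ, x ∈ U := by
    rw [frequently_ae_mem_iff, hμa U hUm, inter_eq_self_of_subset_right hUK]; exact hne
  obtain ⟨x, hxU, hxd, hxZ⟩ := (hfreq.and_eventually (hdens.and hZ)).exists
  have hx : ∀ η : ℝ, 0 < η → ∃ r, 0 < r ∧ r < η ∧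
      ENNReal.ofReal (r ^ d / 2) < μH[(d:ℝ)] (K ∩ closedBall x r) := by
    intro η hη
    obtain ⟨j, hj⟩ := exists_nat_one_div_lt hη
    have := hxZ j
    by_contra! hcon
    exact this ⟨hUK hxU, fun r hr hrj => hcon r hr (hrj.trans hj)⟩
  rw [indicator_of_mem hxU, Pi.one_apply] at hxd
  have h34 : ENNReal.ofReal (1 - s/4) < 1 := by
    rw [← ENNReal.ofReal_one, ENNReal.ofReal_lt_ofReal_iff one_pos]; linarith
  have hev := hxd.eventually (lt_mem_nhds h34)
  rw [eventually_nhdsWithin_iff, Metric.eventually_nhds_iff] at hev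
  obtain ⟨η, hη, hη2⟩ := hev
  obtain ⟨ε, hε, hεε, hε7, hεs⟩ : ∃ ε : ℝ, 0 < ε ∧ ε ≤ ε₀ ∧ ε ≤ 1/7 ∧ ε ≤ (s/2) / (2 * (((d+1:ℕ):ℝ) + 1)) :=
    ⟨min ε₀ (min (1/7) ((s/2) / (2 * (((d+1:ℕ):ℝ) + 1)))), by positivity, min_le_left _ _,
      (min_le_right _ _).trans (min_le_left _ _), (min_le_right _ _).trans (min_le_right _ _)⟩
  obtain ⟨r, hr0, hrη, hlay⟩ := exists_thin_layer hKm hfin x hε hε7 (by linarith : 0 ≤ s/2) (by linarith)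
    (pow_lower (d+1) hε hεs hε7) hx (by positivity : 0 < min η 3)
  have hr1 := hrη.trans_le (min_le_left _ _)
  have hr3 := hrη.trans_le (min_le_right _ _)
  obtain ⟨W, hW⟩ : ∃ W, W = K ∩ closedBall x r := ⟨_, rfl⟩
  have hWm : MeasurableSet W := by rw [hW]; exact hKm.inter measurableSet_closedBall
  have hWf : μH[(d:ℝ)] W ≠ ⊤ := by rw [hW]; exact ((measure_mono inter_subset_left).trans_lt hfin).ne
  have hd1 := hη2 (by rw [Real.dist_eq, sub_zero, abs_of_pos hr0]; exact hr1) hr0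
  rw [hμa _ (hUm.inter measurableSet_closedBall), hμa _ measurableSet_closedBall,
    ← inter_assoc, inter_eq_self_of_subset_right hUK, ← hW] at hd1
  have hUW : U ∩ closedBall x r = W ∩ U := by
    rw [hW, inter_right_comm, inter_eq_self_of_subset_right hUK]
  rw [hUW] at hd1
  have hWne : μH[(d:ℝ)] W ≠ 0 := by
    intro h0
    rw [measure_mono_null inter_subset_left h0] at hd1
    simp at hd1
  rw [ENNReal.lt_div_iff_mul_lt (Or.inl hWne) (Or.inl hWf)] at hd1
  have h1 : μH[(d:ℝ)] (W \ U) ≤ ENNReal.ofReal (s/4) * μH[(d:ℝ)] W := by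
    have h2 := measure_inter_add_sdiff (μ := μH[(d:ℝ)]) W hUm
    have h3 : ENNReal.ofReal (1 - s/4) * μH[(d:ℝ)] W + ENNReal.ofReal (s/4) * μH[(d:ℝ)] W = μH[(d:ℝ)] W := by
      rw [← add_mul, ← ENNReal.ofReal_add (by linarith) (by linarith)]; simp
    refine (ENNReal.add_le_add_iff_left (ENNReal.mul_ne_top ENNReal.ofReal_ne_top hWf)).1
      (le_trans ?_ h3.ge)
    conv_rhs => rw [← h2]
    exact add_le_add hd1.le le_rfl
  have hWUm := hWm.inter hUm
  obtain ⟨S, hSs, hSc, hSlt⟩ := hWUm.exists_isCompact_sdiff_lt (μ := μ) (measure_ne_top _ _)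
    (ε := ENNReal.ofReal (s/4) * μH[(d:ℝ)] W) (by
      simp only [ne_eq, mul_eq_zero, not_or]
      exact ⟨by simpa using hs0, hWne⟩)
  have hWK : W ⊆ K := by rw [hW]; exact inter_subset_left
  rw [hμa _ (hWUm.diff hSc.measurableSet),
    inter_eq_self_of_subset_right (sdiff_subset.trans (inter_subset_left.trans hWK))] at hSlt
  rw [← hW] at hlay
  -- the bad set is the boundary layer (mass at most `s/2`) together with the points off a compact
  -- subset `S` of the unrectifiable part (mass at most `s/4 + s/4`)
  replace hcore := hcore ε hε hεε x r hr0 hr3.le ((W \ ball x ((1 - ε) * r)) ∪ (W \ S))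
    ((hWm.diff measurableSet_ball).union (hWm.diff hSc.measurableSet))
    (by rw [← hW]; exact union_subset sdiff_subset sdiff_subset)
    (by rw [← hW]; exact subset_union_left)
    (by
      rw [← hW]
      have h5 : W \ S ⊆ (W \ U) ∪ ((W ∩ U) \ S) := by
        intro y hy
        by_cases hyU : y ∈ U
        · exact Or.inr ⟨⟨hy.1, hyU⟩, hy.2⟩
        · exact Or.inl ⟨hy.1, hyU⟩
      calc _ ≤ μH[(d:ℝ)] (W \ ball x ((1 - ε) * r)) + (μH[(d:ℝ)] (W \ U) + μH[(d:ℝ)] ((W ∩ U) \ S)) :=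
            (measure_union_le _ _).trans (add_le_add le_rfl ((measure_mono h5).trans (measure_union_le _ _)))
        _ ≤ ENNReal.ofReal (s/2) * μH[(d:ℝ)] W + (ENNReal.ofReal (s/4) * μH[(d:ℝ)] W +
            ENNReal.ofReal (s/4) * μH[(d:ℝ)] W) := add_le_add hlay (add_le_add h1 hSlt.le)
        _ = _ := by
          rw [← add_mul, ← add_mul, ← ENNReal.ofReal_add (by positivity) (by positivity),
            ← ENNReal.ofReal_add (by positivity) (by positivity)]
          congr 2; ring)
  refine hWne ?_
  rw [hW]
  have hSU : S ⊆ U := hSs.trans inter_subset_right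
  refine hcore.2 S hSc ((measure_mono (hSU.trans hUK)).trans_lt hfin) (PU_mono hSU hPU) ?_
  rw [← hW]
  intro y hy
  by_contra hyS
  exact hy.2 (Or.inr ⟨hy.1, hyS⟩)

end

/-! ### Flat decomposition of rectifiable sets -/

section

variable {n d : ℕ}

lemma haar_hm (d : ℕ) : (μH[(d:ℝ)] : Measure (Euc d)).IsAddHaarMeasure := by
  have := isAddHaarMeasure_hausdorffMeasure (E := Euc d)
  rwa [finrank_euclideanSpace_fin] at this

/-- A non-injective linear map `A` is dominated, with some room `η`, by an endomorphism `B` of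
arbitrarily small determinant. -/
lemma small_det (A : Euc d →L[ℝ] Euc n) (hA : ¬ Function.Injective A) {δ : ℝ} (hδ : 0 < δ) :
    ∃ η : ℝ≥0, η ≠ 0 ∧ ∃ B : Euc d →L[ℝ] Euc d, |B.det| ≤ δ ∧ ∀ w, ‖A w‖ + η * ‖w‖ ≤ 2 * ‖B w‖ := by
  obtain ⟨P, hP⟩ : ∃ P : Euc d →L[ℝ] Euc d, P = (A.ker)ᗮ.starProjection := ⟨_, rfl⟩
  have hPA : ∀ w, A (P w) = A w := by
    intro w
    have h1 : w - P w ∈ (A.ker)ᗮᗮ := by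
      rw [hP]; exact Submodule.sub_starProjection_mem_orthogonal w
    rw [Submodule.orthogonal_orthogonal] at h1
    have : A (w - P w) = 0 := h1
    rw [map_sub, sub_eq_zero] at this
    exact this.symm
  have hin : ∀ w, ⟪P w, w⟫_ℝ = ‖P w‖ ^ 2 := by
    intro w; rw [hP]
    exact Submodule.re_inner_starProjection_eq_normSq (𝕜 := ℝ) _ w
  have hcont : Continuous fun η : ℝ => |(‖A‖ • P + η • ContinuousLinearMap.id ℝ (Euc d)).det| :=
    (ContinuousLinearMap.continuous_det.comp (by fun_prop)).abs
  have h0 : |(‖A‖ • P + (0:ℝ) • ContinuousLinearMap.id ℝ (Euc d)).det| = 0 := by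
    rw [abs_eq_zero]
    refine LinearMap.det_eq_zero_iff_ker_ne_bot.2 ?_
    replace hA : A.ker ≠ ⊥ := fun h => hA (LinearMap.ker_eq_bot.1 h)
    obtain ⟨v, hv, hv0⟩ := Submodule.exists_mem_ne_zero_of_ne_bot hA
    intro hbot
    have h2 : P v = 0 := by
      rw [hP, Submodule.starProjection_apply_eq_zero_iff, Submodule.orthogonal_orthogonal]; exact hv
    have h3 : v ∈ LinearMap.ker ((‖A‖ • P + (0:ℝ) • ContinuousLinearMap.id ℝ (Euc d) : Euc d →L[ℝ] Euc d) : Euc d →ₗ[ℝ] Euc d) := by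
      rw [LinearMap.mem_ker]
      simp [h2]
    rw [hbot] at h3
    exact hv0 (by simpa using h3)
  have hev := (hcont.tendsto 0).eventually (gt_mem_nhds (by rw [h0]; exact hδ))
  rw [Metric.eventually_nhds_iff] at hev
  obtain ⟨η₀, hη0, hη⟩ := hev
  refine ⟨(η₀/2).toNNReal, by simpa using hη0, ‖A‖ • P + (η₀/2) • ContinuousLinearMap.id ℝ (Euc d),
    (hη (by rw [Real.dist_eq, sub_zero, abs_of_pos (by positivity)]; linarith)).le, fun w => ?_⟩
  rw [Real.coe_toNNReal _ (by positivity)]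
  obtain ⟨η, hηd⟩ : ∃ η, η = η₀ / 2 := ⟨_, rfl⟩
  rw [← hηd]
  have hηp : 0 < η := by linarith
  have hB : (‖A‖ • P + η • ContinuousLinearMap.id ℝ (Euc d)) w = ‖A‖ • P w + η • w := by simp
  rw [hB]
  have hsq : ‖‖A‖ • P w + η • w‖ ^ 2 = ‖A‖^2 * ‖P w‖^2 + 2 * (‖A‖ * η * ‖P w‖^2) + η^2 * ‖w‖^2 := by
    rw [norm_add_sq_real, norm_smul, norm_smul, inner_smul_left, inner_smul_right, hin,
      Real.norm_of_nonneg (norm_nonneg _), Real.norm_of_nonneg hηp.le]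
    simp only [conj_trivial]
    ring
  have h1 : ‖A w‖ ≤ ‖A‖ * ‖P w‖ := by rw [← hPA]; exact A.le_opNorm _
  have h2 : ‖A‖ * ‖P w‖ ≤ ‖‖A‖ • P w + η • w‖ := by
    refine le_of_sq_le_sq ?_ (norm_nonneg _)
    rw [hsq]
    have : 0 ≤ ‖A‖ * η * ‖P w‖^2 := by positivity
    nlinarith [sq_nonneg (η * ‖w‖)]
  have h3 : η * ‖w‖ ≤ ‖‖A‖ • P w + η • w‖ := by
    refine le_of_sq_le_sq ?_ (norm_nonneg _)
    rw [hsq]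
    have : 0 ≤ ‖A‖ * η * ‖P w‖^2 := by positivity
    nlinarith [sq_nonneg (‖A‖ * ‖P w‖)]
  linarith

/-- A Sard lemma: the image of a bounded set where the derivative is not injective is null. -/
lemma sard_aux {g : Euc d → Euc n} {N : Set (Euc d)} (g' : Euc d → Euc d →L[ℝ] Euc n)
    (hg : ∀ x ∈ N, HasFDerivAt g (g' x) x) (hN : ∀ x ∈ N, ¬ Function.Injective (g' x))
    {R : ℝ} (hR : N ⊆ ball 0 R) : μH[(d:ℝ)] (g '' N) = 0 := by
  have := haar_hm d
  have key : ∀ δ : ℝ, 0 < δ → μH[(d:ℝ)] (g '' N) ≤ ENNReal.ofReal δ * (2 ^ d * μH[(d:ℝ)] (ball (0:Euc d) R)) := by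
    intro δ hδ
    have hex : ∀ A : Euc d →L[ℝ] Euc n, ∃ η : ℝ≥0, η ≠ 0 ∧ (¬ Function.Injective A →
        ∃ B : Euc d →L[ℝ] Euc d, |B.det| ≤ δ ∧ ∀ w, ‖A w‖ + η * ‖w‖ ≤ 2 * ‖B w‖) := by
      intro A
      by_cases hA : Function.Injective A
      · exact ⟨1, one_ne_zero, fun h => absurd hA h⟩
      · obtain ⟨η, h0, h⟩ := small_det A hA hδ
        exact ⟨η, h0, fun _ => h⟩
    choose r hr hr2 using hex
    obtain ⟨t, A, hdis, htm, hcov, happ, hA⟩ := exists_partition_approximatesLinearOn_of_hasFDerivWithinAt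
      g N g' (fun x hx => (hg x hx).hasFDerivWithinAt) r hr
    have hpiece : ∀ j, μH[(d:ℝ)] (g '' (N ∩ t j)) ≤ ENNReal.ofReal δ * (2 ^ d * μH[(d:ℝ)] (t j ∩ ball (0:Euc d) R)) := by
      intro j
      rcases (N ∩ t j).eq_empty_or_nonempty with he | hne
      · rw [he]; simp
      obtain ⟨y, hy, hyA⟩ := hA ⟨_, hne.some_mem.1⟩ j
      obtain ⟨B, hB, hB2⟩ := hr2 (A j) (by rw [hyA]; exact hN y hy)
      have hlip : ∀ x ∈ N ∩ t j, ∀ y ∈ N ∩ t j, dist (g x) (g y) ≤ 2 * dist (B x) (B y) := by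
        intro x hx y hy
        have h1 := happ j x hx y hy
        rw [dist_eq_norm, dist_eq_norm, ← map_sub]
        refine le_trans ?_ (hB2 (x - y))
        calc ‖g x - g y‖ = ‖(g x - g y - A j (x - y)) + A j (x - y)‖ := by rw [sub_add_cancel]
          _ ≤ _ := (norm_add_le _ _).trans (by linarith)
      have hinj : InjOn B (N ∩ t j) := by
        intro x hx y hy hxy
        have := hB2 (x - y)
        rw [map_sub B, hxy, sub_self, norm_zero, mul_zero] at this
        have h2 : 0 < (r (A j) : ℝ) := by positivity [hr (A j)]
        have h3 : ‖x - y‖ ≤ 0 := by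
          have := norm_nonneg (A j (x - y))
          by_contra hcon
          push Not at hcon
          nlinarith [mul_pos h2 hcon]
        exact sub_eq_zero.1 (norm_le_zero_iff.1 h3)
      have himg : g '' (N ∩ t j) = (g ∘ Function.invFunOn B (N ∩ t j)) '' (B '' (N ∩ t j)) := by
        rw [image_image]
        refine image_congr fun x hx => ?_
        simp only [Function.comp]
        rw [hinj.leftInvOn_invFunOn hx]
      have hL : LipschitzOnWith 2 (g ∘ Function.invFunOn B (N ∩ t j)) (B '' (N ∩ t j)) := by
        refine LipschitzOnWith.of_dist_le_mul ?_
        rintro _ ⟨x, hx, rfl⟩ _ ⟨y, hy, rfl⟩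
        simp only [Function.comp]
        rw [hinj.leftInvOn_invFunOn hx, hinj.leftInvOn_invFunOn hy]
        exact hlip x hx y hy
      rw [himg]
      refine (hL.hausdorffMeasure_image_le (Nat.cast_nonneg d)).trans ?_
      rw [Measure.addHaar_image_continuousLinearMap, ENNReal.rpow_natCast]
      calc _ ≤ (2:ℝ≥0∞) ^ d * (ENNReal.ofReal δ * μH[(d:ℝ)] (t j ∩ ball (0:Euc d) R)) := by
            gcongr ?_ ^ d * (ENNReal.ofReal ?_ * ?_)
            · simp
            · exact measure_mono fun x hx => ⟨hx.2, hR hx.1⟩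
        _ = _ := by ring
    calc μH[(d:ℝ)] (g '' N) ≤ ∑' j, μH[(d:ℝ)] (g '' (N ∩ t j)) := by
          refine (measure_mono ?_).trans (measure_iUnion_le _)
          rintro _ ⟨x, hx, rfl⟩
          obtain ⟨j, hj⟩ := mem_iUnion.1 (hcov hx)
          exact mem_iUnion.2 ⟨j, x, ⟨hx, hj⟩, rfl⟩
      _ ≤ ∑' j, ENNReal.ofReal δ * (2 ^ d * μH[(d:ℝ)] (t j ∩ ball (0:Euc d) R)) := ENNReal.tsum_le_tsum hpiece
      _ ≤ _ := by
        rw [ENNReal.tsum_mul_left, ENNReal.tsum_mul_left]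
        gcongr
        have := tsum_measure_le_measure_univ (μ := (μH[(d:ℝ)] : Measure (Euc d)).restrict (ball 0 R)) (s := t)
          (fun i => (htm i).nullMeasurableSet) (fun i j hij => (hdis hij).aedisjoint)
        simpa [Measure.restrict_apply (htm _)] using this
  have hfin : 2 ^ d * μH[(d:ℝ)] (ball (0:Euc d) R) ≠ ⊤ :=
    ENNReal.mul_ne_top (by simp) measure_ball_lt_top.ne
  have hlim : Tendsto (fun δ : ℝ => ENNReal.ofReal δ * (2 ^ d * μH[(d:ℝ)] (ball (0:Euc d) R))) (𝓝[>] 0)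
      (𝓝 (ENNReal.ofReal 0 * (2 ^ d * μH[(d:ℝ)] (ball (0:Euc d) R)))) :=
    ENNReal.Tendsto.mul_const (ENNReal.tendsto_ofReal tendsto_id |>.mono_left nhdsWithin_le_nhds) (Or.inr hfin)
  rw [ENNReal.ofReal_zero, zero_mul] at hlim
  refine le_antisymm (ge_of_tendsto hlim ?_) zero_le
  filter_upwards [self_mem_nhdsWithin] with δ hδ using key δ hδ

/-- `A` is isometric to a subset of `ℝ^d` up to a factor `1 + ε`. -/
def FlatPiece (d : ℕ) (ε : ℝ) (A : Set (Euc n)) : Prop :=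
  ∃ ψ : Euc n → Euc d, Continuous ψ ∧ ∀ x ∈ A, ∀ y ∈ A, dist (ψ x) (ψ y) ≤ (1 + ε) * dist x y ∧
    dist x y ≤ (1 + ε) * dist (ψ x) (ψ y)

lemma FlatPiece.mono {ε : ℝ} {A B : Set (Euc n)} (h : FlatPiece d ε B) (hAB : A ⊆ B) : FlatPiece d ε A := by
  obtain ⟨ψ, hψ, h⟩ := h
  exact ⟨ψ, hψ, fun x hx y hy => h x (hAB hx) y (hAB hy)⟩

lemma flatPiece_closure {ε : ℝ} {A : Set (Euc n)} (h : FlatPiece d ε A) : FlatPiece d ε (closure A) := by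
  obtain ⟨ψ, hψ, h⟩ := h
  have h1 : IsClosed {z : Euc n × Euc n | dist (ψ z.1) (ψ z.2) ≤ (1 + ε) * dist z.1 z.2} :=
    isClosed_le (by fun_prop) (by fun_prop)
  have h2 : IsClosed {z : Euc n × Euc n | dist z.1 z.2 ≤ (1 + ε) * dist (ψ z.1) (ψ z.2)} :=
    isClosed_le (by fun_prop) (by fun_prop)
  have hs1 : A ×ˢ A ⊆ {z : Euc n × Euc n | dist (ψ z.1) (ψ z.2) ≤ (1 + ε) * dist z.1 z.2} :=
    fun z hz => (h z.1 hz.1 z.2 hz.2).1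
  have hs2 : A ×ˢ A ⊆ {z : Euc n × Euc n | dist z.1 z.2 ≤ (1 + ε) * dist (ψ z.1) (ψ z.2)} :=
    fun z hz => (h z.1 hz.1 z.2 hz.2).2
  refine ⟨ψ, hψ, fun x hx y hy => ?_⟩
  have hm : (x, y) ∈ closure (A ×ˢ A) := by rw [closure_prod_eq]; exact ⟨hx, hy⟩
  have h3 := closure_minimal hs1 h1 hm
  have h4 := closure_minimal hs2 h2 hm
  simp only [mem_ofPred_eq] at h3 h4
  exact ⟨h3, h4⟩

/-- The image of a set on which `g` is well approximated by an injective linear map is flat, in the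
coordinates given by that linear map. -/
lemma flat_of_approx {g : Euc d → Euc n} {s : Set (Euc d)} {A : Euc d →L[ℝ] Euc n}
    (hA : Function.Injective A) {ε : ℝ} (hε : 0 < ε) (hε1 : ε ≤ 1) {a : ℝ≥0} (ha : AntilipschitzWith a A)
    {r : ℝ≥0} (hr : (r:ℝ) * a ≤ ε / 2) (h : ApproximatesLinearOn g A s r) : FlatPiece d ε (g '' s) := by
  have hrank : Module.finrank ℝ (LinearMap.range (A : Euc d →ₗ[ℝ] Euc n)) = d := by
    rw [LinearMap.finrank_range_of_inj hA, finrank_euclideanSpace_fin]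
  let b := (stdOrthonormalBasis ℝ (LinearMap.range (A : Euc d →ₗ[ℝ] Euc n))).reindex (finCongr hrank)
  let T : Euc d → Euc d := fun x => b.repr ⟨A x, LinearMap.mem_range_self _ x⟩
  have hT : ∀ x y, dist (T x) (T y) = ‖A (x - y)‖ := by
    intro x y
    show dist (b.repr _) (b.repr _) = _
    rw [b.repr.isometry.dist_eq, Subtype.dist_eq, dist_eq_norm, map_sub]
  have hB : ∀ w, ‖w‖ ≤ a * ‖A w‖ := fun w => by
    have := ha.le_mul_dist w 0
    simpa [dist_eq_norm] using this
  have hest : ∀ x ∈ s, ∀ y ∈ s, ‖g x - g y - A (x - y)‖ ≤ ε / 2 * ‖A (x - y)‖ := by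
    intro x hx y hy
    refine (h x hx y hy).trans ?_
    calc _ ≤ (r:ℝ) * (a * ‖A (x - y)‖) := by gcongr; exact hB _
      _ = (r:ℝ) * a * ‖A (x - y)‖ := by ring
      _ ≤ _ := by gcongr
  have hup : ∀ x ∈ s, ∀ y ∈ s, dist (g x) (g y) ≤ (1 + ε) * dist (T x) (T y) := by
    intro x hx y hy
    rw [hT, dist_eq_norm]
    have h1 := hest x hx y hy
    have h2 := norm_sub_norm_le (g x - g y) (A (x - y))
    have h3 := norm_nonneg (A (x - y))
    nlinarith
  have hlo : ∀ x ∈ s, ∀ y ∈ s, dist (T x) (T y) ≤ (1 + ε) * dist (g x) (g y) := by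
    intro x hx y hy
    rw [hT, dist_eq_norm]
    have h1 := hest x hx y hy
    have h2 := norm_sub_norm_le (A (x - y)) (g x - g y)
    rw [norm_sub_rev (A (x-y))] at h2
    have h3 := norm_nonneg (A (x - y))
    have h4 : (1 - ε/2) * ‖A (x - y)‖ ≤ ‖g x - g y‖ := by linarith
    have h5 : 1 ≤ (1 + ε) * (1 - ε/2) := by nlinarith
    calc _ ≤ ((1 + ε) * (1 - ε/2)) * ‖A (x - y)‖ := le_mul_of_one_le_left h3 h5
      _ = (1 + ε) * ((1 - ε/2) * ‖A (x - y)‖) := by ring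
      _ ≤ _ := by gcongr
  have hinj : InjOn g s := by
    intro x hx y hy hxy
    have := hlo x hx y hy
    rw [hxy, dist_self, mul_zero, hT] at this
    have h2 := hB (x - y)
    have h3 : ‖A (x - y)‖ = 0 := le_antisymm this (norm_nonneg _)
    rw [h3, mul_zero] at h2
    exact sub_eq_zero.1 (norm_le_zero_iff.1 h2)
  have hL : LipschitzOnWith (1 + ε).toNNReal (T ∘ Function.invFunOn g s) (g '' s) := by
    refine LipschitzOnWith.of_dist_le_mul ?_
    rintro _ ⟨x, hx, rfl⟩ _ ⟨y, hy, rfl⟩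
    simp only [Function.comp]
    rw [hinj.leftInvOn_invFunOn hx, hinj.leftInvOn_invFunOn hy, Real.coe_toNNReal _ (by positivity)]
    exact hlo x hx y hy
  obtain ⟨ψ, hψ, hψe⟩ := hL.extend_finite_dimension
  refine ⟨ψ, hψ.continuous, ?_⟩
  have hψg : ∀ x ∈ s, ψ (g x) = T x := by
    intro x hx
    rw [← hψe (mem_image_of_mem g hx)]
    simp only [Function.comp]
    rw [hinj.leftInvOn_invFunOn hx]
  rintro _ ⟨x, hx, rfl⟩ _ ⟨y, hy, rfl⟩
  rw [hψg x hx, hψg y hy]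
  exact ⟨hlo x hx y hy, hup x hx y hy⟩

/-- Almost all of a Lipschitz image of `ℝ^d` is covered by countably many flat pieces, by Rademacher's
theorem, `sard_aux` and `flat_of_approx`. -/
lemma flat_decomp {g : Euc d → Euc n} {L : ℝ≥0} (hg : LipschitzWith L g) {ε : ℝ} (hε : 0 < ε) (hε1 : ε ≤ 1) :
    ∃ F : ℕ → Set (Euc n), (∀ j, FlatPiece d ε (F j)) ∧ μH[(d:ℝ)] (range g \ ⋃ j, F j) = 0 := by
  have := haar_hm d
  obtain ⟨D, hD⟩ : ∃ D, D = {x | DifferentiableAt ℝ g x} := ⟨_, rfl⟩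
  obtain ⟨I, hI⟩ : ∃ I, I = {x ∈ D | Function.Injective (fderiv ℝ g x)} := ⟨_, rfl⟩
  have hD0 : μH[(d:ℝ)] (g '' Dᶜ) = 0 := by
    have h1 : μH[(d:ℝ)] Dᶜ = 0 := by rw [hD]; exact hg.ae_differentiableAt (μ := μH[(d:ℝ)])
    refine le_antisymm ((hg.hausdorffMeasure_image_le (Nat.cast_nonneg d) _).trans ?_) zero_le
    rw [h1, mul_zero]
  have hS : μH[(d:ℝ)] (g '' (D \ I)) = 0 := by
    have h1 : g '' (D \ I) ⊆ ⋃ R : ℕ, g '' ((D \ I) ∩ ball 0 R) := by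
      rintro _ ⟨x, hx, rfl⟩
      obtain ⟨R, hR⟩ := exists_nat_gt ‖x‖
      exact mem_iUnion.2 ⟨R, x, ⟨hx, by simpa using hR⟩, rfl⟩
    refine measure_mono_null h1 (measure_iUnion_null fun R => ?_)
    refine sard_aux (fderiv ℝ g) (fun x hx => ?_) (fun x hx hinj => ?_) (R := R) inter_subset_right
    · have := hx.1.1
      rw [hD] at this
      exact this.hasFDerivAt
    · exact hx.1.2 (by rw [hI]; exact ⟨hx.1.1, hinj⟩)
  have hex : ∀ A : Euc d →L[ℝ] Euc n, ∃ r : ℝ≥0, r ≠ 0 ∧ (Function.Injective A →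
      ∃ a : ℝ≥0, AntilipschitzWith a A ∧ (r:ℝ) * a ≤ ε / 2) := by
    intro A
    by_cases hA : Function.Injective A
    · obtain ⟨a, ha, hAa⟩ := (LinearMap.injective_iff_antilipschitz (A : Euc d →ₗ[ℝ] Euc n)).1 hA
      refine ⟨(ε/2).toNNReal / a, ?_, fun _ => ⟨a, hAa, ?_⟩⟩
      · have : (ε/2).toNNReal ≠ 0 := by simpa using hε
        positivity
      · have : (a:ℝ) ≠ 0 := by positivity
        rw [NNReal.coe_div, Real.coe_toNNReal _ (by positivity), div_mul_cancel₀ _ this]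
    · exact ⟨1, one_ne_zero, fun h => absurd h hA⟩
  choose r hr hr2 using hex
  obtain ⟨t, A, -, -, hcov, happ, hA⟩ := exists_partition_approximatesLinearOn_of_hasFDerivWithinAt
    g I (fderiv ℝ g) (fun x hx => by
      rw [hI, hD] at hx
      exact (DifferentiableAt.hasFDerivAt hx.1).hasFDerivWithinAt) r hr
  refine ⟨fun j => g '' (I ∩ t j), fun j => ?_, ?_⟩
  · rcases I.eq_empty_or_nonempty with he | hne
    · rw [he]; simp only [empty_inter, image_empty]
      exact ⟨fun _ => 0, continuous_const, by simp⟩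
    · obtain ⟨y, hy, hyA⟩ := hA hne j
      have hinj : Function.Injective (A j) := by rw [hyA]; rw [hI] at hy; exact hy.2
      obtain ⟨a, ha, har⟩ := hr2 (A j) hinj
      exact flat_of_approx hinj hε hε1 ha har (happ j)
  · refine measure_mono_null ?_ (measure_union_null hD0 hS)
    rintro _ ⟨⟨x, rfl⟩, hx⟩
    by_cases hxD : x ∈ D
    · by_cases hxI : x ∈ I
      · refine (hx ?_).elim
        obtain ⟨j, hj⟩ := mem_iUnion.1 (hcov hxI)
        exact mem_iUnion.2 ⟨j, x, ⟨hxI, hj⟩, rfl⟩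
      · exact Or.inr ⟨x, ⟨hxD, hxI⟩, rfl⟩
    · exact Or.inl ⟨x, hxD, rfl⟩

/-- `A` is countably `d`-rectifiable. -/
def Rectif (d : ℕ) (A : Set (Euc n)) : Prop :=
  ∃ g : ℕ → Euc d → Euc n, (∀ j, ∃ L : ℝ≥0, LipschitzWith L (g j)) ∧ μH[(d:ℝ)] (A \ ⋃ j, range (g j)) = 0

lemma Rectif.mono {A B : Set (Euc n)} (hB : Rectif d B) (h : A ⊆ B) : Rectif d A := by
  obtain ⟨g, hg, h0⟩ := hB
  exact ⟨g, hg, measure_mono_null (sdiff_subset_sdiff_left h) h0⟩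

lemma Rectif.image {A s : Set (Euc n)} (hA : Rectif d A) (hAs : A ⊆ s) {f : Euc n → Euc n} {L : ℝ≥0}
    (hf : LipschitzOnWith L f s) : Rectif d (f '' A) := by
  obtain ⟨g, hg, h0⟩ := hA
  obtain ⟨F, hF, hfF⟩ := hf.extend_finite_dimension
  refine ⟨fun j => F ∘ g j, fun j => ?_, ?_⟩
  · obtain ⟨L', h⟩ := hg j
    exact ⟨_, hF.comp h⟩
  · have h1 : μH[(d:ℝ)] (F '' (A \ ⋃ j, range (g j))) = 0 := by
      refine le_antisymm ((hF.hausdorffMeasure_image_le (Nat.cast_nonneg d) _).trans ?_) zero_le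
      rw [h0, mul_zero]
    refine measure_mono_null ?_ h1
    rintro _ ⟨⟨x, hx, rfl⟩, hx2⟩
    refine ⟨x, ⟨hx, fun hx3 => hx2 ?_⟩, (hfF (hAs hx)).symm⟩
    obtain ⟨j, y, rfl⟩ := mem_iUnion.1 hx3
    exact mem_iUnion.2 ⟨j, y, (hfF (hAs hx)).symm⟩

lemma rectif_of_good {K : Set (Euc n)} {G : ℕ → Set (Euc n)} (hG : ∀ j, GoodPiece d K (G j))
    (h0 : μH[(d:ℝ)] (K \ ⋃ j, G j) = 0) : Rectif d K := by
  have hex : ∀ j, ∃ g : Euc d → Euc n, (∃ L : ℝ≥0, LipschitzWith L g) ∧ G j ⊆ range g := by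
    intro j
    obtain ⟨-, -, p, -, c, hc⟩ := hG j
    have hinj : InjOn p (G j) := by
      intro x hx y hy hxy
      have := hc x hx y hy
      rw [hxy, dist_self, mul_zero] at this
      exact dist_le_zero.1 this
    have hL : LipschitzOnWith c (Function.invFunOn p (G j)) (p '' (G j)) := by
      refine LipschitzOnWith.of_dist_le_mul ?_
      rintro _ ⟨x, hx, rfl⟩ _ ⟨y, hy, rfl⟩
      rw [hinj.leftInvOn_invFunOn hx, hinj.leftInvOn_invFunOn hy]
      exact hc x hx y hy
    obtain ⟨g, hg, hge⟩ := hL.extend_finite_dimension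
    refine ⟨fun z => g (WithLp.ofLp z), ⟨_, hg.comp (PiLp.lipschitzWith_ofLp 2 _)⟩, fun x hx => ⟨WithLp.toLp 2 (p x), ?_⟩⟩
    show g (p x) = x
    rw [← hge (mem_image_of_mem p hx), hinj.leftInvOn_invFunOn hx]
  choose g hg hGg using hex
  exact ⟨g, hg, measure_mono_null (sdiff_subset_sdiff_right (iUnion_mono hGg)) h0⟩

lemma Rectif.flat {A : Set (Euc n)} (hA : Rectif d A) {ε : ℝ} (hε : 0 < ε) (hε1 : ε ≤ 1) :
    ∃ F : ℕ → Set (Euc n), (∀ j, IsClosed (F j) ∧ FlatPiece d ε (F j)) ∧ μH[(d:ℝ)] (A \ ⋃ j, F j) = 0 := by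
  obtain ⟨g, hg, h0⟩ := hA
  choose L hL using hg
  have hex := fun j => flat_decomp (hL j) hε hε1
  choose F hF hF0 using hex
  refine ⟨fun j => closure (F (Nat.unpair j).1 (Nat.unpair j).2), fun j => ⟨isClosed_closure, flatPiece_closure (hF _ _)⟩, ?_⟩
  refine measure_mono_null ?_ (measure_union_null h0 (measure_iUnion_null hF0))
  rintro x ⟨hx, hx2⟩
  by_cases h : x ∈ ⋃ j, range (g j)
  · right
    obtain ⟨j, hj⟩ := mem_iUnion.1 h
    refine mem_iUnion.2 ⟨j, hj, fun h3 => hx2 ?_⟩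
    obtain ⟨k, hk⟩ := mem_iUnion.1 h3
    refine mem_iUnion.2 ⟨Nat.pair j k, subset_closure ?_⟩
    simpa using hk
  · exact Or.inl ⟨hx, h⟩

end

/-! ### Cylinders and shells -/

section

variable {n d : ℕ}

/-- The last `d` coordinates of a point of `ℝ^{d+1}`. -/
def tl (z : Euc (d+1)) : Euc d := WithLp.toLp 2 (fun i => z i.succ)

/-- The point `(ρ, y)` of `ℝ^{d+1} = ℝ × ℝ^d`. -/
def cn (ρ : ℝ) (y : Euc d) : Euc (d+1) := WithLp.toLp 2 (Fin.cons ρ y)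

@[simp] lemma cn_zero (ρ : ℝ) (y : Euc d) : cn ρ y 0 = ρ := rfl
@[simp] lemma tl_cn (ρ : ℝ) (y : Euc d) : tl (cn ρ y) = y := rfl
@[simp] lemma tl_add (z w : Euc (d+1)) : tl (z + w) = tl z + tl w := rfl

lemma dist_sq_succ (z w : Euc (d+1)) : dist z w ^ 2 = (z 0 - w 0) ^ 2 + dist (tl z) (tl w) ^ 2 := by
  rw [EuclideanSpace.dist_eq, EuclideanSpace.dist_eq, Real.sq_sqrt (by positivity), Real.sq_sqrt (by positivity),
    Fin.sum_univ_succ, Real.dist_eq, sq_abs]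
  rfl

lemma tl_cont : Continuous (tl (d := d)) := by
  refine (LipschitzWith.of_dist_le_mul (K := 1) fun z w => ?_).continuous
  rw [NNReal.coe_one, one_mul]
  refine le_of_sq_le_sq ?_ dist_nonneg
  rw [dist_sq_succ z w]; nlinarith [sq_nonneg (z 0 - w 0)]

/-- The cylinder `(q,1] × P`. -/
def cyl (q : ℝ) (P : Set (Euc d)) : Set (Euc (d+1)) := {z | z 0 ∈ Ioc q 1} ∩ tl ⁻¹' P

/-- The `H^{d+1}` measure of a cylinder over `P` is a constant multiple of `H^d(P)`, by uniqueness of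
Haar measure. The constant is left implicit, since Mathlib's Hausdorff measures are not
normalised to agree with Lebesgue measure on Euclidean spaces. -/
lemma cyl_measure (d : ℕ) {q : ℝ} : ∃ c : ℝ≥0, ∀ P : Set (Euc d), MeasurableSet P →
    μH[((d+1:ℕ):ℝ)] (cyl q P) = c * μH[(d:ℝ)] P := by
  have h1 := haar_hm d
  have h2 := haar_hm (d+1)
  have hSm : MeasurableSet {z : Euc (d+1) | z 0 ∈ Ioc q 1} :=
    measurableSet_Ioc.preimage (by fun_prop : Continuous fun z : Euc (d+1) => z 0).measurable
  obtain ⟨ν, hν⟩ : ∃ ν : Measure (Euc d), ν = ((μH[((d+1:ℕ):ℝ)] : Measure (Euc (d+1))).restrict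
      {z | z 0 ∈ Ioc q 1}).map tl := ⟨_, rfl⟩
  have hνa : ∀ P, MeasurableSet P → ν P = μH[((d+1:ℕ):ℝ)] (cyl q P) := by
    intro P hP
    rw [hν, Measure.map_apply tl_cont.measurable hP, Measure.restrict_apply (tl_cont.measurable hP), inter_comm]
    rfl
  have hfc : IsFiniteMeasureOnCompacts ν := by
    refine ⟨fun K hK => ?_⟩
    rw [hνa K hK.measurableSet]
    refine IsBounded.measure_lt_top ?_
    obtain ⟨C, hC⟩ := (Metric.isBounded_iff.1 hK.isBounded)
    refine Metric.isBounded_iff.2 ⟨|1 - q| + |C|, fun z hz w hw => ?_⟩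
    have h3 := hC hz.2 hw.2
    have h4 : |z 0 - w 0| ≤ |1 - q| := by
      have := hz.1; have := hw.1
      rw [abs_le, abs_of_nonneg (by linarith [hz.1.1, hz.1.2])]
      constructor <;> linarith [hz.1.1, hz.1.2, hw.1.1, hw.1.2]
    refine le_of_sq_le_sq ?_ (by positivity)
    rw [dist_sq_succ, ← sq_abs (z 0 - w 0)]
    have h5 := le_abs_self C
    have h6 : dist (tl z) (tl w) ^ 2 ≤ |C| ^ 2 := by gcongr; linarith
    have h7 : |z 0 - w 0| ^ 2 ≤ |1 - q| ^ 2 := by gcongr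
    nlinarith [abs_nonneg (1-q), abs_nonneg C, mul_nonneg (abs_nonneg (1-q)) (abs_nonneg C)]
  have hinv : ν.IsAddLeftInvariant := by
    refine ⟨fun y => Measure.ext fun P hP => ?_⟩
    have hm : Measurable fun x : Euc d => y + x := by fun_prop
    rw [Measure.map_apply hm hP, hνa _ (hm hP), hνa _ hP, ← measure_preimage_add _ (cn 0 y) (cyl q P)]
    congr 1
    ext z
    simp [cyl]
  refine ⟨ν.addHaarScalarFactor μH[(d:ℝ)], fun P hP => ?_⟩
  rw [← hνa P hP]
  conv_lhs => rw [Measure.isAddLeftInvariant_eq_smul ν μH[(d:ℝ)]]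
  rfl

/-- The part of the cone over `A` in the shell `q < |z| ≤ 1`. -/
def shell (q : ℝ) (A : Set (Euc n)) : Set (Euc n) := image2 (fun (ρ : ℝ) y => ρ • y) (Ioc q 1) A

lemma dist_sq_polar {u u' : Euc n} (hu : ‖u‖ = 1) (hu' : ‖u'‖ = 1) (ρ ρ' : ℝ) :
    dist (ρ • u) (ρ' • u') ^ 2 = (ρ - ρ') ^ 2 + ρ * ρ' * dist u u' ^ 2 := by
  rw [dist_eq_norm, dist_eq_norm, norm_sub_sq_real, norm_sub_sq_real, norm_smul, norm_smul, hu, hu',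
    inner_smul_left, inner_smul_right, mul_one, mul_one, Real.norm_eq_abs, Real.norm_eq_abs, sq_abs, sq_abs]
  simp only [conj_trivial]
  ring

open scoped Pointwise in
/-- Scaling: the truncated cone is the disjoint union of a shell and of its own dilate by `q`. -/
lemma kap_shell {A : Set (Euc n)} (hA : A ⊆ sphere 0 1) {q : ℝ} (hq : 0 < q) (hq1 : q < 1) :
    kap d A = μH[((d+1:ℕ):ℝ)] (shell q A) + ENNReal.ofReal (q ^ (d+1)) * kap d A := by
  have hnorm : ∀ u ∈ A, ‖u‖ = 1 := fun u hu => by simpa using hA hu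
  have h1 := measure_inter_add_sdiff (μ := μH[((d+1:ℕ):ℝ)]) (tcone A) (measurableSet_closedBall (x := (0:Euc n)) (ε := q))
  have h2 : tcone A \ closedBall 0 q = shell q A := by
    ext v
    constructor
    · rintro ⟨⟨ρ, hρ, u, hu, rfl⟩, hv⟩
      refine ⟨ρ, ⟨?_, hρ.2⟩, u, hu, rfl⟩
      simpa [norm_smul, hnorm u hu, abs_of_pos hρ.1] using hv
    · rintro ⟨ρ, hρ, u, hu, rfl⟩
      refine ⟨⟨ρ, ⟨hq.trans hρ.1, hρ.2⟩, u, hu, rfl⟩, ?_⟩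
      simpa [norm_smul, hnorm u hu, abs_of_pos (hq.trans hρ.1)] using hρ.1
  have h3 : tcone A ∩ closedBall 0 q = q • tcone A := by
    ext v
    constructor
    · rintro ⟨⟨ρ, hρ, u, hu, rfl⟩, hv⟩
      refine ⟨(ρ/q) • u, ⟨ρ/q, ⟨div_pos hρ.1 hq, ?_⟩, u, hu, rfl⟩, ?_⟩
      · rw [div_le_one hq]
        simpa [norm_smul, hnorm u hu, abs_of_pos hρ.1] using hv
      · simp only [smul_smul]; rw [mul_div_cancel₀ _ hq.ne']
    · rintro ⟨_, ⟨ρ, hρ, u, hu, rfl⟩, rfl⟩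
      refine ⟨⟨q * ρ, ⟨mul_pos hq hρ.1, by nlinarith [hρ.2, hρ.1]⟩, u, hu, by simp [smul_smul]⟩, ?_⟩
      simp only [mem_closedBall, dist_zero_right, norm_smul, hnorm u hu, mul_one, Real.norm_eq_abs,
        abs_of_pos hρ.1, abs_of_pos hq]
      nlinarith [hρ.2]
  rw [h2, h3, Measure.hausdorffMeasure_smul₀ (by positivity) hq.ne'] at h1
  have h4 : ‖q‖₊ ^ (((d+1:ℕ):ℝ)) • μH[((d+1:ℕ):ℝ)] (tcone A) = ENNReal.ofReal (q ^ (d+1)) * kap d A := by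
    rw [NNReal.rpow_natCast, ENNReal.smul_def, smul_eq_mul, ENNReal.coe_pow, ENNReal.ofReal_pow hq.le]
    congr 2
    rw [ENNReal.ofReal]; congr 1; ext; simp [hq.le]
  rw [h4] at h1
  rw [add_comm, h1]
  rfl

end

/-! ### The measure of a cone over a rectifiable set -/

section

variable {n d : ℕ}

lemma hm_image_le_of_dist {X Y : Type*} [MetricSpace X] [MeasurableSpace X] [BorelSpace X]
    [MetricSpace Y] [MeasurableSpace Y] [BorelSpace Y] (m : ℕ) {Q : ℝ} (hQ : 0 ≤ Q) {f : X → Y} {s : Set X}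
    (h : ∀ x ∈ s, ∀ y ∈ s, dist (f x) (f y) ≤ Q * dist x y) :
    μH[(m:ℝ)] (f '' s) ≤ ENNReal.ofReal (Q ^ m) * μH[(m:ℝ)] s := by
  have hL : LipschitzOnWith Q.toNNReal f s := LipschitzOnWith.of_dist_le_mul fun x hx y hy => by
    rw [Real.coe_toNNReal _ hQ]; exact h x hx y hy
  refine (hL.hausdorffMeasure_image_le (Nat.cast_nonneg m)).trans (le_of_eq ?_)
  rw [ENNReal.rpow_natCast, ENNReal.ofReal_pow hQ]; rfl

/-- A thin shell over a flat piece is nearly isometric to a cylinder, so that its measure is nearly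
`c` times that of the piece. -/
lemma flat_shell {A : Set (Euc n)} (hA : A ⊆ sphere 0 1) (hAm : MeasurableSet A) {ε : ℝ} (hε : 0 < ε)
    (hf : FlatPiece d ε A) {c : ℝ≥0} (hc : ∀ P : Set (Euc d), MeasurableSet P →
      μH[((d+1:ℕ):ℝ)] (cyl (1 / (1 + ε)) P) = c * μH[(d:ℝ)] P) :
    μH[((d+1:ℕ):ℝ)] (shell (1 / (1 + ε)) A) ≤ ENNReal.ofReal ((1 + ε) ^ (3 * d + 2)) * (c * μH[(d:ℝ)] A) ∧
    c * μH[(d:ℝ)] A ≤ ENNReal.ofReal ((1 + ε) ^ (3 * d + 2)) * μH[((d+1:ℕ):ℝ)] (shell (1 / (1 + ε)) A) := by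
  obtain ⟨ψ, hψ, hfl⟩ := hf
  have hnorm : ∀ u ∈ A, ‖u‖ = 1 := fun u hu => by simpa using hA hu
  obtain ⟨Q, hQd⟩ : ∃ Q, Q = 1 + ε := ⟨_, rfl⟩
  simp only [← hQd] at hfl hc ⊢
  have hQ1 : 1 < Q := by linarith
  have hQ0 : 0 < Q := by linarith
  obtain ⟨q, hqd⟩ : ∃ q, q = 1 / Q := ⟨_, rfl⟩
  simp only [← hqd] at hc ⊢
  have hq0 : 0 < q := by rw [hqd]; positivity
  have hqQ : q * Q = 1 := by rw [hqd]; field_simp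
  have hinj : InjOn ψ A := by
    intro x hx y hy hxy
    have := (hfl x hx y hy).2
    rw [hxy, dist_self, mul_zero] at this
    exact dist_le_zero.1 this
  have hPm : MeasurableSet (ψ '' A) := hAm.image_of_continuousOn_injOn hψ.continuousOn hinj
  have hP1 : μH[(d:ℝ)] (ψ '' A) ≤ ENNReal.ofReal (Q ^ d) * μH[(d:ℝ)] A :=
    hm_image_le_of_dist d hQ0.le fun x hx y hy => (hfl x hx y hy).1
  have hP2 : μH[(d:ℝ)] A ≤ ENNReal.ofReal (Q ^ d) * μH[(d:ℝ)] (ψ '' A) := by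
    have := hm_image_le_of_dist (f := Function.invFunOn ψ A) (s := ψ '' A) d hQ0.le (by
      rintro _ ⟨x, hx, rfl⟩ _ ⟨y, hy, rfl⟩
      rw [hinj.leftInvOn_invFunOn hx, hinj.leftInvOn_invFunOn hy]
      exact (hfl x hx y hy).2)
    rwa [hinj.leftInvOn_invFunOn.image_image] at this
  have hS1 : μH[((d+1:ℕ):ℝ)] (shell q A) ≤ ENNReal.ofReal (Q ^ (d+1)) * μH[((d+1:ℕ):ℝ)] (cyl q (ψ '' A)) := by
    have hsub : shell q A ⊆ (fun z : Euc (d+1) => z 0 • Function.invFunOn ψ A (tl z)) '' (cyl q (ψ '' A)) := by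
      rintro _ ⟨ρ, hρ, u, hu, rfl⟩
      refine ⟨cn ρ (ψ u), ⟨hρ, u, hu, rfl⟩, ?_⟩
      simp only [cn_zero, tl_cn]
      rw [hinj.leftInvOn_invFunOn hu]
    refine (measure_mono hsub).trans (hm_image_le_of_dist (d+1) hQ0.le ?_)
    rintro z ⟨hz, u, hu, hzu⟩ w ⟨hw, v, hv, hwv⟩
    simp only
    rw [← hzu, ← hwv, hinj.leftInvOn_invFunOn hu, hinj.leftInvOn_invFunOn hv]
    refine le_of_sq_le_sq ?_ (by positivity)
    rw [dist_sq_polar (hnorm u hu) (hnorm v hv), mul_pow, dist_sq_succ, ← hzu, ← hwv]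
    have h1 := (hfl u hu v hv).2
    have h2 : dist u v ^ 2 ≤ Q ^ 2 * dist (ψ u) (ψ v) ^ 2 := by rw [← mul_pow]; gcongr
    have h3 : z 0 * w 0 ≤ 1 := mul_le_one₀ hz.2 (hq0.trans hw.1).le hw.2
    have h4 : z 0 * w 0 * dist u v ^ 2 ≤ dist u v ^ 2 := mul_le_of_le_one_left (by positivity) h3
    have h5 : (z 0 - w 0) ^ 2 ≤ Q ^ 2 * (z 0 - w 0) ^ 2 := le_mul_of_one_le_left (by positivity) (by nlinarith)
    nlinarith
  have hS2 : μH[((d+1:ℕ):ℝ)] (cyl q (ψ '' A)) ≤ ENNReal.ofReal ((Q ^ 2) ^ (d+1)) * μH[((d+1:ℕ):ℝ)] (shell q A) := by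
    have hsub : cyl q (ψ '' A) ⊆ (fun v : Euc n => cn ‖v‖ (ψ (‖v‖⁻¹ • v))) '' (shell q A) := by
      rintro z ⟨hz, u, hu, hzu⟩
      refine ⟨z 0 • u, ⟨z 0, hz, u, hu, rfl⟩, ?_⟩
      have h0 : 0 < z 0 := hq0.trans hz.1
      have hn : ‖z 0 • u‖ = z 0 := by rw [norm_smul, hnorm u hu, mul_one, Real.norm_of_nonneg h0.le]
      simp only
      rw [hn, smul_smul, inv_mul_cancel₀ h0.ne', one_smul, hzu]
      refine dist_eq_zero.1 (pow_eq_zero_iff two_ne_zero |>.1 ?_)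
      rw [dist_sq_succ]; simp
    refine (measure_mono hsub).trans (hm_image_le_of_dist (d+1) (by positivity) ?_)
    rintro _ ⟨ρ, hρ, u, hu, rfl⟩ _ ⟨σ, hσ, v, hv, rfl⟩
    have hρ0 := hq0.trans hρ.1
    have hσ0 := hq0.trans hσ.1
    simp only
    have hn1 : ‖ρ • u‖ = ρ := by rw [norm_smul, hnorm u hu, mul_one, Real.norm_of_nonneg hρ0.le]
    have hn2 : ‖σ • v‖ = σ := by rw [norm_smul, hnorm v hv, mul_one, Real.norm_of_nonneg hσ0.le]
    rw [hn1, hn2, smul_smul, smul_smul, inv_mul_cancel₀ hρ0.ne', inv_mul_cancel₀ hσ0.ne', one_smul, one_smul]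
    refine le_of_sq_le_sq ?_ (by positivity)
    rw [mul_pow, dist_sq_polar (hnorm u hu) (hnorm v hv), dist_sq_succ]
    simp only [cn_zero, tl_cn]
    have h1 := (hfl u hu v hv).1
    have h2 : dist (ψ u) (ψ v) ^ 2 ≤ Q ^ 2 * dist u v ^ 2 := by rw [← mul_pow]; gcongr
    have h3 : 1 ≤ Q ^ 2 * (ρ * σ) := by
      have : q * q ≤ ρ * σ := mul_le_mul hρ.1.le hσ.1.le hq0.le hρ0.le
      calc 1 = Q ^ 2 * (q * q) := by rw [← sq, ← mul_pow, mul_comm Q, hqQ, one_pow]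
        _ ≤ _ := by gcongr
    have h4 : dist u v ^ 2 ≤ Q ^ 2 * (ρ * σ) * dist u v ^ 2 := le_mul_of_one_le_left (by positivity) h3
    have h5 : (ρ - σ) ^ 2 ≤ (Q ^ 2) ^ 2 * (ρ - σ) ^ 2 :=
      le_mul_of_one_le_left (by positivity) (one_le_pow₀ (one_le_pow₀ hQ1.le))
    calc (ρ - σ) ^ 2 + dist (ψ u) (ψ v) ^ 2 ≤ (Q ^ 2) ^ 2 * (ρ - σ) ^ 2 + Q ^ 2 * (Q ^ 2 * (ρ * σ) * dist u v ^ 2) := by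
          gcongr
          exact h2.trans (by gcongr)
      _ = _ := by ring
  rw [hc _ hPm] at hS1 hS2
  constructor
  · calc _ ≤ _ := hS1
      _ ≤ ENNReal.ofReal (Q ^ (d+1)) * (c * (ENNReal.ofReal (Q ^ d) * μH[(d:ℝ)] A)) := by gcongr
      _ = ENNReal.ofReal (Q ^ (d+1)) * ENNReal.ofReal (Q ^ d) * (c * μH[(d:ℝ)] A) := by ring
      _ ≤ _ := by
        rw [← ENNReal.ofReal_mul (by positivity), ← pow_add]
        gcongr ENNReal.ofReal ?_ * _
        exact pow_le_pow_right₀ hQ1.le (by omega)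
  · calc _ ≤ c * (ENNReal.ofReal (Q ^ d) * μH[(d:ℝ)] (ψ '' A)) := by gcongr
      _ = ENNReal.ofReal (Q ^ d) * (c * μH[(d:ℝ)] (ψ '' A)) := by ring
      _ ≤ ENNReal.ofReal (Q ^ d) * (ENNReal.ofReal ((Q ^ 2) ^ (d+1)) * μH[((d+1:ℕ):ℝ)] (shell q A)) := by gcongr
      _ = _ := by
        rw [← mul_assoc, ← ENNReal.ofReal_mul (by positivity)]
        congr 2
        ring

lemma kap_null {A : Set (Euc n)} (hA : A ⊆ sphere 0 1) (h0 : μH[(d:ℝ)] A = 0) : kap d A = 0 := by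
  have := kap_le (d := d) one_pos (hA.trans sphere_subset_closedBall)
  rw [h0, mul_zero] at this
  exact le_antisymm this zero_le

lemma measurableSet_tcone {A : Set (Euc n)} (hA : A ⊆ sphere 0 1) (hAm : MeasurableSet A) :
    MeasurableSet (tcone A) := by
  have h1 : tcone A = ({v | ‖v‖ ≠ 0} ∩ {v | ‖v‖ ≤ 1}) ∩ (fun v : Euc n => ‖v‖⁻¹ • v) ⁻¹' A := by
    ext v
    constructor
    · rintro ⟨ρ, hρ, u, hu, rfl⟩
      have hu1 : ‖u‖ = 1 := by simpa using hA hu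
      have hn : ‖ρ • u‖ = ρ := by rw [norm_smul, hu1, mul_one, Real.norm_of_nonneg hρ.1.le]
      simp only [mem_inter_iff, mem_ofPred_eq, mem_preimage]
      rw [hn, smul_smul, inv_mul_cancel₀ hρ.1.ne', one_smul]
      exact ⟨⟨hρ.1.ne', hρ.2⟩, hu⟩
    · rintro ⟨⟨h0, h1⟩, h2⟩
      refine ⟨‖v‖, ⟨lt_of_le_of_ne (norm_nonneg _) (Ne.symm h0), h1⟩, _, h2, ?_⟩
      simp only [smul_smul]
      rw [mul_inv_cancel₀ h0, one_smul]
  rw [h1]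
  refine MeasurableSet.inter (MeasurableSet.inter ?_ ?_) ?_
  · exact (measurableSet_eq_fun measurable_norm measurable_const).compl
  · exact measurableSet_le measurable_norm measurable_const
  · exact (measurable_norm.inv.smul measurable_id) hAm

/-- For a rectifiable subset of the sphere, the cone measure is a constant multiple of `H^d`, up to the
factor `(1+ε)^{3d+2}`. The constant depends only on `d` and `ε`. -/
lemma cone_formula (d : ℕ) {ε : ℝ} (hε : 0 < ε) (hε1 : ε ≤ 1) : ∃ c : ℝ≥0∞, c ≠ ⊤ ∧ ∀ {n : ℕ} (A : Set (Euc n)),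
    A ⊆ sphere 0 1 → MeasurableSet A → Rectif d A → μH[(d:ℝ)] A ≠ ⊤ →
    kap d A ≤ ENNReal.ofReal ((1 + ε) ^ (3 * d + 2)) * (c * μH[(d:ℝ)] A) ∧
    c * μH[(d:ℝ)] A ≤ ENNReal.ofReal ((1 + ε) ^ (3 * d + 2)) * kap d A := by
  obtain ⟨c, hc⟩ := cyl_measure d (q := 1 / (1 + ε))
  obtain ⟨q, hq⟩ : ∃ q, q = 1 / (1 + ε) := ⟨_, rfl⟩
  have hq0 : 0 < q := by rw [hq]; positivity
  have hq1 : q < 1 := by rw [hq, div_lt_one (by positivity)]; linarith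
  obtain ⟨e, he⟩ : ∃ e : ℝ, e = 1 - q ^ (d+1) := ⟨_, rfl⟩
  have he0 : 0 < e := by
    rw [he]
    have : q ^ (d+1) < 1 := pow_lt_one₀ hq0.le hq1 (by omega)
    linarith
  obtain ⟨Q, hQ⟩ : ∃ Q : ℝ≥0∞, Q = ENNReal.ofReal ((1 + ε) ^ (3 * d + 2)) := ⟨_, rfl⟩
  have heE : ENNReal.ofReal e ≠ 0 := by simpa using he0
  have heT : ENNReal.ofReal e ≠ ⊤ := ENNReal.ofReal_ne_top
  refine ⟨(ENNReal.ofReal e)⁻¹ * c, ENNReal.mul_ne_top (by simpa using he0) ENNReal.coe_ne_top, ?_⟩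
  intro n A hA hAm hR hfin
  rw [← hQ]
  obtain ⟨F, hF, hF0⟩ := hR.flat hε hε1
  -- disjoint measurable flat pieces
  obtain ⟨P, hP⟩ : ∃ P : ℕ → Set (Euc n), P = fun j => A ∩ disjointed F j := ⟨_, rfl⟩
  have hPm : ∀ j, MeasurableSet (P j) := fun j => by
    rw [hP]; exact hAm.inter (MeasurableSet.disjointed (fun i => (hF i).1.measurableSet) j)
  have hPA : ∀ j, P j ⊆ A := fun j => by rw [hP]; exact inter_subset_left
  have hPd : Pairwise (Function.onFun Disjoint P) := by
    intro i j hij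
    rw [hP]
    exact (disjoint_disjointed F hij).mono inter_subset_right inter_subset_right
  have hPf : ∀ j, FlatPiece d ε (P j) := fun j => (hF j).2.mono (by
    rw [hP]; exact inter_subset_right.trans (disjointed_subset F j))
  have hcov : A ⊆ (⋃ j, P j) ∪ (A \ ⋃ j, F j) := by
    intro x hx
    by_cases h : x ∈ ⋃ j, F j
    · left
      rw [← iUnion_disjointed] at h
      obtain ⟨j, hj⟩ := mem_iUnion.1 h
      refine mem_iUnion.2 ⟨j, ?_⟩
      rw [hP]; exact ⟨hx, hj⟩
    · exact Or.inr ⟨hx, h⟩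
  have hpiece : ∀ j, kap d (P j) ≤ Q * ((ENNReal.ofReal e)⁻¹ * c * μH[(d:ℝ)] (P j)) ∧
      (ENNReal.ofReal e)⁻¹ * c * μH[(d:ℝ)] (P j) ≤ Q * kap d (P j) := by
    intro j
    have hPs := (hPA j).trans hA
    have hk := kap_shell (d := d) hPs hq0 hq1
    have hPfin : μH[(d:ℝ)] (P j) ≠ ⊤ := ((measure_mono (hPA j)).trans_lt hfin.lt_top).ne
    have hkfin : kap d (P j) ≠ ⊤ := ((kap_le (d := d) one_pos (hPs.trans sphere_subset_closedBall)).trans_lt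
      (ENNReal.mul_lt_top ENNReal.ofReal_lt_top hPfin.lt_top)).ne
    have hs : ENNReal.ofReal e * kap d (P j) = μH[((d+1:ℕ):ℝ)] (shell q (P j)) := by
      have h1 : ENNReal.ofReal e * kap d (P j) + ENNReal.ofReal (q ^ (d+1)) * kap d (P j) = kap d (P j) := by
        rw [← add_mul, ← ENNReal.ofReal_add he0.le (by positivity), he]; simp
      have h2 := h1.trans hk
      exact (ENNReal.add_left_inj (ENNReal.mul_ne_top ENNReal.ofReal_ne_top hkfin)).1 h2
    have hk2 : kap d (P j) = (ENNReal.ofReal e)⁻¹ * μH[((d+1:ℕ):ℝ)] (shell q (P j)) := by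
      rw [← hs, ← mul_assoc, ENNReal.inv_mul_cancel heE heT, one_mul]
    obtain ⟨hf1, hf2⟩ := flat_shell hPs (hPm j) hε (hPf j) hc
    rw [← hq, ← hQ] at hf1 hf2
    rw [hk2]
    constructor
    · calc _ ≤ (ENNReal.ofReal e)⁻¹ * (Q * (c * μH[(d:ℝ)] (P j))) := by gcongr
        _ = _ := by ring
    · calc _ = (ENNReal.ofReal e)⁻¹ * (c * μH[(d:ℝ)] (P j)) := by ring
        _ ≤ (ENNReal.ofReal e)⁻¹ * (Q * μH[((d+1:ℕ):ℝ)] (shell q (P j))) := by gcongr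
        _ = _ := by ring
  have hHsum : ∑' j, μH[(d:ℝ)] (P j) = μH[(d:ℝ)] A := by
    rw [← measure_iUnion hPd hPm]
    refine le_antisymm (measure_mono (iUnion_subset hPA)) ?_
    refine (measure_mono hcov).trans ((measure_union_le _ _).trans ?_)
    rw [hF0, add_zero]
  have hksum : ∑' j, kap d (P j) = kap d A := by
    refine le_antisymm ?_ ?_
    · unfold kap
      rw [← measure_iUnion ?_ (fun j => measurableSet_tcone ((hPA j).trans hA) (hPm j))]
      · exact measure_mono (iUnion_subset fun j => tcone_mono (hPA j))
      · intro i j hij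
        rw [Function.onFun, Set.disjoint_left]
        rintro _ ⟨ρ, hρ, u, hu, rfl⟩ ⟨σ, hσ, v, hv, hvu⟩
        have hu1 : ‖u‖ = 1 := by simpa using hA (hPA _ hu)
        have hv1 : ‖v‖ = 1 := by simpa using hA (hPA _ hv)
        simp only at hvu
        have hn := congrArg norm hvu
        rw [norm_smul, norm_smul, hu1, hv1, mul_one, mul_one, Real.norm_of_nonneg hρ.1.le,
          Real.norm_of_nonneg hσ.1.le] at hn
        rw [hn] at hvu
        have := smul_right_injective _ hρ.1.ne' hvu
        rw [this] at hv
        exact Set.disjoint_left.1 (hPd hij) hu hv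
    · refine (kap_mono hcov).trans ((kap_union_le _ _).trans ?_)
      rw [kap_null (sdiff_subset.trans hA) hF0, add_zero]
      exact kap_iUnion_le _
  rw [← hHsum, ← hksum, ← ENNReal.tsum_mul_left, ← ENNReal.tsum_mul_left, ← ENNReal.tsum_mul_left]
  exact ⟨ENNReal.tsum_le_tsum fun j => (hpiece j).1, ENNReal.tsum_le_tsum fun j => (hpiece j).2⟩

end

/-! ### Almost minimality -/

section

variable {n d : ℕ}

/-- A reduced set of dimension `d+1 > n` is empty, as `H^{d+1}` vanishes on `ℝⁿ`. -/
lemma empty_of_lt {E : Set (Euc n)} (h : ¬ d + 1 ≤ n) (hr : IsReducedSet n (d+1) E) : E = ∅ := by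
  by_contra hne
  obtain ⟨x, hx⟩ := nonempty_iff_ne_empty.2 hne
  have h1 := hr x hx 1 one_pos
  have h2 : dimH (E ∩ ball x 1) < ((d+1:ℕ) : ℝ≥0) := by
    refine (dimH_mono (subset_univ _)).trans_lt ?_
    rw [Real.dimH_univ_eq_finrank]
    simp only [finrank_euclideanSpace, Fintype.card_fin]
    have : n < d + 1 := by omega
    exact_mod_cast this
  have h3 := hausdorffMeasure_of_dimH_lt h2
  simp only [NNReal.coe_natCast] at h3
  exact h1.ne' h3

open scoped Pointwise in
/-- If a small ball of the slice were null, so would be the cone over it, which contains a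
neighbourhood of the centre in `E`. -/
lemma slice_reduced {E : Set (Euc n)} (hr : IsReducedSet n (d+1) E) (hc : IsConeAt0 E)
    {x : Euc n} (hx : x ∈ E ∩ sphere 0 1) {r : ℝ} (hr0 : 0 < r) (hr1 : r < 1) :
    0 < μH[(d:ℝ)] ((E ∩ sphere 0 1) ∩ ball x r) := by
  by_contra h0
  have h0 : μH[(d:ℝ)] ((E ∩ sphere 0 1) ∩ ball x r) = 0 := by simpa using h0
  have hk := kap_null (inter_subset_left.trans inter_subset_right) h0
  have hx1 : ‖x‖ = 1 := by simpa using hx.2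
  have hsub : E ∩ ball x (r/4) ⊆ (2:ℝ) • tcone ((E ∩ sphere 0 1) ∩ ball x r) := by
    rintro v ⟨hv, hvx⟩
    rw [mem_ball, dist_eq_norm] at hvx
    have hn : |‖v‖ - 1| < r / 4 := by
      rw [← hx1]; exact (abs_norm_sub_norm_le v x).trans_lt hvx
    rw [abs_lt] at hn
    have hv0 : 0 < ‖v‖ := by linarith
    have hmem := (cone_mem_iff hc (norm_pos_iff.1 hv0)).2 hv
    refine ⟨(1/2:ℝ) • v, ⟨‖v‖ / 2, ⟨by positivity, by linarith⟩, ‖v‖⁻¹ • v, ⟨hmem, ?_⟩, ?_⟩, ?_⟩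
    · rw [mem_ball]
      have h1 : dist (‖v‖⁻¹ • v) v ≤ r / 4 := by
        have : ‖v‖⁻¹ • v - v = (‖v‖⁻¹ - 1) • v := by rw [sub_smul, one_smul]
        rw [dist_eq_norm, this, norm_smul, Real.norm_eq_abs, ← abs_norm v, ← abs_mul, abs_norm, sub_mul,
          inv_mul_cancel₀ hv0.ne', one_mul, abs_le]
        constructor <;> linarith
      have h2 : dist v x < r / 4 := by rw [dist_eq_norm]; exact hvx
      linarith [dist_triangle (‖v‖⁻¹ • v) v x]
    · simp only [smul_smul]
      congr 1
      field_simp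
    · simp only [smul_smul]; norm_num
  have h1 := hr x hx.1 (r/4) (by positivity)
  refine h1.ne' (measure_mono_null hsub ?_)
  rw [Measure.hausdorffMeasure_smul₀ (by positivity) two_ne_zero]
  rw [show μH[((d+1:ℕ):ℝ)] (tcone ((E ∩ sphere 0 1) ∩ ball x r)) = 0 from hk, smul_zero]

/-- A finite family of pieces of `K ∩ B(x,r)` on which `f` is `M`-Lipschitz can be replaced by a
countable family covering `K ∩ B̄(x,r)`, with constant `max M 1` and without overlap in measure: the
closures of the pieces are made disjoint, and on the bounding sphere `f` is the identity. -/
lemma exists_pieces {K : Set (Euc n)} (hK : IsCompact K) (hKs : K ⊆ sphere 0 1) {x : Euc n} {r : ℝ}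
    {f : Euc n → Euc n} (hf : ContinuousOn f (sphere 0 1))
    (hmv : {y ∈ sphere (0 : Euc n) 1 | f y ≠ y} ⊆ ball x r) {M : ℝ≥0} {N : ℕ} {S : Fin N → Set (Euc n)}
    (hS : K ∩ ball x r = ⋃ i, S i) (hL : ∀ i, LipschitzOnWith M f (S i)) :
    ∃ A : ℕ → Set (Euc n), K ∩ closedBall x r ⊆ ⋃ i, A i ∧
      (∀ i, LipschitzOnWith (max M 1) f (A i)) ∧
      ∑' i, μH[(d:ℝ)] (A i) ≤ μH[(d:ℝ)] (K ∩ closedBall x r) := by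
  obtain ⟨F, hF⟩ : ∃ F : ℕ → Set (Euc n), F = fun k => if k = 0 then K ∩ sphere x r else
    if h : k - 1 < N then closure (S ⟨k - 1, h⟩) else ∅ := ⟨_, rfl⟩
  have hSK : ∀ i, S i ⊆ K := fun i => (subset_iUnion S i).trans (hS ▸ inter_subset_left)
  have hFc : ∀ k, IsClosed (F k) := by
    intro k
    rw [hF]; simp only
    split_ifs
    · exact hK.isClosed.inter isClosed_sphere
    · exact isClosed_closure
    · exact isClosed_empty
  have hFL : ∀ k, LipschitzOnWith (max M 1) f (F k) := by
    intro k
    rw [hF]; simp only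
    split_ifs with h1 h2
    · have : LipschitzOnWith 1 f (K ∩ sphere x r) := by
        have hid : ∀ y ∈ K ∩ sphere x r, f y = y := by
          rintro y ⟨hy, hyr⟩
          by_contra hne
          have := hmv ⟨hKs hy, hne⟩
          rw [mem_ball] at this
          rw [mem_sphere] at hyr
          linarith
        refine LipschitzOnWith.of_dist_le_mul fun y hy z hz => ?_
        rw [hid y hy, hid z hz]; simp
      exact this.weaken (le_max_right _ _)
    · have hcl : closure (S ⟨k - 1, h2⟩) ⊆ sphere 0 1 :=
        closure_minimal ((hSK _).trans hKs) isClosed_sphere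
      exact ((hL _).closure (hf.mono hcl)).weaken (le_max_left _ _)
    · exact fun y hy => hy.elim
  refine ⟨fun i => (K ∩ closedBall x r) ∩ disjointed F i, ?_, ?_, ?_⟩
  · rw [← inter_iUnion, iUnion_disjointed]
    refine subset_inter Subset.rfl ?_
    rintro y ⟨hy, hyr⟩
    rw [mem_closedBall] at hyr
    rcases hyr.lt_or_eq with h | h
    · have : y ∈ ⋃ i, S i := hS ▸ ⟨hy, h⟩
      obtain ⟨i, hi⟩ := mem_iUnion.1 this
      refine mem_iUnion.2 ⟨i + 1, ?_⟩
      rw [hF]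
      simp only [Nat.add_eq_zero_iff, one_ne_zero, and_false, if_false, Nat.add_sub_cancel, i.2, dif_pos]
      exact subset_closure hi
    · refine mem_iUnion.2 ⟨0, ?_⟩
      rw [hF]
      simp only [if_true]
      exact ⟨hy, h⟩
  · exact fun i => (hFL i).mono (inter_subset_right.trans (disjointed_subset F i))
  · rw [← measure_iUnion]
    · exact measure_mono (iUnion_subset fun i => inter_subset_left)
    · intro i j hij
      exact (disjoint_disjointed F hij).mono inter_subset_right inter_subset_right
    · exact fun i => (hK.isClosed.inter isClosed_closedBall).measurableSet.inter
        (MeasurableSet.disjointed (fun i => (hFc i).measurableSet) i)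

/-- From an inequality between cone measures with an error to the corresponding inequality for
spherical slices. -/
lemma kap_to_hm {A B : Set (Euc n)} (hA : A ⊆ sphere 0 1) (hB : B ⊆ sphere 0 1) (hAm : MeasurableSet A)
    (hBm : MeasurableSet B) (hAr : Rectif d A) (hBr : Rectif d B) (hAf : μH[(d:ℝ)] A ≠ ⊤)
    (hBf : μH[(d:ℝ)] B ≠ ⊤) {e : ℝ≥0∞} (he : e ≠ ⊤) (h : kap d A ≤ kap d B + e) :
    μH[(d:ℝ)] A ≤ μH[(d:ℝ)] B + 2 ^ (d+2) * e := by
  have key : ∀ ε : ℝ, 0 < ε → ε ≤ 1 → μH[(d:ℝ)] A ≤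
      ENNReal.ofReal (((1 + ε) ^ (3 * d + 2)) ^ 2) * (μH[(d:ℝ)] B + 2 ^ (d+2) * e) := by
    intro ε hε hε1
    obtain ⟨c, hcT, hc⟩ := cone_formula d hε hε1
    obtain ⟨hA1, hA2⟩ := hc A hA hAm hAr hAf
    obtain ⟨hB1, -⟩ := hc B hB hBm hBr hBf
    rw [ENNReal.ofReal_pow (by positivity)]
    generalize ENNReal.ofReal ((1 + ε) ^ (3 * d + 2)) = Q at *
    have hl := le_kap (d := d) hA
    rcases eq_or_ne (μH[(d:ℝ)] A) 0 with ha | ha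
    · rw [ha]; exact zero_le
    have h1 : 1 ≤ 2 ^ (d+2) * Q * c := by
      by_contra hlt
      rw [not_le] at hlt
      have h2 : μH[(d:ℝ)] A ≤ 2 ^ (d+2) * Q * c * μH[(d:ℝ)] A := by
        refine hl.trans ?_
        calc 2 ^ (d+2) * kap d A ≤ 2 ^ (d+2) * (Q * (c * μH[(d:ℝ)] A)) := by gcongr
          _ = _ := by ring
      have h3 : 2 ^ (d+2) * Q * c * μH[(d:ℝ)] A < 1 * μH[(d:ℝ)] A :=
        (ENNReal.mul_lt_mul_iff_left ha hAf).2 hlt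
      rw [one_mul] at h3
      exact absurd h2 (not_le.2 h3)
    have hc0 : c ≠ 0 := by
      rintro rfl
      simp at h1
    rw [← ENNReal.mul_le_mul_iff_right hc0 hcT]
    calc c * μH[(d:ℝ)] A ≤ Q * kap d A := hA2
      _ ≤ Q * (Q * (c * μH[(d:ℝ)] B) + 1 * e) := by
        gcongr
        rw [one_mul]
        exact h.trans (by gcongr)
      _ ≤ Q * (Q * (c * μH[(d:ℝ)] B) + (2 ^ (d+2) * Q * c) * e) := by gcongr
      _ = _ := by ring
  have hfin : μH[(d:ℝ)] B + 2 ^ (d+2) * e ≠ ⊤ :=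
    ENNReal.add_ne_top.2 ⟨hBf, ENNReal.mul_ne_top (ENNReal.pow_ne_top (by simp)) he⟩
  have hlim : Tendsto (fun ε : ℝ => ENNReal.ofReal (((1 + ε) ^ (3 * d + 2)) ^ 2) *
      (μH[(d:ℝ)] B + 2 ^ (d+2) * e)) (𝓝[>] 0) (𝓝 (μH[(d:ℝ)] B + 2 ^ (d+2) * e)) := by
    have h1 : Tendsto (fun ε : ℝ => ((1 + ε) ^ (3 * d + 2)) ^ 2) (𝓝[>] 0) (𝓝 1) := by
      have : Tendsto (fun ε : ℝ => ((1 + ε) ^ (3 * d + 2)) ^ 2) (𝓝 0) (𝓝 (((1 + 0) ^ (3 * d + 2)) ^ 2)) :=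
        (by fun_prop : Continuous fun ε : ℝ => ((1 + ε) ^ (3 * d + 2)) ^ 2).tendsto 0
      simp only [add_zero, one_pow] at this
      exact this.mono_left nhdsWithin_le_nhds
    have h2 := ENNReal.Tendsto.mul_const (ENNReal.tendsto_ofReal h1) (Or.inr hfin)
    rwa [ENNReal.ofReal_one, one_mul] at h2
  refine ge_of_tendsto hlim ?_
  filter_upwards [Ioc_mem_nhdsGT (one_pos : (0:ℝ) < 1)] with ε hε
  exact key ε hε.1 hε.2

/-- Almost minimality of the slice, with the constant coming from upper regularity. -/
lemma slice_almost_minimal (h : d + 1 ≤ n) {C₀ : ℝ≥0} {E : Set (Euc n)} (hE : IsMinimalSet n (d+1) E)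
    (hc : IsConeAt0 E) (hC₀ : ∀ x ∈ sphere (0 : Euc n) 1, ∀ r, 0 < r → r ≤ 3 →
      μH[(d:ℝ)] ((E ∩ sphere 0 1) ∩ closedBall x r) ≤ C₀ * ENNReal.ofReal (r ^ d)) :
    IsWeakAlmostMinimal n d (E ∩ sphere 0 1)
      (fun r => ENNReal.ofReal (2 ^ (d+2) * (2 ^ (d+1) * 3 * 4 ^ d) * C₀ * r)) := by
  intro x hx r hr0 hr1 f hfs hfL hmv himg M hpart
  obtain ⟨Lf, hfL⟩ := hfL
  obtain ⟨N, S, hS, -, hSL⟩ := hpart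
  obtain ⟨K, hKd⟩ : ∃ K, K = E ∩ sphere (0 : Euc n) 1 := ⟨_, rfl⟩
  have hKc : IsCompact K := hKd ▸ isCompact_slice hE
  have hKs : K ⊆ sphere 0 1 := hKd ▸ inter_subset_right
  have hKfin : μH[(d:ℝ)] K < ⊤ := hKd ▸ sphere_slice_fin hE hc
  have hKr : Rectif d K := by
    obtain ⟨G, hG, h0⟩ := slice_rectifiable h hE hc
    rw [hKd]; exact rectif_of_good hG h0
  have hCK := hC₀ x hx r hr0 (by linarith)
  rw [← hKd] at hS hCK ⊢
  obtain ⟨A, hAc, hAL, hAsum⟩ := exists_pieces (d := d) hKc hKs hfL.continuousOn hmv hS hSL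
  obtain ⟨W, hWd⟩ : ∃ W, W = K ∩ closedBall x r := ⟨_, rfl⟩
  rw [← hWd] at hAc hAsum hCK ⊢
  have hWK : W ⊆ K := hWd ▸ inter_subset_left
  have hWs := hWK.trans hKs
  have hWc : IsCompact W := hWd ▸ hKc.inter_right isClosed_closedBall
  have hfWs : f '' W ⊆ sphere 0 1 := by
    rintro _ ⟨y, hy, rfl⟩; exact hfs (hWs hy)
  have hfWc : IsCompact (f '' W) := hWc.image_of_continuousOn (hfL.continuousOn.mono hWs)
  have hWfin : μH[(d:ℝ)] W < ⊤ := (measure_mono hWK).trans_lt hKfin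
  have hfWfin : μH[(d:ℝ)] (f '' W) < ⊤ := by
    refine ((hfL.mono hWs).hausdorffMeasure_image_le (Nat.cast_nonneg d)).trans_lt ?_
    rw [ENNReal.rpow_natCast]
    exact ENNReal.mul_lt_top (ENNReal.pow_lt_top (by simp)) hWfin
  have hmoved : ∀ u ∈ sphere (0 : Euc n) 1, dist (f u) u ≤ 2 * r := by
    intro u hu
    by_cases hne : f u = u
    · rw [hne, dist_self]; positivity
    · have h1 : u ∈ ball x r := hmv ⟨hu, hne⟩
      have h2 : f u ∈ closedBall x r := himg ⟨u, ⟨hu, hne⟩, rfl⟩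
      rw [mem_ball] at h1
      rw [mem_closedBall] at h2
      linarith [dist_triangle_right (f u) u x]
  have hfix : ∀ u ∈ (E ∩ sphere 0 1) \ W, f u = u := by
    rintro u ⟨hu, huW⟩
    by_contra hne
    exact huW (hWd ▸ ⟨hKd ▸ hu, ball_subset_closedBall (hmv ⟨hu.2, hne⟩)⟩)
  have hq := quasi_min hE hc (hKd ▸ hWK) hWc.measurableSet hr0 hr1.le hfL hmoved hfix A
    (fun _ => max M 1) hAc hAL
  rw [ENNReal.tsum_mul_left] at hq
  obtain ⟨m, hm⟩ : ∃ m : ℝ, m = ((max M 1 : ℝ≥0) : ℝ) := ⟨_, rfl⟩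
  simp only [← hm] at hq
  have hm1 : 1 ≤ m := by rw [hm]; exact_mod_cast le_max_right M 1
  have hmp : m ^ d ≤ 1 + (M:ℝ) ^ d := by
    rw [hm, NNReal.coe_max, NNReal.coe_one]
    rcases max_cases (M:ℝ) 1 with ⟨h1, -⟩ | ⟨h1, -⟩
    · rw [h1]; linarith
    · rw [h1, one_pow]
      have : 0 ≤ (M:ℝ) ^ d := by positivity
      linarith
  have hme : (3 + m) ^ d ≤ 4 ^ d * (1 + (M:ℝ) ^ d) := by
    calc (3 + m) ^ d ≤ (4 * m) ^ d := by gcongr; linarith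
      _ = 4 ^ d * m ^ d := mul_pow _ _ _
      _ ≤ _ := by gcongr
  have hq2 : kap d W ≤ kap d (f '' W) +
      ENNReal.ofReal (2 ^ (d+1) * 3 * (4 ^ d * (1 + (M:ℝ) ^ d)) * r) * (C₀ * ENNReal.ofReal (r ^ d)) := by
    refine hq.trans (add_le_add_right ?_ _)
    refine mul_le_mul' (ENNReal.ofReal_le_ofReal ?_) (hAsum.trans hCK)
    gcongr
  have hfin := kap_to_hm hWs hfWs hWc.measurableSet hfWc.measurableSet (hKr.mono hWK)
    ((hKr.mono hWK).image hWs hfL) hWfin.ne hfWfin.ne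
    (ENNReal.mul_ne_top ENNReal.ofReal_ne_top (ENNReal.mul_ne_top ENNReal.coe_ne_top ENNReal.ofReal_ne_top)) hq2
  refine hfin.trans (add_le_add (measure_mono ?_) (le_of_eq ?_))
  · rintro _ ⟨y, hy, rfl⟩
    refine ⟨⟨y, hWK hy, rfl⟩, ?_⟩
    by_cases hne : f y = y
    · rw [hne]; rw [hWd] at hy; exact hy.2
    · exact himg ⟨y, ⟨hWs hy, hne⟩, rfl⟩
  · have e1 : (2:ℝ≥0∞) ^ (d+2) = ENNReal.ofReal (2 ^ (d+2)) := by
      rw [ENNReal.ofReal_pow (by norm_num)]; simp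
    have e2 : (C₀ : ℝ≥0∞) = ENNReal.ofReal C₀ := by simp
    have e3 : 1 + (M:ℝ≥0∞) ^ d = ENNReal.ofReal (1 + (M:ℝ) ^ d) := by
      rw [ENNReal.ofReal_add zero_le_one (by positivity), ENNReal.ofReal_one, ENNReal.ofReal_pow (by positivity)]
      simp
    rw [e1, e2, e3, ← ENNReal.ofReal_mul (by positivity), ← ENNReal.ofReal_mul (by positivity),
      ← ENNReal.ofReal_mul (by positivity), ← ENNReal.ofReal_mul (by positivity),
      ← ENNReal.ofReal_mul (by positivity)]
    congr 1
    ring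

end

/-- **Proposition 9.4.** If `E` is a reduced minimal cone of dimension `d+1` in `ℝⁿ`
centered at the origin, then `K = E ∩ ∂B(0,1)` is reduced, and it is a weak
almost-minimal set of dimension `d` with gauge function `h(r) = C r`, where `C ≥ 0`
depends only on `n` and `d`. -/
theorem sphere_slice_weak_almost_minimal (n d : ℕ) :
    ∃ C : ℝ, 0 ≤ C ∧
      ∀ E : Set (Euc n), IsMinimalSet n (d + 1) E → IsReducedSet n (d + 1) E →
        IsConeAt0 E →
        (∀ x ∈ E ∩ sphere (0 : Euc n) 1, ∀ r : ℝ, 0 < r → r < 1 →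
          0 < μH[(d:ℝ)] ((E ∩ sphere (0 : Euc n) 1) ∩ ball x r)) ∧
        IsWeakAlmostMinimal n d (E ∩ sphere (0 : Euc n) 1)
          (fun r => ENNReal.ofReal (C * r)) := by
  by_cases h : d + 1 ≤ n
  · obtain ⟨C₀, hC₀⟩ := upper_reg (d := d) h
    refine ⟨2 ^ (d+2) * (2 ^ (d+1) * 3 * 4 ^ d) * C₀, by positivity, fun E hE hr hc => ⟨?_, ?_⟩⟩
    · exact fun x hx r hr0 hr1 => slice_reduced hr hc hx hr0 hr1
    · exact slice_almost_minimal h hE hc (hC₀ E hE hc)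
  · refine ⟨0, le_rfl, fun E hE hr hc => ?_⟩
    have hE0 := empty_of_lt h hr
    subst hE0
    refine ⟨fun x hx => hx.1.elim, ?_⟩
    intro x _ r _ _ f _ _ _ _ M _
    simp
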